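/- (Corollary 2: ID capacity region of the BC with one-sided feedback and conditionally independent outputs.) If the BC satisfies W(y,z|x) = W_𝒴(y|x)·W_𝒵(z|x) for all (x,y,z), then the ID capacity region 𝒞_{1-fb} of the BC with one-sided feedback from Terminal 𝒴 equals the set of all rate pairs (R_𝒴, R_𝒵) ∈ [0,∞)² for which some PMF P on 𝒳 satisfies R_𝒴 ≤ H(PW_𝒴)·𝟙{max_{P'} I(P', W_𝒴) > 0} and R_𝒵 ≤ I(P, W_𝒵). -/

import Mathlib

open scoped Classical
open Finset

noncomputable section

/-- `P` is a probability mass function on the finite type `X`. -/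
def IsPMF {X : Type*} [Fintype X] (P : X → ℝ) : Prop :=
  (∀ x, 0 ≤ P x) ∧ ∑ x, P x = 1

/-- `W` is a (discrete memoryless) channel from `X` to `Y`. -/
def IsChannel {X Y : Type*} [Fintype Y] (W : X → Y → ℝ) : Prop :=
  (∀ x y, 0 ≤ W x y) ∧ ∀ x, ∑ y, W x y = 1

/-- The `n`-fold memoryless extension `W^n(𝐲|𝐱) = ∏ᵢ W(yᵢ|xᵢ)`. -/
def Wn {X Y : Type*} (W : X → Y → ℝ) (n : ℕ) (x : Fin n → X) (y : Fin n → Y) : ℝ :=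
  ∏ i, W (x i) (y i)

/-- Mutual information `I(P,W)` (natural logarithm), with the convention that
terms with `P x * W x y = 0` contribute `0`. -/
def mutInf {X Y : Type*} [Fintype X] [Fintype Y] (P : X → ℝ) (W : X → Y → ℝ) : ℝ :=
  ∑ x, ∑ y, if P x * W x y = 0 then 0
    else P x * W x y * Real.log (W x y / ∑ x', P x' * W x' y)

/-- The error requirements of an `(n, M, l1, l2)` ID code for the DMC `W`:
maximum probability of missed identification at most `l1`, maximum probability
of wrong identification at most `l2`. -/
def IDCodeErr {X Y M : Type*} [Fintype X] [Fintype Y]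
    (n : ℕ) (W : X → Y → ℝ) (Q : M → (Fin n → X) → ℝ)
    (D : M → Finset (Fin n → Y)) (l1 l2 : ℝ) : Prop :=
  (∀ m, ∑ x, Q m x * ∑ y ∈ (D m)ᶜ, Wn W n x y ≤ l1) ∧
  (∀ m m', m ≠ m' → ∑ x, Q m x * ∑ y ∈ D m', Wn W n x y ≤ l2)

/-- `(n, M, l1, l2)` ID code for the DMC `W`. -/
def IsIDCode {X Y M : Type*} [Fintype X] [Fintype Y]
    (n : ℕ) (W : X → Y → ℝ) (Q : M → (Fin n → X) → ℝ)
    (D : M → Finset (Fin n → Y)) (l1 l2 : ℝ) : Prop :=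
  (∀ m, IsPMF (Q m)) ∧ IDCodeErr n W Q D l1 l2

/-- `W` is a two-receiver broadcast channel from `X` to `Y × Z`. -/
def IsBC {X Y Z : Type*} [Fintype Y] [Fintype Z] (W : X → Y → Z → ℝ) : Prop :=
  (∀ x y z, 0 ≤ W x y z) ∧ ∀ x, ∑ y, ∑ z, W x y z = 1

/-- Marginal channel to terminal `Y`. -/
def margY {X Y Z : Type*} [Fintype Z] (W : X → Y → Z → ℝ) : X → Y → ℝ :=
  fun x y => ∑ z, W x y z

/-- Marginal channel to terminal `Z`. -/
def margZ {X Y Z : Type*} [Fintype Y] (W : X → Y → Z → ℝ) : X → Z → ℝ :=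
  fun x z => ∑ y, W x y z

/-- Entropy `H(p)` of a PMF (natural logarithm), with `0 log 0 = 0`. -/
def entH {Y : Type*} [Fintype Y] (p : Y → ℝ) : ℝ :=
  ∑ y, if p y = 0 then 0 else -(p y * Real.log (p y))

/-- Output distribution `PW` of the channel `W` under input PMF `P`. -/
def outDist {X Y : Type*} [Fintype X] (P : X → ℝ) (W : X → Y → ℝ) : Y → ℝ :=
  fun y => ∑ x, P x * W x y

/-- The joint law on `(𝐱, 𝐲, 𝐳)` induced by a feedback encoder
`Q^{(i)}(x | x^{i-1}, y^{i-1})` and the BC `W`. -/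
def fbLaw {X Y Z : Type*} (n : ℕ) (W : X → Y → Z → ℝ)
    (Q : (i : ℕ) → (Fin i → X) → (Fin i → Y) → X → ℝ)
    (x : Fin n → X) (y : Fin n → Y) (z : Fin n → Z) : ℝ :=
  ∏ i : Fin n,
    (Q i.1 (fun j : Fin i.1 => x ⟨j.1, lt_trans j.isLt i.isLt⟩)
           (fun j : Fin i.1 => y ⟨j.1, lt_trans j.isLt i.isLt⟩) (x i)
      * W (x i) (y i) (z i))

/-- `Q` is a feedback encoder for blocklength `n`: at each time `i < n` and for
all histories, it is a PMF on `X`. -/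
def IsFBEncoder {X Y : Type*} [Fintype X] (n : ℕ)
    (Q : (i : ℕ) → (Fin i → X) → (Fin i → Y) → X → ℝ) : Prop :=
  ∀ i < n, ∀ (xs : Fin i → X) (ys : Fin i → Y), IsPMF (Q i xs ys)

/-- Average-error ID code for the BC with one-sided feedback from Terminal Y. -/
def IsFBIDCode {X Y Z : Type*} [Fintype X] [Fintype Y] [Fintype Z]
    (n kY kZ : ℕ) (W : X → Y → Z → ℝ)
    (Q : Fin kY → Fin kZ → (i : ℕ) → (Fin i → X) → (Fin i → Y) → X → ℝ)
    (DY : Fin kY → Finset (Fin n → Y)) (DZ : Fin kZ → Finset (Fin n → Z))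
    (l1Y l2Y l1Z l2Z : ℝ) : Prop :=
  (∀ my mz, IsFBEncoder n (Q my mz)) ∧
  (∀ my, (kZ : ℝ)⁻¹ * ∑ mz, ∑ x : Fin n → X, ∑ y ∈ (DY my)ᶜ, ∑ z : Fin n → Z,
      fbLaw n W (Q my mz) x y z ≤ l1Y) ∧
  (∀ my my', my ≠ my' → (kZ : ℝ)⁻¹ * ∑ mz, ∑ x : Fin n → X, ∑ y ∈ DY my',
      ∑ z : Fin n → Z, fbLaw n W (Q my mz) x y z ≤ l2Y) ∧
  (∀ mz, (kY : ℝ)⁻¹ * ∑ my, ∑ x : Fin n → X, ∑ y : Fin n → Y, ∑ z ∈ (DZ mz)ᶜ,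
      fbLaw n W (Q my mz) x y z ≤ l1Z) ∧
  (∀ mz mz', mz ≠ mz' → (kY : ℝ)⁻¹ * ∑ my, ∑ x : Fin n → X, ∑ y : Fin n → Y,
      ∑ z ∈ DZ mz', fbLaw n W (Q my mz) x y z ≤ l2Z)

/-- A rate pair is achievable for the BC with one-sided feedback from
Terminal Y under the average-error criterion. -/
def FBAchievable {X Y Z : Type*} [Fintype X] [Fintype Y] [Fintype Z]
    (W : X → Y → Z → ℝ) (Rp : ℝ × ℝ) : Prop :=
  0 ≤ Rp.1 ∧ 0 ≤ Rp.2 ∧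
  ∀ l1Y l2Y l1Z l2Z : ℝ, 0 < l1Y → 0 < l2Y → 0 < l1Z → 0 < l2Z →
    ∃ n₀ : ℕ, ∀ n : ℕ, n₀ ≤ n →
      ∃ (kY kZ : ℕ)
        (Q : Fin kY → Fin kZ → (i : ℕ) → (Fin i → X) → (Fin i → Y) → X → ℝ)
        (DY : Fin kY → Finset (Fin n → Y)) (DZ : Fin kZ → Finset (Fin n → Z)),
        IsFBIDCode n kY kZ W Q DY DZ l1Y l2Y l1Z l2Z ∧
        ((0 < Rp.1 → Rp.1 ≤ (1 / n) * Real.log (Real.log kY)) ∧ (Rp.1 = 0 → kY = 1)) ∧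
        ((0 < Rp.2 → Rp.2 ≤ (1 / n) * Real.log (Real.log kZ)) ∧ (Rp.2 = 0 → kZ = 1))

/-- Product weight of a family of weights. -/
def piW {ι A : Type*} [Fintype ι] (w : ι → A → ℝ) (f : ι → A) : ℝ := ∏ i, w i (f i)

section ProductWeights

variable {ι A : Type*} [Fintype ι] [DecidableEq ι] [Fintype A]

theorem sum_piW (w : ι → A → ℝ) : ∑ f, piW w f = ∏ i, ∑ a, w i a := by
  rw [Finset.prod_univ_sum, Fintype.piFinset_univ]; rfl

theorem isPMF_piW {w : ι → A → ℝ} (hw : ∀ i, IsPMF (w i)) : IsPMF (piW w) := by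
  refine ⟨fun f => Finset.prod_nonneg fun i _ => (hw i).1 _, ?_⟩
  rw [sum_piW]
  exact Finset.prod_eq_one fun i _ => (hw i).2

theorem sum_piW_mul_prod (w u : ι → A → ℝ) :
    ∑ f, piW w f * ∏ i, u i (f i) = ∏ i, ∑ a, w i a * u i a := by
  rw [← sum_piW]
  simp only [piW, Finset.prod_mul_distrib]

theorem sum_piW_mul_single {w : ι → A → ℝ} (hw : ∀ i, IsPMF (w i)) (j : ι) (u : A → ℝ) :
    ∑ f, piW w f * u (f j) = ∑ a, w j a * u a := by
  have h := sum_piW_mul_prod w (fun i a => if i = j then u a else 1)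
  simp only [Finset.prod_ite_eq', Finset.mem_univ, if_true] at h
  rw [h]
  have : ∀ i, ∑ a, w i a * (if i = j then u a else 1)
      = if i = j then ∑ a, w j a * u a else 1 := by
    intro i
    split_ifs with h
    · subst h; rfl
    · simpa using (hw i).2
  rw [Finset.prod_congr rfl fun i _ => this i]
  simp only [Finset.prod_ite_eq', Finset.mem_univ, if_true]

theorem sum_piW_mul_mul {w : ι → A → ℝ} (hw : ∀ i, IsPMF (w i)) {j k : ι} (hjk : j ≠ k)
    (u v : A → ℝ) :
    ∑ f, piW w f * (u (f j) * v (f k)) = (∑ a, w j a * u a) * ∑ a, w k a * v a := by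
  have h := sum_piW_mul_prod w
    (fun i a => (if i = j then u a else 1) * (if i = k then v a else 1))
  simp only [Finset.prod_mul_distrib, Finset.prod_ite_eq', Finset.mem_univ, if_true] at h
  rw [h]
  have : ∀ i, ∑ a, w i a * ((if i = j then u a else 1) * (if i = k then v a else 1))
      = (if i = j then ∑ a, w j a * u a else 1) * (if i = k then ∑ a, w k a * v a else 1) := by
    intro i
    by_cases h1 : i = j
    · subst h1; simp [hjk]
    · by_cases h2 : i = k
      · subst h2; simp [h1]
      · simpa [h1, h2] using (hw i).2
  rw [Finset.prod_congr rfl fun i _ => this i]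
  simp only [Finset.prod_mul_distrib, Finset.prod_ite_eq', Finset.mem_univ, if_true]

theorem sum_piW_mul_pair {w : ι → A → ℝ} (hw : ∀ i, IsPMF (w i)) {j k : ι} (hjk : j ≠ k)
    (g : A → A → ℝ) :
    ∑ f, piW w f * g (f j) (f k) = ∑ a, w j a * ∑ b, w k b * g a b := by
  have h1 : ∀ f : ι → A, piW w f * g (f j) (f k)
      = ∑ a, piW w f * ((if f j = a then 1 else 0) * g a (f k)) := by
    intro f; simp
  simp only [h1]
  rw [Finset.sum_comm]
  refine Finset.sum_congr rfl fun a _ => ?_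
  rw [sum_piW_mul_mul hw hjk (fun c => if c = a then 1 else 0) (fun b => g a b)]
  simp

/-- Variance of a sum of independent centred variables. -/
theorem sum_piW_mul_sq {w : ι → A → ℝ} (hw : ∀ i, IsPMF (w i)) (h : ι → A → ℝ)
    (h0 : ∀ i, ∑ a, w i a * h i a = 0) :
    ∑ f, piW w f * (∑ i, h i (f i)) ^ 2 = ∑ i, ∑ a, w i a * h i a ^ 2 := by
  have h1 : ∀ f : ι → A, piW w f * (∑ i, h i (f i)) ^ 2
      = ∑ i, ∑ j, piW w f * (h i (f i) * h j (f j)) := by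
    intro f
    rw [sq, Finset.sum_mul_sum, Finset.mul_sum]
    exact Finset.sum_congr rfl fun i _ => Finset.mul_sum _ _ _
  simp only [h1]
  rw [Finset.sum_comm]
  refine Finset.sum_congr rfl fun i _ => ?_
  rw [Finset.sum_comm, Finset.sum_eq_single i]
  · rw [← sum_piW_mul_single hw i (fun a => h i a ^ 2)]
    simp only [sq]
  · intro j _ hj
    rw [sum_piW_mul_mul hw (Ne.symm hj), h0, zero_mul]
  · simp

/-- Chernoff bound for sums of independent `[0,1]`-valued variables. -/
theorem piW_chernoff {w : ι → A → ℝ} (hw : ∀ i, IsPMF (w i)) (u : ι → A → ℝ)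
    (h0 : ∀ i a, 0 ≤ u i a) (h1 : ∀ i a, u i a ≤ 1) {μ t : ℝ}
    (hμ : ∑ i, ∑ a, w i a * u i a ≤ μ) :
    ∑ f, piW w f * (if t < ∑ i, u i (f i) then 1 else 0) ≤ Real.exp (2 * μ - t) := by
  have hexp : ∀ x : ℝ, 0 ≤ x → x ≤ 1 → Real.exp x ≤ 1 + 2 * x := by
    intro x hx0 hx1
    have hc := convexOn_exp.2 (Set.mem_univ (0 : ℝ)) (Set.mem_univ (1 : ℝ))
      (by linarith : 0 ≤ 1 - x) hx0 (by ring)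
    simp only [smul_eq_mul, mul_zero, mul_one, zero_add, Real.exp_zero] at hc
    have := Real.exp_one_lt_d9
    nlinarith
  have hpos := (isPMF_piW hw).1
  calc ∑ f, piW w f * (if t < ∑ i, u i (f i) then 1 else 0)
      ≤ ∑ f, piW w f * (Real.exp (-t) * ∏ i, Real.exp (u i (f i))) := by
        refine Finset.sum_le_sum fun f _ => mul_le_mul_of_nonneg_left ?_ (hpos f)
        rw [← Real.exp_sum, ← Real.exp_add]
        split_ifs with h
        · exact Real.one_le_exp (by linarith)
        · positivity
    _ = Real.exp (-t) * ∏ i, ∑ a, w i a * Real.exp (u i a) := by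
        rw [← sum_piW_mul_prod w (fun i a => Real.exp (u i a)), Finset.mul_sum]
        exact Finset.sum_congr rfl fun f _ => by ring
    _ ≤ Real.exp (-t) * ∏ i, Real.exp (2 * ∑ a, w i a * u i a) := by
        refine mul_le_mul_of_nonneg_left (Finset.prod_le_prod ?_ ?_) (Real.exp_pos _).le
        · exact fun i _ => Finset.sum_nonneg fun a _ => mul_nonneg ((hw i).1 a) (Real.exp_pos _).le
        · intro i _
          calc ∑ a, w i a * Real.exp (u i a) ≤ ∑ a, w i a * (1 + 2 * u i a) :=
                Finset.sum_le_sum fun a _ =>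
                  mul_le_mul_of_nonneg_left (hexp _ (h0 i a) (h1 i a)) ((hw i).1 a)
            _ = 2 * ∑ a, w i a * u i a + 1 := by
                simp only [mul_add, mul_one, Finset.sum_add_distrib, (hw i).2, Finset.mul_sum]
                rw [add_comm]
                exact congrArg (· + (1 : ℝ)) (Finset.sum_congr rfl fun a _ => by ring)
            _ ≤ _ := Real.add_one_le_exp _
    _ ≤ Real.exp (2 * μ - t) := by
        rw [← Real.exp_sum, ← Real.exp_add, ← Finset.mul_sum]
        exact Real.exp_le_exp.2 (by linarith)

end ProductWeights

section Weights

variable {A : Type*} [Fintype A]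

theorem IsPMF.exists_le {w g : A → ℝ} (hw : IsPMF w) {c : ℝ} (h : ∑ a, w a * g a ≤ c) :
    ∃ a, g a ≤ c := by
  by_contra! hc
  have h1 : ∑ a, w a * c < ∑ a, w a * g a := by
    have hex : ∃ a, 0 < w a := by
      by_contra! hn
      have := Finset.sum_nonpos fun a (_ : a ∈ Finset.univ) => hn a
      rw [hw.2] at this
      linarith
    obtain ⟨a, ha⟩ := hex
    exact Finset.sum_lt_sum (fun b _ => mul_le_mul_of_nonneg_left (hc b).le (hw.1 b))
      ⟨a, Finset.mem_univ a, mul_lt_mul_of_pos_left (hc a) ha⟩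
  rw [← Finset.sum_mul, hw.2] at h1
  linarith

theorem IsPMF.le_one {w : A → ℝ} (hw : IsPMF w) (a : A) : w a ≤ 1 :=
  hw.2 ▸ Finset.single_le_sum (fun b _ => hw.1 b) (Finset.mem_univ a)

/-- Chebyshev's inequality for weights. -/
theorem chebyshev_weights {w : A → ℝ} (hw : ∀ a, 0 ≤ w a) (g : A → ℝ) {c V : ℝ} (hc : 0 < c)
    (hV : ∑ a, w a * g a ^ 2 ≤ V) :
    ∑ a, w a * (if c ≤ |g a| then 1 else 0) ≤ V / c ^ 2 := by
  rw [le_div_iff₀ (by positivity), Finset.sum_mul]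
  refine le_trans (Finset.sum_le_sum fun a _ => ?_) hV
  rw [mul_assoc]
  refine mul_le_mul_of_nonneg_left ?_ (hw a)
  split_ifs with h
  · rw [one_mul, ← sq_abs (g a)]
    exact pow_le_pow_left₀ hc.le h 2
  · rw [zero_mul]; positivity

/-- Weak law of large numbers for a finitely supported i.i.d. sequence. -/
theorem weak_law {w : A → ℝ} (hw : IsPMF w) (g : A → ℝ) {ε ν : ℝ} (hε : 0 < ε) (hν : 0 < ν) :
    ∃ n₀ : ℕ, ∀ n ≥ n₀, ∑ s : Fin n → A, piW (fun _ => w) s *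
      (if n * ε ≤ |∑ i, g (s i) - n * ∑ a, w a * g a| then 1 else 0) ≤ ν := by
  set m := ∑ a, w a * g a with hm
  set V := ∑ a, w a * (g a - m) ^ 2 with hV
  have hV0 : 0 ≤ V := Finset.sum_nonneg fun a _ => mul_nonneg (hw.1 a) (sq_nonneg _)
  obtain ⟨n₀, hn₀⟩ := exists_nat_ge (V / (ε ^ 2 * ν))
  refine ⟨n₀ + 1, fun n hn => ?_⟩
  have hnpos : (0 : ℝ) < n := by exact_mod_cast (by omega : 0 < n)
  have hmean : ∑ a, w a * (g a - m) = 0 := by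
    simp only [mul_sub, Finset.sum_sub_distrib, ← Finset.sum_mul, hw.2]; simp [hm]
  have h2 := sum_piW_mul_sq (ι := Fin n) (fun _ => hw) (fun _ a => g a - m) (fun _ => hmean)
  have hc := chebyshev_weights (isPMF_piW (ι := Fin n) fun _ => hw).1
    (fun s => ∑ i, (g (s i) - m)) (c := n * ε) (by positivity) h2.le
  simp only [Finset.sum_sub_distrib, Finset.sum_const, Finset.card_univ, Fintype.card_fin,
    nsmul_eq_mul] at hc
  refine hc.trans ?_
  rw [div_le_iff₀ (by positivity)]
  rw [div_le_iff₀ (by positivity)] at hn₀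
  have : (n₀ : ℝ) ≤ n := by exact_mod_cast (by omega : n₀ ≤ n)
  have : V ≤ n * (ε ^ 2 * ν) := hn₀.trans (mul_le_mul_of_nonneg_right this (by positivity))
  nlinarith

end Weights

section Information

variable {X Y : Type*} [Fintype X] [Fintype Y]

theorem entH_eq_sum_negMulLog (p : Y → ℝ) : entH p = ∑ y, Real.negMulLog (p y) := by
  refine Finset.sum_congr rfl fun y _ => ?_
  split_ifs with h <;> simp [Real.negMulLog, h]

theorem entH_nonneg {p : Y → ℝ} (hp : IsPMF p) : 0 ≤ entH p := by
  rw [entH_eq_sum_negMulLog]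
  exact Finset.sum_nonneg fun y _ => Real.negMulLog_nonneg (hp.1 y) (hp.le_one y)

theorem isPMF_outDist {P : X → ℝ} {W : X → Y → ℝ} (hP : IsPMF P) (hW : IsChannel W) :
    IsPMF (outDist P W) := by
  refine ⟨fun y => Finset.sum_nonneg fun x _ => mul_nonneg (hP.1 x) (hW.1 x y), ?_⟩
  simp only [outDist]
  rw [Finset.sum_comm]
  simp only [← Finset.mul_sum, hW.2, mul_one, hP.2]

theorem outDist_eq_zero {P : X → ℝ} {W : X → Y → ℝ} (hP : IsPMF P) (hW : IsChannel W) {y : Y}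
    (h : outDist P W y = 0) (x : X) : P x * W x y = 0 :=
  (Finset.sum_eq_zero_iff_of_nonneg
    fun x _ => mul_nonneg (hP.1 x) (hW.1 x y)).1 h x (Finset.mem_univ x)

theorem mutInf_eq_sum_log_sub {P : X → ℝ} {W : X → Y → ℝ} (hP : IsPMF P) (hW : IsChannel W) :
    mutInf P W = ∑ x, ∑ y, P x * W x y * (Real.log (W x y) - Real.log (outDist P W y)) := by
  refine Finset.sum_congr rfl fun x _ => Finset.sum_congr rfl fun y _ => ?_
  split_ifs with h
  · rw [h, zero_mul]
  · change P x * W x y * Real.log (W x y / outDist P W y) = _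
    rw [Real.log_div (right_ne_zero_of_mul h) fun h0 => h (outDist_eq_zero hP hW h0 x)]

theorem sum_mul_sum_mul_eq_outDist (P : X → ℝ) (W : X → Y → ℝ) (g : Y → ℝ) :
    ∑ x, ∑ y, P x * W x y * g y = ∑ y, outDist P W y * g y := by
  rw [Finset.sum_comm]
  simp only [outDist, Finset.sum_mul]

theorem mutInf_eq_sub {P : X → ℝ} {W : X → Y → ℝ} (hP : IsPMF P) (hW : IsChannel W) :
    mutInf P W = entH (outDist P W) + ∑ x, ∑ y, P x * W x y * Real.log (W x y) := by
  rw [mutInf_eq_sum_log_sub hP hW]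
  simp only [mul_sub, Finset.sum_sub_distrib]
  rw [sum_mul_sum_mul_eq_outDist, entH_eq_sum_negMulLog]
  simp only [Real.negMulLog, neg_mul, Finset.sum_neg_distrib]
  ring

theorem continuous_outDist {X Y : Type*} [Fintype X] (W : X → Y → ℝ) :
    Continuous fun P : X → ℝ => outDist P W := by
  unfold outDist; fun_prop

theorem continuous_entH : Continuous (entH : (Y → ℝ) → ℝ) := by
  simp only [funext (entH_eq_sum_negMulLog (Y := Y))]
  exact continuous_finsetSum _ fun y _ => Real.continuous_negMulLog.comp (continuous_apply y)

theorem continuousOn_mutInf {W : X → Y → ℝ} (hW : IsChannel W) :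
    ContinuousOn (fun P => mutInf P W) {P | IsPMF P} := by
  refine ContinuousOn.congr (f := fun P => entH (outDist P W)
    + ∑ x, ∑ y, P x * W x y * Real.log (W x y)) ?_ fun P hP => mutInf_eq_sub hP hW
  exact ((continuous_entH.comp (continuous_outDist W)).add (by fun_prop)).continuousOn

theorem isCompact_isPMF : IsCompact {P : X → ℝ | IsPMF P} := isCompact_stdSimplex ℝ X

/-- By compactness, approximate simultaneous bounds are attained. -/
theorem exists_isPMF_of_approx {f g : (X → ℝ) → ℝ} (hf : ContinuousOn f {P | IsPMF P})
    (hg : ContinuousOn g {P | IsPMF P}) {a b : ℝ}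
    (h : ∀ δ > 0, ∃ P, IsPMF P ∧ a ≤ f P + δ ∧ b ≤ g P + δ) :
    ∃ P, IsPMF P ∧ a ≤ f P ∧ b ≤ g P := by
  obtain ⟨P₀, hP₀, -⟩ := h 1 one_pos
  obtain ⟨P, hP, hmin⟩ := isCompact_isPMF.exists_isMinOn ⟨P₀, hP₀⟩
    (f := (fun P => a - f P) ⊔ fun P => b - g P)
    (ContinuousOn.sup (continuousOn_const.sub hf) (continuousOn_const.sub hg))
  have hle : max (a - f P) (b - g P) ≤ 0 := by
    refine le_of_forall_pos_le_add fun δ hδ => ?_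
    obtain ⟨P', hP', h1, h2⟩ := h δ hδ
    refine (hmin hP').trans (max_le ?_ ?_) <;> linarith
  have h1 := (le_max_left _ _).trans hle
  have h2 := (le_max_right _ _).trans hle
  exact ⟨P, hP, by linarith, by linarith⟩

theorem mul_log_sub_log_ge {a b : ℝ} (ha : 0 ≤ a) (hb : 0 ≤ b) (hab : b = 0 → a = 0) :
    a - b ≤ a * (Real.log a - Real.log b) := by
  rcases ha.eq_or_lt with rfl | ha
  · simpa using hb
  have hb : 0 < b := hb.lt_of_ne fun h => ha.ne' (hab h.symm)
  have h := Real.log_le_sub_one_of_pos (div_pos hb ha)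
  rw [Real.log_div hb.ne' ha.ne'] at h
  have : a * (b / a) = b := by field_simp
  nlinarith

theorem mul_log_sub_log_gt {a b : ℝ} (ha : 0 ≤ a) (hb : 0 < b) (hab : a ≠ b) :
    a - b < a * (Real.log a - Real.log b) := by
  rcases ha.eq_or_lt with rfl | ha
  · simpa using hb
  have h := Real.log_lt_sub_one_of_pos (div_pos hb ha)
    (fun h => hab ((div_eq_one_iff_eq ha.ne').1 h).symm)
  rw [Real.log_div hb.ne' ha.ne'] at h
  have : a * (b / a) = b := by field_simp
  nlinarith

theorem sum_mul_sub_outDist {P : X → ℝ} {W : X → Y → ℝ} (hP : IsPMF P) :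
    ∑ x, ∑ y, P x * (W x y - outDist P W y) = 0 := by
  rw [Finset.sum_comm]
  simp only [mul_sub, Finset.sum_sub_distrib, ← Finset.sum_mul, hP.2, outDist]
  simp

theorem mutInf_nonneg {P : X → ℝ} {W : X → Y → ℝ} (hP : IsPMF P) (hW : IsChannel W) :
    0 ≤ mutInf P W := by
  rw [mutInf_eq_sum_log_sub hP hW, ← sum_mul_sub_outDist hP (W := W)]
  refine Finset.sum_le_sum fun x _ => Finset.sum_le_sum fun y _ => ?_
  rw [mul_assoc]
  rcases (hP.1 x).eq_or_lt with h | h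
  · simp [← h]
  · exact mul_le_mul_of_nonneg_left (mul_log_sub_log_ge (hW.1 x y)
      ((isPMF_outDist hP hW).1 y) fun h0 => (mul_eq_zero.1
        (outDist_eq_zero hP hW h0 x)).resolve_left h.ne') h.le

/-- A channel carries information iff its rows are not all equal. -/
theorem exists_mutInf_pos_iff [Nonempty X] {W : X → Y → ℝ} (hW : IsChannel W) :
    (∃ P, IsPMF P ∧ 0 < mutInf P W) ↔ ∃ x₀ x₁ y, W x₀ y ≠ W x₁ y := by
  constructor
  · rintro ⟨P, hP, hpos⟩
    by_contra! hn
    have hout : ∀ x y, outDist P W y = W x y := fun x y => by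
      rw [outDist, Finset.sum_congr rfl fun x' _ => by rw [hn x' x y], ← Finset.sum_mul, hP.2,
        one_mul]
    rw [mutInf_eq_sum_log_sub hP hW] at hpos
    have : ∑ x, ∑ y, P x * W x y * (Real.log (W x y) - Real.log (outDist P W y)) = 0 :=
      Finset.sum_eq_zero fun x _ => Finset.sum_eq_zero fun y _ => by rw [hout x y]; ring
    linarith
  · rintro ⟨x₀, x₁, y, hne⟩
    have hc : (0 : ℝ) < Fintype.card X := by exact_mod_cast Fintype.card_pos
    set P : X → ℝ := fun _ => (Fintype.card X : ℝ)⁻¹ with hPdef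
    have hP : IsPMF P := ⟨fun _ => by positivity, by simp [hPdef, hc.ne']⟩
    obtain ⟨x, hx⟩ : ∃ x, W x y ≠ outDist P W y := by
      by_contra! h
      exact hne ((h x₀).trans (h x₁).symm)
    refine ⟨P, hP, ?_⟩
    have hge : ∀ x y, P x * (W x y - outDist P W y)
        ≤ P x * W x y * (Real.log (W x y) - Real.log (outDist P W y)) := fun x y => by
      rw [mul_assoc]
      exact mul_le_mul_of_nonneg_left (mul_log_sub_log_ge (hW.1 x y)
        ((isPMF_outDist hP hW).1 y) fun h0 => (mul_eq_zero.1
          (outDist_eq_zero hP hW h0 x)).resolve_left (inv_pos.2 hc).ne') (hP.1 x)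
    rw [mutInf_eq_sum_log_sub hP hW, ← sum_mul_sub_outDist hP (W := W)]
    refine Finset.sum_lt_sum (fun x _ => Finset.sum_le_sum fun y _ => hge x y)
      ⟨x, Finset.mem_univ x, Finset.sum_lt_sum (fun y _ => hge x y) ⟨y, Finset.mem_univ y, ?_⟩⟩
    have hpos : 0 < outDist P W y := by
      refine ((isPMF_outDist hP hW).1 y).lt_of_ne fun h0 => hx ?_
      rw [← h0]
      exact (mul_eq_zero.1 (outDist_eq_zero hP hW h0.symm x)).resolve_left (inv_pos.2 hc).ne'
    rw [mul_assoc]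
    exact mul_lt_mul_of_pos_left (mul_log_sub_log_gt (hW.1 x y) hpos hx) (inv_pos.2 hc)

/-- The output law mixed with a fraction `s` of the uniform law. -/
def smoothOut (s : ℝ) (P : X → ℝ) (W : X → Y → ℝ) (y : Y) : ℝ :=
  (1 - s) * outDist P W y + s * (Fintype.card Y : ℝ)⁻¹

theorem isPMF_smoothOut [Nonempty Y] {s : ℝ} (hs0 : 0 < s) (hs1 : s < 1) {P : X → ℝ}
    {W : X → Y → ℝ} (hP : IsPMF P) (hW : IsChannel W) : IsPMF (smoothOut s P W) := by
  have hc : (0 : ℝ) < Fintype.card Y := by exact_mod_cast Fintype.card_pos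
  refine ⟨fun y => add_nonneg (mul_nonneg (by linarith) ((isPMF_outDist hP hW).1 y))
    (by positivity), ?_⟩
  simp only [smoothOut, Finset.sum_add_distrib, ← Finset.mul_sum, (isPMF_outDist hP hW).2]
  simp [hc.ne']

theorem le_smoothOut {s : ℝ} (hs1 : s < 1) {P : X → ℝ}
    {W : X → Y → ℝ} (hP : IsPMF P) (hW : IsChannel W) (y : Y) :
    s * (Fintype.card Y : ℝ)⁻¹ ≤ smoothOut s P W y :=
  le_add_of_nonneg_left (mul_nonneg (by linarith) ((isPMF_outDist hP hW).1 y))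

theorem abs_log_smoothOut_le [Nonempty Y] {s : ℝ} (hs0 : 0 < s) (hs1 : s < 1) {P : X → ℝ}
    {W : X → Y → ℝ} (hP : IsPMF P) (hW : IsChannel W) (y : Y) :
    |Real.log (smoothOut s P W y)| ≤ -Real.log (s * (Fintype.card Y : ℝ)⁻¹) := by
  have hc : (0 : ℝ) < Fintype.card Y := by exact_mod_cast Fintype.card_pos
  have h0 : 0 < s * (Fintype.card Y : ℝ)⁻¹ := by positivity
  have h1 := le_smoothOut hs1 hP hW y
  rw [abs_of_nonpos (Real.log_nonpos (h0.le.trans h1)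
    ((isPMF_smoothOut hs0 hs1 hP hW).le_one y))]
  exact neg_le_neg (Real.log_le_log h0 h1)

theorem sum_outDist_mul_neg_log_smoothOut_le {s : ℝ} (hs0 : 0 < s)
    (hs1 : s < 1) {P : X → ℝ} {W : X → Y → ℝ} (hP : IsPMF P) (hW : IsChannel W) :
    ∑ y, outDist P W y * -Real.log (smoothOut s P W y)
      ≤ entH (outDist P W) - Real.log (1 - s) := by
  have hout := isPMF_outDist hP hW
  calc ∑ y, outDist P W y * -Real.log (smoothOut s P W y)
      ≤ ∑ y, (Real.negMulLog (outDist P W y) + outDist P W y * -Real.log (1 - s)) := by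
        refine Finset.sum_le_sum fun y _ => ?_
        rcases (hout.1 y).eq_or_lt with h | h
        · simp [← h]
        · have h1 : (1 - s) * outDist P W y ≤ smoothOut s P W y :=
            le_add_of_nonneg_right (by positivity)
          have h2 := Real.log_le_log (mul_pos (by linarith) h) h1
          rw [Real.log_mul (by linarith) h.ne'] at h2
          rw [Real.negMulLog]
          nlinarith
    _ = _ := by
        rw [Finset.sum_add_distrib, ← Finset.sum_mul, hout.2, entH_eq_sum_negMulLog]
        ring

theorem sum_mul_log_sub_log_smoothOut_le {s : ℝ} (hs0 : 0 < s)
    (hs1 : s < 1) {P : X → ℝ} {W : X → Y → ℝ} (hP : IsPMF P) (hW : IsChannel W) :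
    ∑ x, ∑ y, P x * W x y * (Real.log (W x y) - Real.log (smoothOut s P W y))
      ≤ mutInf P W - Real.log (1 - s) := by
  have h := sum_outDist_mul_neg_log_smoothOut_le hs0 hs1 hP hW
  rw [← sum_mul_sum_mul_eq_outDist] at h
  rw [mutInf_eq_sub hP hW]
  simp only [mul_sub, Finset.sum_sub_distrib]
  simp only [mul_neg, Finset.sum_neg_distrib] at h
  linarith

end Information

section Feedback

/-- The contribution of the feedback encoder to the joint law. -/
def encW {X Y : Type*} (n : ℕ) (Q : (i : ℕ) → (Fin i → X) → (Fin i → Y) → X → ℝ)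
    (x : Fin n → X) (y : Fin n → Y) : ℝ :=
  ∏ i : Fin n, Q i.1 (fun j : Fin i.1 => x ⟨j.1, lt_trans j.isLt i.isLt⟩)
    (fun j : Fin i.1 => y ⟨j.1, lt_trans j.isLt i.isLt⟩) (x i)

/-- The joint law of inputs and fed-back outputs. -/
def pathW {X Y : Type*} (n : ℕ) (Q : (i : ℕ) → (Fin i → X) → (Fin i → Y) → X → ℝ)
    (V : X → Y → ℝ) (x : Fin n → X) (y : Fin n → Y) : ℝ :=
  encW n Q x y * Wn V n x y

variable {X Y Z : Type*}

theorem encW_snoc (n : ℕ) (Q : (i : ℕ) → (Fin i → X) → (Fin i → Y) → X → ℝ)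
    (x : Fin n → X) (y : Fin n → Y) (a : X) (b : Y) :
    encW (n + 1) Q (Fin.snoc (α := fun _ => X) x a) (Fin.snoc (α := fun _ => Y) y b)
      = encW n Q x y * Q n x y a := by
  rw [encW, Fin.prod_univ_castSucc, encW]
  congr 1
  · refine Finset.prod_congr rfl fun i _ => ?_
    have hi := i.isLt
    have hx : (fun j : Fin i.1 => Fin.snoc (α := fun _ => X) x a
        ⟨j.1, j.isLt.trans i.castSucc.isLt⟩) = fun j : Fin i.1 => x ⟨j.1, j.isLt.trans hi⟩ := by
      funext j
      have hj : j.1 < n := j.isLt.trans hi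
      simp [Fin.snoc, hj]
    have hy : (fun j : Fin i.1 => Fin.snoc (α := fun _ => Y) y b
        ⟨j.1, j.isLt.trans i.castSucc.isLt⟩) = fun j : Fin i.1 => y ⟨j.1, j.isLt.trans hi⟩ := by
      funext j
      have hj : j.1 < n := j.isLt.trans hi
      simp [Fin.snoc, hj]
    change Q i.1 _ _ _ = Q i.1 _ _ _
    rw [← hx, ← hy, Fin.snoc_castSucc]
    rfl
  · simp [Fin.snoc]

theorem Wn_snoc (n : ℕ) (V : X → Y → ℝ) (x : Fin n → X) (y : Fin n → Y) (a : X) (b : Y) :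
    Wn V (n + 1) (Fin.snoc (α := fun _ => X) x a) (Fin.snoc (α := fun _ => Y) y b)
      = Wn V n x y * V a b := by
  simp [Wn, Fin.prod_univ_castSucc]

theorem pathW_snoc (n : ℕ) (Q : (i : ℕ) → (Fin i → X) → (Fin i → Y) → X → ℝ) (V : X → Y → ℝ)
    (x : Fin n → X) (y : Fin n → Y) (a : X) (b : Y) :
    pathW (n + 1) Q V (Fin.snoc (α := fun _ => X) x a) (Fin.snoc (α := fun _ => Y) y b)
      = pathW n Q V x y * (Q n x y a * V a b) := by
  rw [pathW, encW_snoc, Wn_snoc, pathW]; ring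

theorem sum_fin_succ_snoc [Fintype X] (n : ℕ) (f : (Fin (n + 1) → X) → ℝ) :
    ∑ x, f x = ∑ x : Fin n → X, ∑ a, f (Fin.snoc (α := fun _ => X) x a) := by
  rw [← (Fin.snocEquiv fun _ : Fin (n + 1) => X).sum_comp, Fintype.sum_prod_type, Finset.sum_comm]
  rfl

theorem IsFBEncoder.of_succ [Fintype X] {n : ℕ}
    {Q : (i : ℕ) → (Fin i → X) → (Fin i → Y) → X → ℝ}
    (hQ : IsFBEncoder (n + 1) Q) : IsFBEncoder n Q :=
  fun i hi => hQ i (Nat.lt_succ_of_lt hi)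

theorem encW_nonneg [Fintype X] {n : ℕ} {Q : (i : ℕ) → (Fin i → X) → (Fin i → Y) → X → ℝ}
    (hQ : IsFBEncoder n Q) (x : Fin n → X) (y : Fin n → Y) : 0 ≤ encW n Q x y :=
  Finset.prod_nonneg fun i _ => (hQ i.1 i.isLt _ _).1 _

theorem sum_encW [Fintype X] {n : ℕ} {Q : (i : ℕ) → (Fin i → X) → (Fin i → Y) → X → ℝ}
    (hQ : IsFBEncoder n Q) (y : Fin n → Y) : ∑ x, encW n Q x y = 1 := by
  induction n with
  | zero => simp [encW]
  | succ n ih =>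
    rw [sum_fin_succ_snoc, ← Fin.snoc_init_self y]
    simp only [encW_snoc, ← Finset.mul_sum, (hQ n (Nat.lt_succ_self n) _ _).2, mul_one]
    exact ih hQ.of_succ _

theorem Wn_eq_piW {n : ℕ} (V : X → Y → ℝ) (x : Fin n → X) :
    Wn V n x = piW fun i => V (x i) := rfl

theorem isPMF_Wn [Fintype Y] {n : ℕ} {V : X → Y → ℝ} (hV : IsChannel V) (x : Fin n → X) :
    IsPMF (Wn V n x) :=
  isPMF_piW fun i => ⟨hV.1 (x i), hV.2 (x i)⟩

theorem pathW_nonneg [Fintype X] [Fintype Y] {n : ℕ}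
    {Q : (i : ℕ) → (Fin i → X) → (Fin i → Y) → X → ℝ}
    (hQ : IsFBEncoder n Q) {V : X → Y → ℝ} (hV : IsChannel V) (x : Fin n → X) (y : Fin n → Y) :
    0 ≤ pathW n Q V x y :=
  mul_nonneg (encW_nonneg hQ x y) ((isPMF_Wn hV x).1 y)

theorem sum_pathW [Fintype X] [Fintype Y] {n : ℕ}
    {Q : (i : ℕ) → (Fin i → X) → (Fin i → Y) → X → ℝ}
    (hQ : IsFBEncoder n Q) {V : X → Y → ℝ} (hV : IsChannel V) :
    ∑ x, ∑ y, pathW n Q V x y = 1 := by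
  induction n with
  | zero => simp [pathW, encW, Wn]
  | succ n ih =>
    rw [sum_fin_succ_snoc]
    simp only [sum_fin_succ_snoc, pathW_snoc]
    rw [← ih hQ.of_succ]
    refine Finset.sum_congr rfl fun x _ => ?_
    rw [Finset.sum_comm]
    refine Finset.sum_congr rfl fun y _ => ?_
    simp only [← Finset.mul_sum, hV.2, mul_one, (hQ n (Nat.lt_succ_self n) _ _).2]

/-- Second moment bound for the martingale `∑ᵢ h(xᵢ, yᵢ)` with conditionally centred increments. -/
theorem sum_pathW_mul_sq_le [Fintype X] [Fintype Y] {n : ℕ}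
    {Q : (i : ℕ) → (Fin i → X) → (Fin i → Y) → X → ℝ}
    (hQ : IsFBEncoder n Q) {V : X → Y → ℝ} (hV : IsChannel V) {h : X → Y → ℝ}
    (h0 : ∀ a, ∑ b, V a b * h a b = 0) (h1 : ∀ a b, h a b ^ 2 ≤ 1) :
    ∑ x, ∑ y, pathW n Q V x y * (∑ i, h (x i) (y i)) ^ 2 ≤ n := by
  induction n with
  | zero => simp
  | succ n ih =>
    have hQn := hQ n (Nat.lt_succ_self n)
    rw [sum_fin_succ_snoc]
    simp only [sum_fin_succ_snoc, pathW_snoc]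
    have hstep : ∀ (x : Fin n → X) (y : Fin n → Y),
        ∑ a, ∑ b, pathW n Q V x y * (Q n x y a * V a b) *
          (∑ i : Fin (n + 1), h (Fin.snoc (α := fun _ => X) x a i)
            (Fin.snoc (α := fun _ => Y) y b i)) ^ 2
        ≤ pathW n Q V x y * (∑ i, h (x i) (y i)) ^ 2 + pathW n Q V x y := by
      intro x y
      set S := ∑ i, h (x i) (y i) with hS
      have hp := pathW_nonneg hQ.of_succ hV x y
      have hinner : ∀ a, ∑ b, V a b * (S + h a b) ^ 2 ≤ S ^ 2 + 1 := fun a => by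
        calc ∑ b, V a b * (S + h a b) ^ 2
            = S ^ 2 * ∑ b, V a b + 2 * S * ∑ b, V a b * h a b + ∑ b, V a b * h a b ^ 2 := by
              rw [Finset.mul_sum, Finset.mul_sum, ← Finset.sum_add_distrib,
                ← Finset.sum_add_distrib]
              exact Finset.sum_congr rfl fun b _ => by ring
          _ ≤ S ^ 2 * ∑ b, V a b + 2 * S * ∑ b, V a b * h a b + ∑ b, V a b * 1 := by
              gcongr with b
              · exact hV.1 a b
              · exact h1 a b
          _ = S ^ 2 + 1 := by simp [hV.2, h0]
      calc _ = pathW n Q V x y * ∑ a, Q n x y a * ∑ b, V a b * (S + h a b) ^ 2 := by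
            rw [Finset.mul_sum]
            refine Finset.sum_congr rfl fun a _ => ?_
            rw [Finset.mul_sum, Finset.mul_sum]
            refine Finset.sum_congr rfl fun b _ => ?_
            rw [Fin.sum_univ_castSucc]
            simp only [Fin.snoc_castSucc, Fin.snoc_last, ← hS]
            ring
        _ ≤ pathW n Q V x y * ∑ a, Q n x y a * (S ^ 2 + 1) := by
            gcongr with a
            · exact (hQn x y).1 a
            · exact hinner a
        _ = _ := by rw [← Finset.sum_mul, (hQn x y).2]; ring
    calc _ ≤ ∑ x, ∑ y, (pathW n Q V x y * (∑ i, h (x i) (y i)) ^ 2 + pathW n Q V x y) := by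
          refine Finset.sum_le_sum fun x _ => ?_
          rw [Finset.sum_comm]
          exact Finset.sum_le_sum fun y _ => hstep x y
      _ ≤ _ := by
          simp only [Finset.sum_add_distrib]
          rw [sum_pathW hQ.of_succ hV]
          have := ih hQ.of_succ
          push_cast
          linarith

variable [Fintype Y] [Fintype Z]

theorem isChannel_margY {W : X → Y → Z → ℝ} (hW : IsBC W) : IsChannel (margY W) :=
  ⟨fun x y => Finset.sum_nonneg fun z _ => hW.1 x y z, hW.2⟩

theorem isChannel_margZ {W : X → Y → Z → ℝ} (hW : IsBC W) : IsChannel (margZ W) :=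
  ⟨fun x z => Finset.sum_nonneg fun y _ => hW.1 x y z, fun x => by
    rw [← hW.2 x]; exact Finset.sum_comm⟩

theorem fbLaw_eq {W : X → Y → Z → ℝ} (hind : ∀ x y z, W x y z = margY W x y * margZ W x z)
    {n : ℕ} (Q : (i : ℕ) → (Fin i → X) → (Fin i → Y) → X → ℝ)
    (x : Fin n → X) (y : Fin n → Y) (z : Fin n → Z) :
    fbLaw n W Q x y z = pathW n Q (margY W) x y * Wn (margZ W) n x z := by
  simp only [fbLaw, pathW, encW, Wn, ← Finset.prod_mul_distrib]
  exact Finset.prod_congr rfl fun i _ => by rw [hind]; ring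

theorem sum_fbLaw_Y [Fintype X] {W : X → Y → Z → ℝ} (hW : IsBC W)
    (hind : ∀ x y z, W x y z = margY W x y * margZ W x z)
    {n : ℕ} (Q : (i : ℕ) → (Fin i → X) → (Fin i → Y) → X → ℝ) (D : Finset (Fin n → Y)) :
    ∑ x, ∑ y ∈ D, ∑ z, fbLaw n W Q x y z = ∑ x, ∑ y ∈ D, pathW n Q (margY W) x y := by
  simp only [fbLaw_eq hind, ← Finset.mul_sum, (isPMF_Wn (isChannel_margZ hW) _).2, mul_one]

theorem sum_fbLaw_Z [Fintype X] {W : X → Y → Z → ℝ}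
    (hind : ∀ x y z, W x y z = margY W x y * margZ W x z)
    {n : ℕ} (Q : (i : ℕ) → (Fin i → X) → (Fin i → Y) → X → ℝ) (D : Finset (Fin n → Z)) :
    ∑ x, ∑ y, ∑ z ∈ D, fbLaw n W Q x y z
      = ∑ x, (∑ y, pathW n Q (margY W) x y) * ∑ z ∈ D, Wn (margZ W) n x z := by
  simp only [fbLaw_eq hind, ← Finset.mul_sum, ← Finset.sum_mul]

end Feedback

section Covering

/-- Soft covering: the output law of an input law `w` is approximated in total variation by the
average output of `N` codewords. -/
theorem soft_covering {A S : Type*} [Fintype A] [Fintype S] {w : A → ℝ} (hw : IsPMF w)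
    {V : A → S → ℝ} (hV : IsChannel V) {q : S → ℝ} (hq : IsPMF q) (hq0 : ∀ z, 0 < q z)
    {γ c ν : ℝ} (hγ0 : 0 ≤ γ) (hc : 0 < c) {N : ℕ} (hN : 0 < N) (hγ : γ ≤ N * c ^ 2)
    (hν : ∑ x, w x * ∑ z, V x z * (if γ * q z < V x z then 1 else 0) ≤ ν) :
    ∃ f : Fin N → A, ∑ z, |(N : ℝ)⁻¹ * ∑ j, V (f j) z - ∑ x, w x * V x z| ≤ 2 * ν + c := by
  have hNr : (0 : ℝ) < N := by exact_mod_cast hN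
  set R : A → S → ℝ := fun x z => V x z * (if γ * q z < V x z then 1 else 0) with hR
  set U : A → S → ℝ := fun x z => V x z - R x z with hU
  have hR0 : ∀ x z, 0 ≤ R x z := fun x z => mul_nonneg (hV.1 x z) (by split_ifs <;> norm_num)
  have hUsq : ∀ x z, U x z ^ 2 ≤ γ * q z * V x z := fun x z => by
    by_cases h : γ * q z < V x z
    · have hz : U x z = 0 := by simp [hU, hR, h]
      rw [hz]
      simpa using mul_nonneg (mul_nonneg hγ0 (hq0 z).le) (hV.1 x z)
    · have hz : U x z = V x z := by simp [hU, hR, h]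
      rw [hz, sq]
      exact mul_le_mul_of_nonneg_right (not_lt.1 h) (hV.1 x z)
  set p : S → ℝ := fun z => ∑ x, w x * V x z with hp
  set u : S → ℝ := fun z => ∑ x, w x * U x z with hu
  set r : S → ℝ := fun z => ∑ x, w x * R x z with hr
  have hpur : ∀ z, p z = u z + r z := fun z => by
    simp only [hp, hu, hr, ← Finset.sum_add_distrib, hU]
    exact Finset.sum_congr rfl fun x _ => by ring
  have hp0 : ∀ z, 0 ≤ p z := fun z => Finset.sum_nonneg fun x _ => mul_nonneg (hw.1 x) (hV.1 x z)
  have hsp : ∑ z, p z = 1 := (isPMF_outDist hw hV).2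
  have hsr : ∑ z, r z ≤ ν := by
    simp only [hr]
    rw [Finset.sum_comm]
    simpa only [← Finset.mul_sum] using hν
  have hf := isPMF_piW fun _ : Fin N => hw
  have hmean : ∀ (G : A → S → ℝ) (z : S),
      ∑ f : Fin N → A, piW (fun _ => w) f * ((N : ℝ)⁻¹ * ∑ j, G (f j) z) = ∑ x, w x * G x z := by
    intro G z
    have : ∀ f : Fin N → A, piW (fun _ => w) f * ((N : ℝ)⁻¹ * ∑ j, G (f j) z)
        = (N : ℝ)⁻¹ * ∑ j, piW (fun _ => w) f * G (f j) z := fun f => by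
      rw [← Finset.mul_sum]; ring
    simp only [this]
    rw [← Finset.mul_sum, Finset.sum_comm]
    simp only [sum_piW_mul_single (fun _ : Fin N => hw) _ (fun a => G a z)]
    simp [hNr.ne']
  have hvar : ∀ z, ∑ f : Fin N → A, piW (fun _ => w) f *
      ((N : ℝ)⁻¹ * ∑ j, U (f j) z - u z) ^ 2 ≤ c ^ 2 * q z * p z := by
    intro z
    have h0 : ∑ a, w a * (U a z - u z) = 0 := by
      simp only [mul_sub, Finset.sum_sub_distrib, ← Finset.sum_mul, hw.2, hu]; ring
    have h1 := sum_piW_mul_sq (ι := Fin N) (fun _ => hw) (fun _ a => U a z - u z) (fun _ => h0)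
    have h2 : ∑ a, w a * (U a z - u z) ^ 2 ≤ γ * q z * p z := by
      calc ∑ a, w a * (U a z - u z) ^ 2
          = ∑ a, w a * U a z ^ 2 - 2 * u z * ∑ a, w a * U a z + u z ^ 2 * ∑ a, w a := by
            simp only [Finset.mul_sum]
            rw [← Finset.sum_sub_distrib, ← Finset.sum_add_distrib]
            exact Finset.sum_congr rfl fun a _ => by ring
        _ ≤ ∑ a, w a * U a z ^ 2 := by
            rw [hw.2]
            change _ - 2 * u z * u z + _ ≤ _
            nlinarith [sq_nonneg (u z)]
        _ ≤ ∑ a, w a * (γ * q z * V a z) :=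
            Finset.sum_le_sum fun a _ => mul_le_mul_of_nonneg_left (hUsq a z) (hw.1 a)
        _ = _ := by
            simp only [hp, Finset.mul_sum]
            exact Finset.sum_congr rfl fun a _ => by ring
    have h3 : ∀ f : Fin N → A, piW (fun _ => w) f * ((N : ℝ)⁻¹ * ∑ j, U (f j) z - u z) ^ 2
        = ((N : ℝ)⁻¹) ^ 2 * (piW (fun _ => w) f * (∑ j, (U (f j) z - u z)) ^ 2) := fun f => by
      have hs : ∑ j, (U (f j) z - u z) = ∑ j, U (f j) z - N * u z := by
        rw [Finset.sum_sub_distrib (fun j => U (f j) z) (fun _ => u z)]; simp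
      have : (N : ℝ)⁻¹ * ∑ j, U (f j) z - u z = (N : ℝ)⁻¹ * (∑ j, U (f j) z - N * u z) := by
        field_simp
      rw [hs, this]; ring
    simp only [h3]
    rw [← Finset.mul_sum, h1, Finset.sum_const, Finset.card_univ, Fintype.card_fin, nsmul_eq_mul]
    have h4 : ((N : ℝ)⁻¹) ^ 2 * (N * ∑ a, w a * (U a z - u z) ^ 2)
        = (N : ℝ)⁻¹ * ∑ a, w a * (U a z - u z) ^ 2 := by field_simp
    rw [h4, inv_mul_le_iff₀ hNr]
    calc _ ≤ γ * q z * p z := h2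
      _ ≤ (N * c ^ 2) * q z * p z := by
        have := hp0 z; have := (hq0 z).le
        gcongr
      _ = _ := by ring
  refine hf.exists_le ?_
  calc ∑ f : Fin N → A, piW (fun _ => w) f * ∑ z, |(N : ℝ)⁻¹ * ∑ j, V (f j) z - p z|
      ≤ ∑ f : Fin N → A, piW (fun _ => w) f * ∑ z,
        ((((N : ℝ)⁻¹ * ∑ j, U (f j) z - u z) ^ 2 / (2 * c * q z) + c * q z / 2)
          + ((N : ℝ)⁻¹ * ∑ j, R (f j) z) + r z) := by
        refine Finset.sum_le_sum fun f _ => mul_le_mul_of_nonneg_left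
          (Finset.sum_le_sum fun z _ => ?_) (hf.1 f)
        have hsplit : (N : ℝ)⁻¹ * ∑ j, V (f j) z - p z
            = ((N : ℝ)⁻¹ * ∑ j, U (f j) z - u z) + ((N : ℝ)⁻¹ * ∑ j, R (f j) z) - r z := by
          rw [hpur]
          simp only [hU, Finset.sum_sub_distrib]
          ring
        have hR1 : 0 ≤ (N : ℝ)⁻¹ * ∑ j, R (f j) z :=
          mul_nonneg (by positivity) (Finset.sum_nonneg fun j _ => hR0 _ _)
        have hr1 : 0 ≤ r z := Finset.sum_nonneg fun x _ => mul_nonneg (hw.1 x) (hR0 x z)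
        have hquad : ∀ d : ℝ, |d| ≤ d ^ 2 / (2 * c * q z) + c * q z / 2 := fun d => by
          have hcq : 0 < c * q z := mul_pos hc (hq0 z)
          have : d ^ 2 / (2 * c * q z) + c * q z / 2 - |d|
              = (|d| - c * q z) ^ 2 / (2 * (c * q z)) := by
            have hqz := (hq0 z).ne'
            rw [sub_sq, sq_abs]; field_simp; ring
          have h2 : 0 ≤ (|d| - c * q z) ^ 2 / (2 * (c * q z)) := by positivity
          linarith
        rw [hsplit]
        have := hquad ((N : ℝ)⁻¹ * ∑ j, U (f j) z - u z)
        refine (abs_sub _ _).trans ?_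
        rw [abs_of_nonneg hr1]
        refine add_le_add ((abs_add_le _ _).trans ?_) le_rfl
        rw [abs_of_nonneg hR1]
        exact add_le_add this le_rfl
    _ = ∑ z, ((∑ f : Fin N → A, piW (fun _ => w) f * ((N : ℝ)⁻¹ * ∑ j, U (f j) z - u z) ^ 2)
          / (2 * c * q z) + c * q z / 2 + r z + r z) := by
        simp only [Finset.mul_sum (Finset.univ : Finset S)]
        rw [Finset.sum_comm]
        refine Finset.sum_congr rfl fun z _ => ?_
        simp only [mul_add, Finset.sum_add_distrib]
        rw [hmean R z, ← Finset.sum_mul, ← Finset.sum_mul, hf.2, Finset.sum_div]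
        simp only [mul_div_assoc, one_mul]
        rfl
    _ ≤ ∑ z, (c * p z / 2 + c * q z / 2 + r z + r z) := by
        refine Finset.sum_le_sum fun z _ => ?_
        have hcq : 0 < 2 * c * q z := mul_pos (by linarith) (hq0 z)
        have : (∑ f : Fin N → A, piW (fun _ => w) f * ((N : ℝ)⁻¹ * ∑ j, U (f j) z - u z) ^ 2)
          / (2 * c * q z) ≤ c * p z / 2 := by
          rw [div_le_iff₀ hcq]
          refine (hvar z).trans (le_of_eq ?_)
          ring
        linarith
    _ ≤ 2 * ν + c := by
        simp only [Finset.sum_add_distrib, ← Finset.sum_div, ← Finset.mul_sum, hsp, hq.2]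
        linarith

end Covering

section Counting

/-- Messages whose output falls, with probability exceeding the error level, in a fixed set `B`
are identified by the intersection of their decoding set with `B`. -/
theorem card_le_two_pow_of_concentrated {M Ω T : Type*} [Fintype M] [Fintype Ω] [DecidableEq T]
    {w : M → Ω → ℝ} (hw : ∀ m ω, 0 ≤ w m ω) (out : Ω → T) (A : Ω → Prop) (D : M → Finset T)
    (B : Finset T) {l1 l2 ν : ℝ}
    (h1 : ∀ m, ∑ ω, w m ω * (if out ω ∉ D m then 1 else 0) ≤ l1)
    (h2 : ∀ m m', m ≠ m' → ∑ ω, w m ω * (if out ω ∈ D m' then 1 else 0) ≤ l2)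
    (h3 : ∀ m, ∑ ω, w m ω * (if A ω ∧ out ω ∉ B then 1 else 0) ≤ ν) :
    #{m | l1 + l2 + ν < ∑ ω, w m ω * (if A ω then 1 else 0)} ≤ 2 ^ #B := by
  rw [← Finset.card_powerset]
  refine Finset.card_le_card_of_injOn (fun m => D m ∩ B)
    (fun m _ => Finset.mem_coe.2 (Finset.mem_powerset.2 Finset.inter_subset_right)) ?_
  intro m hm m' _ heq
  by_contra hne
  have hm := (Finset.mem_filter.1 hm).2
  have hle : ∑ ω, w m ω * (if A ω then 1 else 0)
      ≤ ∑ ω, (w m ω * (if out ω ∉ D m then 1 else 0) + w m ω * (if out ω ∈ D m' then 1 else 0)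
        + w m ω * (if A ω ∧ out ω ∉ B then 1 else 0)) := by
    refine Finset.sum_le_sum fun ω _ => ?_
    rw [← mul_add, ← mul_add]
    refine mul_le_mul_of_nonneg_left ?_ (hw m ω)
    have hiff : (out ω ∈ D m ∧ out ω ∈ B) ↔ (out ω ∈ D m' ∧ out ω ∈ B) := by
      simpa using Finset.ext_iff.1 heq (out ω)
    by_cases hA : A ω <;> by_cases hB : out ω ∈ B <;> by_cases hD : out ω ∈ D m <;>
      by_cases hD' : out ω ∈ D m' <;> simp_all
  rw [Finset.sum_add_distrib, Finset.sum_add_distrib] at hle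
  linarith [h1 m, h2 m m' hne, h3 m]

/-- Messages whose input law charges a set on which soft covering with `N` codewords succeeds
are identified by the corresponding codeword tuples. -/
theorem card_le_of_covering {M A S : Type*} [Fintype M] [Fintype A] [Nonempty A] [Fintype S]
    [DecidableEq S]
    {Q : M → A → ℝ} (hQ : ∀ m, IsPMF (Q m)) {V : A → S → ℝ} (hV : IsChannel V)
    (D : M → Finset S) (G : A → Prop) {q : S → ℝ} (hq : IsPMF q) (hq0 : ∀ z, 0 < q z)
    {γ c ν l1 l2 β : ℝ} (hγ0 : 0 ≤ γ) (hc : 0 < c) {N : ℕ} (hN : 0 < N) (hγ : γ ≤ N * c ^ 2)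
    (h1 : ∀ m, ∑ x, Q m x * ∑ z ∈ (D m)ᶜ, V x z ≤ l1)
    (h2 : ∀ m m', m ≠ m' → ∑ x, Q m x * ∑ z ∈ D m', V x z ≤ l2)
    (hG : ∀ x, G x → ∑ z, V x z * (if γ * q z < V x z then 1 else 0) ≤ ν)
    (hβ : 0 < β) (hsmall : l1 + l2 + 2 * β * (2 * ν + c) < β) :
    #{m | β < ∑ x, Q m x * (if G x then 1 else 0)} ≤ Fintype.card A ^ N := by
  set b : M → ℝ := fun m => ∑ x, Q m x * (if G x then 1 else 0) with hb
  have hex : ∀ m, β < b m → ∃ f : Fin N → A,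
      ∑ z, |(N : ℝ)⁻¹ * ∑ j, V (f j) z - ∑ x, ((b m)⁻¹ * (Q m x * (if G x then 1 else 0))) * V x z|
        ≤ 2 * ν + c := by
    intro m hm
    have hbm : 0 < b m := hβ.trans hm
    have hp : IsPMF fun x => (b m)⁻¹ * (Q m x * (if G x then 1 else 0)) := by
      refine ⟨fun x => mul_nonneg (inv_pos.2 hbm).le (mul_nonneg ((hQ m).1 x)
        (by split_ifs <;> norm_num)), ?_⟩
      rw [← Finset.mul_sum]
      exact inv_mul_cancel₀ hbm.ne'
    refine soft_covering hp hV hq hq0 hγ0 hc hN hγ ?_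
    calc _ ≤ ∑ x, (b m)⁻¹ * (Q m x * (if G x then 1 else 0)) * ν := by
          refine Finset.sum_le_sum fun x _ => ?_
          by_cases hx : G x
          · exact mul_le_mul_of_nonneg_left (hG x hx) (hp.1 x)
          · simp [hx]
      _ = ν := by rw [← Finset.sum_mul, hp.2, one_mul]
  choose! F hF using hex
  have hcard : Fintype.card A ^ N = #(Finset.univ : Finset (Fin N → A)) := by simp
  rw [hcard]
  refine Finset.card_le_card_of_injOn F (fun m _ => Finset.mem_coe.2 (Finset.mem_univ _)) ?_
  intro m hm m' hm' heq
  by_contra hne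
  have hm := (Finset.mem_filter.1 hm).2
  have hm' := (Finset.mem_filter.1 hm').2
  set u : S → ℝ := fun z => (N : ℝ)⁻¹ * ∑ j, V (F m j) z with hu
  set p : M → S → ℝ := fun m z =>
    ∑ x, ((b m)⁻¹ * (Q m x * (if G x then 1 else 0))) * V x z with hp
  have hpD : ∀ (m : M) (E : Finset S), β < b m →
      ∑ z ∈ E, p m z ≤ β⁻¹ * ∑ x, Q m x * ∑ z ∈ E, V x z := by
    intro m E hbm
    have hle : (b m)⁻¹ ≤ β⁻¹ := inv_anti₀ hβ hbm.le
    simp only [hp]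
    rw [Finset.sum_comm, Finset.mul_sum]
    refine Finset.sum_le_sum fun x _ => ?_
    rw [← Finset.mul_sum, mul_assoc]
    have hV0 : 0 ≤ ∑ z ∈ E, V x z := Finset.sum_nonneg fun z _ => hV.1 x z
    refine mul_le_mul hle ?_ ?_ (inv_pos.2 hβ).le
    · refine mul_le_mul_of_nonneg_right ?_ hV0
      split_ifs <;> simp [(hQ m).1 x]
    · refine mul_nonneg (mul_nonneg ((hQ m).1 x) ?_) hV0
      split_ifs <;> norm_num
  have hp1 : ∑ z, p m z = 1 := by
    have hbm : 0 < b m := hβ.trans hm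
    simp only [hp]
    rw [Finset.sum_comm]
    simp only [← Finset.mul_sum, hV.2, mul_one]
    exact inv_mul_cancel₀ hbm.ne'
  have hd : ∀ z, p m z - p m' z ≤ |u z - p m z| + |u z - p m' z| := fun z => by
    have h1 := neg_abs_le (u z - p m z)
    have h2 := le_abs_self (u z - p m' z)
    linarith
  have hsum : ∑ z ∈ D m, (p m z - p m' z) ≤ 2 * (2 * ν + c) := by
    calc ∑ z ∈ D m, (p m z - p m' z) ≤ ∑ z ∈ D m, (|u z - p m z| + |u z - p m' z|) :=
          Finset.sum_le_sum fun z _ => hd z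
      _ ≤ ∑ z, (|u z - p m z| + |u z - p m' z|) :=
          Finset.sum_le_sum_of_subset_of_nonneg (Finset.subset_univ _)
            fun z _ _ => by positivity
      _ ≤ 2 * (2 * ν + c) := by
          rw [Finset.sum_add_distrib]
          have e1 := hF m hm
          have e2 := hF m' hm'
          rw [← heq] at e2
          linarith
  rw [Finset.sum_sub_distrib] at hsum
  have e1 := hpD m (D m)ᶜ hm
  have e2 := hpD m' (D m) hm'
  have e3 := Finset.sum_add_sum_compl (D m) (p m)
  have e4 := mul_le_mul_of_nonneg_left (h1 m) (inv_pos.2 hβ).le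
  have e5 := mul_le_mul_of_nonneg_left (h2 m' m (Ne.symm hne)) (inv_pos.2 hβ).le
  have e6 : 1 ≤ β⁻¹ * (l1 + l2) + 2 * (2 * ν + c) := by linarith
  have e7 := mul_le_mul_of_nonneg_left e6 hβ.le
  have e8 : β * (β⁻¹ * (l1 + l2) + 2 * (2 * ν + c)) = l1 + l2 + 2 * β * (2 * ν + c) := by
    field_simp
  linarith

end Counting

section Types

variable {X Y : Type*} [Fintype X]

/-- The empirical distribution of a sequence. -/
def typeOf {n : ℕ} (x : Fin n → X) (a : X) : ℝ := (n : ℝ)⁻¹ * #{i | x i = a}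

theorem natCast_mul_sum_typeOf_mul {n : ℕ} (hn : 0 < n) (x : Fin n → X) (g : X → ℝ) :
    n * ∑ a, typeOf x a * g a = ∑ i, g (x i) := by
  have hn' : (n : ℝ) ≠ 0 := by exact_mod_cast hn.ne'
  have h : ∀ i, g (x i) = ∑ a, (if x i = a then 1 else 0) * g a := fun i => by simp
  simp only [h]
  rw [Finset.sum_comm, Finset.mul_sum]
  refine Finset.sum_congr rfl fun a _ => ?_
  rw [typeOf, ← Finset.sum_mul, Finset.sum_boole]
  field_simp

theorem isPMF_typeOf {n : ℕ} (hn : 0 < n) (x : Fin n → X) : IsPMF (typeOf x) := by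
  have hn' : (n : ℝ) ≠ 0 := by exact_mod_cast hn.ne'
  refine ⟨fun a => by unfold typeOf; positivity, ?_⟩
  have h := natCast_mul_sum_typeOf_mul hn x fun _ => 1
  simp only [mul_one, Finset.sum_const, Finset.card_univ, Fintype.card_fin, nsmul_eq_mul] at h
  exact mul_left_cancel₀ hn' (by rw [h, mul_one])

theorem card_image_typeOf_le (n : ℕ) :
    #(Finset.univ.image fun x : Fin n → X => typeOf x) ≤ (n + 1) ^ Fintype.card X := by
  have h : Finset.univ.image (fun x : Fin n → X => typeOf x) ⊆
      Finset.univ.image fun c : X → Fin (n + 1) => fun a => (n : ℝ)⁻¹ * ((c a).1 : ℝ) := by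
    intro T hT
    obtain ⟨x, -, rfl⟩ := Finset.mem_image.1 hT
    refine Finset.mem_image.2 ⟨fun a => ⟨#{i | x i = a}, Nat.lt_succ_of_le ?_⟩,
      Finset.mem_univ _, rfl⟩
    exact (Finset.card_le_univ _).trans (by simp)
  refine (Finset.card_le_card h).trans (Finset.card_image_le.trans ?_)
  simp

theorem isPMF_of_mem_image_typeOf {n : ℕ} (hn : 0 < n) {T : X → ℝ}
    (hT : T ∈ Finset.univ.image fun x : Fin n → X => typeOf x) : IsPMF T := by
  obtain ⟨x, -, rfl⟩ := Finset.mem_image.1 hT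
  exact isPMF_typeOf hn x

variable [Fintype Y]

/-- The mixture over types of the smoothed product output laws. -/
def univOut (s : ℝ) (V : X → Y → ℝ) (n : ℕ) (y : Fin n → Y) : ℝ :=
  (#(Finset.univ.image fun x : Fin n → X => typeOf x) : ℝ)⁻¹ *
    ∑ T ∈ Finset.univ.image (fun x : Fin n → X => typeOf x), piW (fun _ => smoothOut s T V) y

variable [Nonempty Y] {s : ℝ} {V : X → Y → ℝ} {n : ℕ}

theorem smoothOut_pos (hs0 : 0 < s) (hs1 : s < 1) (hV : IsChannel V) {P : X → ℝ} (hP : IsPMF P)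
    (y : Y) : 0 < smoothOut s P V y := by
  have hc : (0 : ℝ) < Fintype.card Y := by exact_mod_cast Fintype.card_pos
  exact (by positivity : 0 < s * (Fintype.card Y : ℝ)⁻¹).trans_le (le_smoothOut hs1 hP hV y)

variable [Nonempty X]

theorem card_image_typeOf_pos (n : ℕ) :
    (0 : ℝ) < #(Finset.univ.image fun x : Fin n → X => typeOf x) := by
  exact_mod_cast Finset.card_pos.2 (Finset.univ_nonempty.image _)

theorem univOut_pos (hs0 : 0 < s) (hs1 : s < 1) (hV : IsChannel V) (hn : 0 < n)
    (y : Fin n → Y) : 0 < univOut s V n y :=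
  mul_pos (inv_pos.2 (card_image_typeOf_pos n)) (Finset.sum_pos (fun _ hT =>
    Finset.prod_pos fun i _ => smoothOut_pos hs0 hs1 hV (isPMF_of_mem_image_typeOf hn hT) (y i))
    (Finset.univ_nonempty.image _))

theorem isPMF_univOut (hs0 : 0 < s) (hs1 : s < 1) (hV : IsChannel V) (hn : 0 < n) :
    IsPMF (univOut s V n) := by
  refine ⟨fun y => (univOut_pos hs0 hs1 hV hn y).le, ?_⟩
  simp only [univOut]
  rw [← Finset.mul_sum, Finset.sum_comm, Finset.sum_congr rfl fun T hT =>
    (isPMF_piW (ι := Fin n) fun _ =>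
      isPMF_smoothOut hs0 hs1 (isPMF_of_mem_image_typeOf hn hT) hV).2]
  simp only [Finset.sum_const, nsmul_eq_mul, mul_one]
  exact inv_mul_cancel₀ (card_image_typeOf_pos n).ne'

theorem log_univOut_ge (hs0 : 0 < s) (hs1 : s < 1) (hV : IsChannel V) (hn : 0 < n)
    (x : Fin n → X) (y : Fin n → Y) :
    ∑ i, Real.log (smoothOut s (typeOf x) V (y i)) - Fintype.card X * Real.log (n + 1)
      ≤ Real.log (univOut s V n y) := by
  have hpos : ∀ T ∈ Finset.univ.image (fun x : Fin n → X => typeOf x),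
      0 < piW (fun _ : Fin n => smoothOut s T V) y := fun T hT =>
    Finset.prod_pos fun i _ => smoothOut_pos hs0 hs1 hV (isPMF_of_mem_image_typeOf hn hT) (y i)
  have hx : typeOf x ∈ Finset.univ.image (fun x : Fin n → X => typeOf x) :=
    Finset.mem_image_of_mem _ (Finset.mem_univ x)
  have hn1 : (0 : ℝ) < (n + 1) ^ Fintype.card X := by positivity
  have h1 : ((n + 1 : ℝ) ^ Fintype.card X)⁻¹ * piW (fun _ : Fin n => smoothOut s (typeOf x) V) y
      ≤ univOut s V n y := by
    refine mul_le_mul (inv_anti₀ (card_image_typeOf_pos n) ?_)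
      (Finset.single_le_sum (fun T hT => (hpos T hT).le) hx) (hpos _ hx).le
      (inv_pos.2 (card_image_typeOf_pos n)).le
    exact_mod_cast card_image_typeOf_le n
  have h2 := Real.log_le_log (mul_pos (inv_pos.2 hn1) (hpos _ hx)) h1
  rw [Real.log_mul (inv_pos.2 hn1).ne' (hpos _ hx).ne', Real.log_inv, Real.log_pow, piW,
    Real.log_prod fun i _ =>
      (smoothOut_pos hs0 hs1 hV (isPMF_typeOf hn x) (y i)).ne'] at h2
  linarith

end Types

section Concentration

variable {X Y : Type*} [Fintype X] [Fintype Y]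

theorem exists_mul_log_succ_le (k : ℝ) {ε : ℝ} (hε : 0 < ε) :
    ∃ n₀ : ℕ, ∀ n ≥ n₀, k * Real.log ((n : ℝ) + 1) ≤ n * ε := by
  have h := ((Real.isLittleO_log_id_atTop.const_mul_left k).bound (half_pos hε)).and
    (Filter.eventually_ge_atTop 1)
  have ht : Filter.Tendsto (fun n : ℕ => (n : ℝ) + 1) Filter.atTop Filter.atTop :=
    Filter.tendsto_atTop_add_const_right _ _ tendsto_natCast_atTop_atTop
  obtain ⟨n₀, hn₀⟩ := Filter.eventually_atTop.1 (ht.eventually h)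
  refine ⟨n₀ + 1, fun n hn => ?_⟩
  have h1 := (hn₀ n (by omega)).1
  have hn1 : (1 : ℝ) ≤ n := by exact_mod_cast (by omega : 1 ≤ n)
  have h2 := (le_abs_self _).trans h1
  simp only [id, Real.norm_eq_abs, abs_of_pos (by positivity : (0 : ℝ) < n + 1)] at h2
  nlinarith

theorem IsPMF.abs_sum_mul_le {w : Y → ℝ} (hw : IsPMF w) {g : Y → ℝ} {C : ℝ}
    (hg : ∀ b, |g b| ≤ C) : |∑ b, w b * g b| ≤ C :=
  calc |∑ b, w b * g b| ≤ ∑ b, |w b * g b| := Finset.abs_sum_le_sum_abs _ _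
    _ ≤ ∑ b, w b * C := Finset.sum_le_sum fun b _ => by
        rw [abs_mul, abs_of_nonneg (hw.1 b)]
        exact mul_le_mul_of_nonneg_left (hg b) (hw.1 b)
    _ = C := by rw [← Finset.sum_mul, hw.2, one_mul]

theorem exists_eventually_div_le (C : ℝ) {ν : ℝ} (hν : 0 < ν) :
    ∃ n₀ : ℕ, ∀ n ≥ n₀, C / n ≤ ν := by
  have := (tendsto_const_div_atTop_nhds_zero_nat C).eventually_le_const hν
  exact Filter.eventually_atTop.1 this

variable [Nonempty X] [Nonempty Y] {V : X → Y → ℝ} {s : ℝ}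

/-- The information density of a memoryless channel relative to the universal output law is,
with high probability, at most the mutual information of the input type. -/
theorem information_density_concentration (hV : IsChannel V) (hs0 : 0 < s) (hs1 : s < 1)
    {ε ν : ℝ} (hε : 0 < ε) (hs : -Real.log (1 - s) ≤ ε / 4) (hν : 0 < ν) :
    ∃ n₀ : ℕ, ∀ n ≥ n₀, ∀ x : Fin n → X, ∑ y, Wn V n x y *
      (if Real.exp (n * (mutInf (typeOf x) V + ε)) * univOut s V n y < Wn V n x y
        then 1 else 0) ≤ ν := by
  set C : ℝ := ∑ a, ∑ b, |Real.log (V a b)| + -Real.log (s * (Fintype.card Y : ℝ)⁻¹) with hC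
  obtain ⟨n₁, hn₁⟩ := exists_mul_log_succ_le (Fintype.card X) (by positivity : 0 < ε / 4)
  obtain ⟨n₂, hn₂⟩ := exists_eventually_div_le ((2 * C) ^ 2 / (ε / 2) ^ 2) hν
  refine ⟨max (max n₁ n₂) 1, fun n hn x => ?_⟩
  have hn0 : 0 < n := by omega
  have hnR : (0 : ℝ) < n := by exact_mod_cast hn0
  have hT := isPMF_typeOf hn0 x
  set g : X → Y → ℝ := fun a b => Real.log (V a b) - Real.log (smoothOut s (typeOf x) V b) with hg
  set m : X → ℝ := fun a => ∑ b, V a b * g a b with hm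
  have hgC : ∀ a b, |g a b| ≤ C := fun a b => by
    refine (abs_sub _ _).trans (add_le_add ?_ (abs_log_smoothOut_le hs0 hs1 hT hV b))
    exact (Finset.single_le_sum (f := fun b => |Real.log (V a b)|) (fun _ _ => abs_nonneg _)
      (Finset.mem_univ b)).trans (Finset.single_le_sum
        (f := fun a => ∑ b, |Real.log (V a b)|)
        (fun _ _ => Finset.sum_nonneg fun _ _ => abs_nonneg _) (Finset.mem_univ a))
  have hrow : ∀ a, IsPMF (V a) := fun a => ⟨hV.1 a, hV.2 a⟩
  have hmC : ∀ a, |m a| ≤ C := fun a => (hrow a).abs_sum_mul_le (hgC a)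
  have hC0 : 0 ≤ C := (abs_nonneg _).trans (hmC (Classical.arbitrary X))
  have hvar : ∑ y, Wn V n x y * (∑ i, (g (x i) (y i) - m (x i))) ^ 2 ≤ n * (2 * C) ^ 2 := by
    rw [Wn_eq_piW, sum_piW_mul_sq (fun i => hrow (x i)) (fun i b => g (x i) b - m (x i))]
    · calc _ ≤ ∑ i : Fin n, ∑ b, V (x i) b * (2 * C) ^ 2 := by
            refine Finset.sum_le_sum fun i _ => Finset.sum_le_sum fun b _ =>
              mul_le_mul_of_nonneg_left ?_ (hV.1 _ _)
            refine sq_le_sq' ?_ ?_ <;>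
              linarith [abs_le.1 (hgC (x i) b), abs_le.1 (hmC (x i))]
        _ = n * (2 * C) ^ 2 := by
            simp [← Finset.sum_mul, hV.2]
    · intro i
      simp only [mul_sub, Finset.sum_sub_distrib, ← Finset.sum_mul, hV.2, one_mul]
      exact sub_self _
  have hcheb := chebyshev_weights (isPMF_Wn hV x).1 _ (by positivity : 0 < n * (ε / 2)) hvar
  have hmean : ∑ i, m (x i) ≤ n * (mutInf (typeOf x) V + ε / 4) := by
    rw [← natCast_mul_sum_typeOf_mul hn0]
    refine mul_le_mul_of_nonneg_left ?_ hnR.le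
    have h := sum_mul_log_sub_log_smoothOut_le hs0 hs1 hT hV
    simp only [mul_assoc, ← Finset.mul_sum] at h
    linarith
  calc _ ≤ ∑ y, Wn V n x y *
        (if n * (ε / 2) ≤ |∑ i, (g (x i) (y i) - m (x i))| then 1 else 0) := by
        refine Finset.sum_le_sum fun y _ =>
          mul_le_mul_of_nonneg_left ?_ ((isPMF_Wn hV x).1 y)
        by_cases hev : Real.exp (n * (mutInf (typeOf x) V + ε)) * univOut s V n y < Wn V n x y
        · rw [if_pos hev, if_pos]
          have hu := univOut_pos hs0 hs1 hV hn0 y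
          have hW0 : Wn V n x y ≠ 0 := ((mul_pos (Real.exp_pos _) hu).trans hev).ne'
          have h1 := Real.log_lt_log (mul_pos (Real.exp_pos _) hu) hev
          rw [Real.log_mul (Real.exp_pos _).ne' hu.ne', Real.log_exp, Wn,
            Real.log_prod fun i hi => (Finset.prod_ne_zero_iff.1 hW0 i hi)] at h1
          have h2 := log_univOut_ge hs0 hs1 hV hn0 x y
          have h3 := hn₁ n (by omega)
          refine le_trans ?_ (le_abs_self _)
          simp only [hg, Finset.sum_sub_distrib]
          nlinarith
        · rw [if_neg hev]
          split_ifs <;> norm_num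
    _ ≤ _ := hcheb
    _ = (2 * C) ^ 2 / (ε / 2) ^ 2 / n := by field_simp
    _ ≤ ν := hn₂ n (by omega)

/-- With feedback, the universal output law is, with high probability, at least
`exp (-n H)` at the output, `H` being the output entropy of the type of the transmitted
sequence. -/
theorem output_concentration (hV : IsChannel V) (hs0 : 0 < s) (hs1 : s < 1)
    {ε ν : ℝ} (hε : 0 < ε) (hs : -Real.log (1 - s) ≤ ε / 4) (hν : 0 < ν) :
    ∃ n₀ : ℕ, ∀ n ≥ n₀, ∀ Q : (i : ℕ) → (Fin i → X) → (Fin i → Y) → X → ℝ,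
      IsFBEncoder n Q → ∑ x, ∑ y, pathW n Q V x y *
      (if univOut s V n y < Real.exp (-(n * (entH (outDist (typeOf x) V) + ε)))
        then 1 else 0) ≤ ν := by
  set C : ℝ := |Real.log (s * (Fintype.card Y : ℝ)⁻¹)| + 1 with hC
  have hC0 : 0 < C := by positivity
  have hY : (0 : ℝ) < Fintype.card Y := by exact_mod_cast Fintype.card_pos
  set κ : ℝ := ε / 2 / (C * Fintype.card Y) with hκ
  have hκ0 : 0 < κ := by positivity
  obtain ⟨n₁, hn₁⟩ := exists_mul_log_succ_le (Fintype.card X) (by positivity : 0 < ε / 4)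
  obtain ⟨n₂, hn₂⟩ := exists_eventually_div_le (Fintype.card Y / κ ^ 2) hν
  refine ⟨max (max n₁ n₂) 1, fun n hn Q hQ => ?_⟩
  have hn0 : 0 < n := by omega
  have hnR : (0 : ℝ) < n := by exact_mod_cast hn0
  set h : Y → X → Y → ℝ := fun b a y => (if y = b then 1 else 0) - V a b with hh
  have hVle : ∀ a b, V a b ≤ 1 := fun a b => IsPMF.le_one ⟨hV.1 a, hV.2 a⟩ b
  have hdev : ∀ b, ∑ p : (Fin n → X) × (Fin n → Y), pathW n Q V p.1 p.2 *
      (if n * κ ≤ |∑ i, h b (p.1 i) (p.2 i)| then 1 else 0) ≤ n / (n * κ) ^ 2 := fun b => by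
    refine chebyshev_weights (w := fun p : (Fin n → X) × (Fin n → Y) => pathW n Q V p.1 p.2)
      (fun p => pathW_nonneg hQ hV p.1 p.2)
      (fun p => ∑ i, h b (p.1 i) (p.2 i)) (by positivity) ?_
    rw [Fintype.sum_prod_type]
    refine sum_pathW_mul_sq_le hQ hV (fun a => ?_) fun a y => ?_
    · simp only [hh, mul_sub, Finset.sum_sub_distrib, ← Finset.sum_mul, hV.2]
      simp
    · have h1 := hV.1 a b
      have h2 := hVle a b
      simp only [hh]
      split_ifs <;> nlinarith
  have key : ∀ (x : Fin n → X) (y : Fin n → Y),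
      (if univOut s V n y < Real.exp (-(n * (entH (outDist (typeOf x) V) + ε))) then 1 else 0)
      ≤ ∑ b, (if n * κ ≤ |∑ i, h b (x i) (y i)| then (1 : ℝ) else 0) := by
    intro x y
    have hind0 : ∀ b, 0 ≤ (if n * κ ≤ |∑ i, h b (x i) (y i)| then (1 : ℝ) else 0) := fun b => by
      split_ifs <;> norm_num
    by_cases hev : univOut s V n y < Real.exp (-(n * (entH (outDist (typeOf x) V) + ε)))
    · rw [if_pos hev]
      have hT := isPMF_typeOf hn0 x
      have hex : ∃ b, n * κ ≤ |∑ i, h b (x i) (y i)| := by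
        by_contra! hlt
        have hu := univOut_pos hs0 hs1 hV hn0 y
        have h1 := Real.log_lt_log hu hev
        rw [Real.log_exp] at h1
        have h2 := log_univOut_ge hs0 hs1 hV hn0 x y
        have h3 := hn₁ n (by omega)
        set l : Y → ℝ := fun b => -Real.log (smoothOut s (typeOf x) V b) with hl
        have hlC : ∀ b, |l b| ≤ C := fun b => by
          rw [hl, abs_neg]
          refine (abs_log_smoothOut_le hs0 hs1 hT hV b).trans ?_
          rw [hC]
          linarith [neg_le_abs (Real.log (s * (Fintype.card Y : ℝ)⁻¹))]
        have hsplit : ∑ i, l (y i)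
            = ∑ b, (∑ i, h b (x i) (y i)) * l b + n * ∑ b, outDist (typeOf x) V b * l b := by
          have e1 : ∀ b, n * outDist (typeOf x) V b = ∑ i, V (x i) b := fun b =>
            natCast_mul_sum_typeOf_mul hn0 x fun a => V a b
          rw [Finset.mul_sum, ← Finset.sum_add_distrib]
          have e2 : ∀ b, (∑ i, h b (x i) (y i)) * l b + n * (outDist (typeOf x) V b * l b)
              = ∑ i, (if y i = b then 1 else 0) * l b := fun b => by
            rw [← mul_assoc, e1 b, ← add_mul, ← Finset.sum_add_distrib, ← Finset.sum_mul]
            congr 1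
            exact Finset.sum_congr rfl fun i _ => by simp only [hh]; ring
          rw [Finset.sum_congr rfl fun b _ => e2 b, Finset.sum_comm]
          simp
        have h4 := sum_outDist_mul_neg_log_smoothOut_le hs0 hs1 hT hV
        have h5 : ∑ b, (∑ i, h b (x i) (y i)) * l b ≤ n * (ε / 2) := by
          calc ∑ b, (∑ i, h b (x i) (y i)) * l b ≤ ∑ _b : Y, n * κ * C := by
                refine Finset.sum_le_sum fun b _ => (le_abs_self _).trans ?_
                rw [abs_mul]
                exact mul_le_mul (hlt b).le (hlC b) (abs_nonneg _) (by positivity)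
            _ = n * (ε / 2) := by
                rw [Finset.sum_const, Finset.card_univ, nsmul_eq_mul, hκ]
                field_simp
        have h6 : ∑ i, l (y i) = -∑ i, Real.log (smoothOut s (typeOf x) V (y i)) := by
          simp [hl]
        have h7 : ∑ b, outDist (typeOf x) V b * l b ≤ entH (outDist (typeOf x) V) + ε / 4 :=
          h4.trans (by linarith)
        have h8 := mul_le_mul_of_nonneg_left h7 hnR.le
        nlinarith
      obtain ⟨b, hb⟩ := hex
      have := Finset.single_le_sum (fun b _ => hind0 b) (Finset.mem_univ b)
      rwa [if_pos hb] at this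
    · rw [if_neg hev]
      exact Finset.sum_nonneg fun b _ => hind0 b
  calc _ ≤ ∑ x, ∑ y, pathW n Q V x y *
        ∑ b, (if n * κ ≤ |∑ i, h b (x i) (y i)| then (1 : ℝ) else 0) :=
        Finset.sum_le_sum fun x _ => Finset.sum_le_sum fun y _ =>
          mul_le_mul_of_nonneg_left (key x y) (pathW_nonneg hQ hV x y)
    _ = ∑ b, ∑ p : (Fin n → X) × (Fin n → Y), pathW n Q V p.1 p.2 *
        (if n * κ ≤ |∑ i, h b (p.1 i) (p.2 i)| then 1 else 0) := by
        rw [Finset.sum_comm (s := (Finset.univ : Finset Y)), Fintype.sum_prod_type]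
        simp only [Finset.mul_sum]
    _ ≤ ∑ _b : Y, n / (n * κ) ^ 2 := Finset.sum_le_sum fun b _ => hdev b
    _ = Fintype.card Y / κ ^ 2 / n := by
        rw [Finset.sum_const, Finset.card_univ, nsmul_eq_mul]
        field_simp
    _ ≤ ν := hn₂ n (by omega)

end Concentration

section Converse

theorem exists_linear_mul_exp_le (a b c : ℝ) {R d : ℝ} (hR : 0 < R) (hd : 0 < d) :
    ∃ n₀ : ℕ, ∀ n : ℕ, n ≥ n₀ →
      a * n * Real.exp (n * (R - d)) + b * n + c ≤ Real.exp (n * R) := by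
  have hlt : ∀ {t : ℝ}, 0 < t → Real.exp (-t) < 1 := fun ht => by
    rw [Real.exp_lt_one_iff]; linarith
  have h1 := (tendsto_self_mul_const_pow_of_lt_one (Real.exp_pos _).le (hlt hd)).const_mul a
  have h2 := (tendsto_self_mul_const_pow_of_lt_one (Real.exp_pos _).le (hlt hR)).const_mul b
  have h3 := (tendsto_pow_atTop_nhds_zero_of_lt_one (Real.exp_pos _).le (hlt hR)).const_mul c
  have h := (h1.add h2).add h3
  simp only [mul_zero, add_zero] at h
  obtain ⟨n₀, hn₀⟩ := Filter.eventually_atTop.1 (h.eventually_le_const one_pos)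
  refine ⟨n₀, fun n hn => ?_⟩
  have h4 := mul_le_mul_of_nonneg_right (hn₀ n hn) (Real.exp_pos (n * R)).le
  simp only [← Real.exp_nat_mul, add_mul, mul_assoc, ← Real.exp_add, one_mul] at h4
  have e1 : (n : ℝ) * -d + n * R = n * (R - d) := by ring
  have e2 : (n : ℝ) * -R + n * R = 0 := by ring
  rw [e1, e2, Real.exp_zero, mul_one, mul_one] at h4
  linarith

theorem exp_exp_le_of_le_log_log {n k : ℕ} (hn : 0 < n) {R : ℝ} (hR : 0 < R)
    (h : R ≤ (1 / n) * Real.log (Real.log k)) : Real.exp (Real.exp (n * R)) ≤ k := by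
  have hn' : (0 : ℝ) < n := by exact_mod_cast hn
  have h1 : n * R ≤ Real.log (Real.log k) := by
    rw [one_div, inv_mul_eq_div, le_div_iff₀ hn'] at h
    linarith
  have hk : 0 < Real.log k := by
    rcases (Real.log_natCast_nonneg k).eq_or_lt with h0 | h0
    · rw [← h0, Real.log_zero] at h1
      nlinarith [mul_pos hn' hR]
    · exact h0
  have hk0 : (0 : ℝ) < k := by
    rcases Nat.eq_zero_or_pos k with h0 | h0
    · simp [h0] at hk
    · exact_mod_cast h0
  rwa [← Real.le_log_iff_exp_le hk0, ← Real.le_log_iff_exp_le hk]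

theorem inv_mul_sum_le_add {k : ℕ} (hk : 0 < k) {a : Fin k → ℝ} (h1 : ∀ m, a m ≤ 1)
    {β c : ℝ} (hβ : 0 ≤ β) (hcard : (#{m | β < a m} : ℝ) ≤ c * k) :
    (k : ℝ)⁻¹ * ∑ m, a m ≤ β + c := by
  have hk' : (0 : ℝ) < k := by exact_mod_cast hk
  rw [inv_mul_le_iff₀ hk']
  calc ∑ m, a m ≤ ∑ m, (β + if β < a m then 1 else 0) := Finset.sum_le_sum fun m _ => by
        split_ifs with h
        · linarith [h1 m]
        · linarith
    _ ≤ k * (β + c) := by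
        rw [Finset.sum_add_distrib, Finset.sum_boole]
        simp only [Finset.sum_const, Finset.card_univ, Fintype.card_fin, nsmul_eq_mul]
        linarith

theorem exists_smoothing_parameter {ε : ℝ} (hε : 0 < ε) :
    ∃ s : ℝ, 0 < s ∧ s < 1 ∧ -Real.log (1 - s) ≤ ε :=
  ⟨1 - Real.exp (-ε), by
    have : Real.exp (-ε) < 1 := by rw [Real.exp_lt_one_iff]; linarith
    linarith, by linarith [Real.exp_pos (-ε)], by simp⟩

variable {X Y : Type*} [Fintype X] [Fintype Y] [Nonempty X] [Nonempty Y] {V : X → Y → ℝ}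

/-- Identification over a channel: the transmitted sequence rarely has a type of mutual
information below the identification rate. -/
theorem converse_without_feedback (hV : IsChannel V) {R δ : ℝ} (hR : 0 < R) (hδ : 0 < δ) :
    ∃ n₀ : ℕ, ∀ n ≥ n₀, ∀ (k : ℕ) (q : Fin k → (Fin n → X) → ℝ) (D : Fin k → Finset (Fin n → Y)),
      (∀ m, IsPMF (q m)) → (∀ m, ∑ x, q m x * ∑ y ∈ (D m)ᶜ, Wn V n x y ≤ 1 / 32) →
      (∀ m m', m ≠ m' → ∑ x, q m x * ∑ y ∈ D m', Wn V n x y ≤ 1 / 32) →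
      R ≤ (1 / n) * Real.log (Real.log k) →
      (k : ℝ)⁻¹ * ∑ m, ∑ x, q m x * (if mutInf (typeOf x) V < R - δ then 1 else 0) ≤ 3 / 8 := by
  obtain ⟨s, hs0, hs1, hs⟩ := exists_smoothing_parameter (by positivity : 0 < δ / 2 / 4)
  obtain ⟨n₁, hn₁⟩ := information_density_concentration hV hs0 hs1 (half_pos hδ) hs
    (by norm_num : (0 : ℝ) < 1 / 32)
  set L := Real.log (Fintype.card X) with hL
  have hL0 : 0 ≤ L := Real.log_natCast_nonneg _
  obtain ⟨n₂, hn₂⟩ := exists_linear_mul_exp_le (1024 * L) L 7 hR (half_pos hδ)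
  refine ⟨max (max n₁ n₂) 1, fun n hn k q D hq h1 h2 hk => ?_⟩
  have hn0 : 0 < n := by omega
  have hkk := exp_exp_le_of_le_log_log hn0 hR hk
  have hk0 : 0 < k := by
    have : (0 : ℝ) < k := (Real.exp_pos _).trans_le hkk
    exact_mod_cast this
  set γ := Real.exp (n * (R - δ / 2)) with hγ
  set N := ⌈1024 * γ⌉₊ with hN
  have hγ0 : 0 < γ := Real.exp_pos _
  have hN0 : 0 < N := Nat.ceil_pos.2 (by positivity)
  have hcard := card_le_of_covering (β := 1 / 4) (l1 := 1 / 32) (l2 := 1 / 32) hq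
    (V := fun x => Wn V n x) ⟨fun x => (isPMF_Wn hV x).1, fun x => (isPMF_Wn hV x).2⟩ D
    (fun x => mutInf (typeOf x) V < R - δ) (isPMF_univOut hs0 hs1 hV hn0)
    (univOut_pos hs0 hs1 hV hn0) hγ0.le (by norm_num : (0 : ℝ) < 1 / 32) hN0
    (by linarith [Nat.le_ceil (1024 * γ)]) h1 h2 (ν := 1 / 32) (fun x hx => by
      refine le_trans (Finset.sum_le_sum fun z _ =>
        mul_le_mul_of_nonneg_left ?_ ((isPMF_Wn hV x).1 z)) (hn₁ n (by omega) x)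
      have hle : Real.exp (n * (mutInf (typeOf x) V + δ / 2)) ≤ γ := by
        refine Real.exp_le_exp.2 (mul_le_mul_of_nonneg_left ?_ (Nat.cast_nonneg n))
        linarith
      have hle' := mul_le_mul_of_nonneg_right hle (univOut_pos hs0 hs1 hV hn0 z).le
      split_ifs with ha hb
      · exact le_rfl
      · exact absurd (hle'.trans_lt ha) hb
      · exact zero_le_one
      · exact le_rfl) (by norm_num) (by norm_num)
  refine (inv_mul_sum_le_add hk0 (β := 1 / 4) (c := 1 / 8) (fun m => ?_) (by norm_num)
    ?_).trans (by norm_num)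
  · refine le_trans ?_ (hq m).2.le
    refine Finset.sum_le_sum fun x _ => mul_le_of_le_one_right ((hq m).1 x) ?_
    split_ifs <;> norm_num
  · have hX : (0 : ℝ) < Fintype.card X := by exact_mod_cast Fintype.card_pos
    have hpow : ((Fintype.card (Fin n → X) ^ N : ℕ) : ℝ) = Real.exp (n * N * L) := by
      rw [Fintype.card_fun, Fintype.card_fin]
      push_cast
      rw [← pow_mul, ← Nat.cast_mul, hL, Real.exp_nat_mul, Real.exp_log hX]
    calc _ ≤ ((Fintype.card (Fin n → X) ^ N : ℕ) : ℝ) := by exact_mod_cast hcard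
      _ = Real.exp (n * N * L) := hpow
      _ ≤ 1 / 8 * Real.exp (n * N * L + 7) := by
          rw [Real.exp_add]
          have : (8 : ℝ) ≤ Real.exp 7 := by linarith [Real.add_one_le_exp (7 : ℝ)]
          nlinarith [Real.exp_pos (n * N * L)]
      _ ≤ 1 / 8 * Real.exp (Real.exp (n * R)) := by
          refine mul_le_mul_of_nonneg_left (Real.exp_le_exp.2 ?_) (by norm_num)
          refine le_trans ?_ (hn₂ n (by omega))
          have hNle : (N : ℝ) ≤ 1024 * γ + 1 := (Nat.ceil_lt_add_one (by positivity)).le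
          have := mul_le_mul_of_nonneg_left hNle (mul_nonneg (Nat.cast_nonneg n) hL0)
          linarith
      _ ≤ 1 / 8 * k := mul_le_mul_of_nonneg_left hkk (by norm_num)

theorem card_filter_exp_neg_le {T : Type*} [Fintype T] {q : T → ℝ} (hq : IsPMF q) (h : ℝ) :
    (#{y | Real.exp (-h) ≤ q y} : ℝ) ≤ Real.exp h := by
  have h1 : (#{y | Real.exp (-h) ≤ q y} : ℝ) * Real.exp (-h) ≤ 1 := by
    rw [← nsmul_eq_mul, ← hq.2]
    refine (Finset.card_nsmul_le_sum _ _ _ fun y hy => (Finset.mem_filter.1 hy).2).trans ?_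
    exact Finset.sum_le_sum_of_subset_of_nonneg (Finset.subset_univ _) fun y _ _ => hq.1 y
  have h2 := mul_le_mul_of_nonneg_right h1 (Real.exp_pos h).le
  rwa [mul_assoc, ← Real.exp_add, neg_add_cancel, Real.exp_zero, mul_one, one_mul] at h2

/-- Identification over a channel with feedback: the transmitted sequence rarely has a type of
output entropy below the identification rate. -/
theorem converse_with_feedback (hV : IsChannel V) {R δ : ℝ} (hR : 0 < R) (hδ : 0 < δ) :
    ∃ n₀ : ℕ, ∀ n ≥ n₀, ∀ (k l : ℕ)
      (Q : Fin k → Fin l → (i : ℕ) → (Fin i → X) → (Fin i → Y) → X → ℝ)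
      (D : Fin k → Finset (Fin n → Y)), 0 < l → (∀ m j, IsFBEncoder n (Q m j)) →
      (∀ m, (l : ℝ)⁻¹ * ∑ j, ∑ x, ∑ y ∈ (D m)ᶜ, pathW n (Q m j) V x y ≤ 1 / 32) →
      (∀ m m', m ≠ m' → (l : ℝ)⁻¹ * ∑ j, ∑ x, ∑ y ∈ D m', pathW n (Q m j) V x y ≤ 1 / 32) →
      R ≤ (1 / n) * Real.log (Real.log k) →
      (k : ℝ)⁻¹ * ∑ m, (l : ℝ)⁻¹ * ∑ j, ∑ x, ∑ y, pathW n (Q m j) V x y *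
        (if entH (outDist (typeOf x) V) < R - δ then 1 else 0) ≤ 1 / 4 := by
  obtain ⟨s, hs0, hs1, hs⟩ := exists_smoothing_parameter (by positivity : 0 < δ / 2 / 4)
  obtain ⟨n₁, hn₁⟩ := output_concentration hV hs0 hs1 (half_pos hδ) hs
    (by norm_num : (0 : ℝ) < 1 / 32)
  obtain ⟨n₂, hn₂⟩ := exists_linear_mul_exp_le 1 0 7 hR (half_pos hδ)
  refine ⟨max (max n₁ n₂) 1, fun n hn k l Q D hl hQ h1 h2 hk => ?_⟩
  have hn0 : 0 < n := by omega
  have hn1 : (1 : ℝ) ≤ n := by exact_mod_cast hn0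
  have hkk := exp_exp_le_of_le_log_log hn0 hR hk
  have hk0 : 0 < k := by
    have : (0 : ℝ) < k := (Real.exp_pos _).trans_le hkk
    exact_mod_cast this
  have hl' : (0 : ℝ) < l := by exact_mod_cast hl
  set w : Fin k → (Fin n → X) × (Fin n → Y) → ℝ :=
    fun m p => (l : ℝ)⁻¹ * ∑ j, pathW n (Q m j) V p.1 p.2 with hw
  have hw0 : ∀ m p, 0 ≤ w m p := fun m p => mul_nonneg (inv_pos.2 hl').le
    (Finset.sum_nonneg fun j _ => pathW_nonneg (hQ m j) hV _ _)
  have hwsum : ∀ m (g : (Fin n → X) → (Fin n → Y) → ℝ), ∑ p, w m p * g p.1 p.2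
      = (l : ℝ)⁻¹ * ∑ j, ∑ x, ∑ y, pathW n (Q m j) V x y * g x y := by
    intro m g
    simp only [hw, mul_assoc, ← Finset.mul_sum, Finset.sum_mul]
    rw [Finset.sum_comm]
    simp only [Fintype.sum_prod_type]
  have hwD : ∀ m (E : Finset (Fin n → Y)), ∑ p, w m p * (if p.2 ∈ E then 1 else 0)
      = (l : ℝ)⁻¹ * ∑ j, ∑ x, ∑ y ∈ E, pathW n (Q m j) V x y := fun m E => by
    rw [hwsum m fun _ y => if y ∈ E then 1 else 0]
    simp only [mul_ite, mul_one, mul_zero, Finset.sum_ite_mem, Finset.univ_inter]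
  have havg : ∀ m (g : (Fin n → X) → (Fin n → Y) → ℝ) (c : ℝ),
      (∀ j, ∑ x, ∑ y, pathW n (Q m j) V x y * g x y ≤ c) → ∑ p, w m p * g p.1 p.2 ≤ c := by
    intro m g c h
    rw [hwsum, inv_mul_le_iff₀ hl']
    calc _ ≤ ∑ _j : Fin l, c := Finset.sum_le_sum fun j _ => h j
      _ = l * c := by simp
  set G : (Fin n → X) → Prop := fun x => entH (outDist (typeOf x) V) < R - δ with hG
  set B : Finset (Fin n → Y) :=
    Finset.univ.filter fun y => Real.exp (-(n * (R - δ / 2))) ≤ univOut s V n y with hB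
  have hcard := card_le_two_pow_of_concentrated hw0 (fun p => p.2) (fun p => G p.1) D B
    (l1 := 1 / 32) (l2 := 1 / 32) (ν := 1 / 32)
    (fun m => by
      refine le_trans (le_of_eq ?_) (h1 m)
      rw [← hwD m (D m)ᶜ]
      simp only [Finset.mem_compl])
    (fun m m' hne => by rw [hwD]; exact h2 m m' hne)
    (fun m => by
      refine havg m (fun x y => if G x ∧ y ∉ B then 1 else 0) _ fun j => ?_
      refine le_trans (Finset.sum_le_sum fun x _ => Finset.sum_le_sum fun y _ =>
        mul_le_mul_of_nonneg_left ?_ (pathW_nonneg (hQ m j) hV x y)) (hn₁ n (by omega) _ (hQ m j))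
      split_ifs with ha hb
      · exact le_rfl
      · refine absurd ?_ hb
        have h3 : univOut s V n y < Real.exp (-(n * (R - δ / 2))) := by
          simpa [hB] using ha.2
        refine h3.trans_le (Real.exp_le_exp.2 (neg_le_neg
          (mul_le_mul_of_nonneg_left ?_ (Nat.cast_nonneg n))))
        linarith [ha.1]
      · exact zero_le_one
      · exact le_rfl)
  have hkey : ∀ m, (l : ℝ)⁻¹ * ∑ j, ∑ x, ∑ y, pathW n (Q m j) V x y *
      (if G x then 1 else 0) = ∑ p, w m p * (if G p.1 then 1 else 0) := fun m =>
    (hwsum m fun x _ => if G x then 1 else 0).symm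
  rw [Finset.sum_congr rfl fun m _ => hkey m]
  refine (inv_mul_sum_le_add hk0 (β := 1 / 32 + 1 / 32 + 1 / 32) (c := 1 / 8) (fun m => ?_)
    (by norm_num) ?_).trans (by norm_num)
  · refine havg m (fun x _ => if G x then 1 else 0) _ fun j => ?_
    refine le_trans ?_ (sum_pathW (hQ m j) hV).le
    refine Finset.sum_le_sum fun x _ => Finset.sum_le_sum fun y _ =>
      mul_le_of_le_one_right (pathW_nonneg (hQ m j) hV x y) ?_
    split_ifs <;> norm_num
  · have hBc : (#B : ℝ) ≤ Real.exp (n * (R - δ / 2)) :=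
      card_filter_exp_neg_le (isPMF_univOut hs0 hs1 hV hn0) _
    calc _ ≤ (2 : ℝ) ^ #B := by exact_mod_cast hcard
      _ ≤ Real.exp #B := by
          rw [Real.exp_one_pow #B |>.symm]
          exact pow_le_pow_left₀ (by norm_num) (by linarith [Real.add_one_le_exp (1 : ℝ)]) _
      _ ≤ 1 / 8 * Real.exp (#B + 7) := by
          rw [Real.exp_add]
          have : (8 : ℝ) ≤ Real.exp 7 := by linarith [Real.add_one_le_exp (7 : ℝ)]
          nlinarith [Real.exp_pos (#B : ℝ)]
      _ ≤ 1 / 8 * Real.exp (Real.exp (n * R)) := by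
          refine mul_le_mul_of_nonneg_left (Real.exp_le_exp.2 ?_) (by norm_num)
          refine le_trans ?_ (hn₂ n (by omega))
          nlinarith [Real.exp_pos (n * (R - δ / 2))]
      _ ≤ 1 / 8 * k := mul_le_mul_of_nonneg_left hkk (by norm_num)

end Converse

section Outer

variable {X Y Z : Type*} [Fintype X] [Fintype Y] [Fintype Z] [Nonempty X]
  {W : X → Y → Z → ℝ}

theorem pos_of_rate {n k : ℕ} {R : ℝ} (hn : 0 < n) (hR : 0 ≤ R)
    (h : (0 < R → R ≤ (1 / n) * Real.log (Real.log k)) ∧ (R = 0 → k = 1)) : 0 < k := by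
  rcases hR.eq_or_lt with h0 | h0
  · rw [h.2 h0.symm]; exact one_pos
  · have h1 := (Real.exp_pos _).trans_le (exp_exp_le_of_le_log_log hn h0 (h.1 h0))
    exact_mod_cast h1

/-- Over a channel with identical rows nothing can be identified. -/
theorem FBAchievable.fst_eq_zero (hW : IsBC W)
    (hind : ∀ x y z, W x y z = margY W x y * margZ W x z) {Rp : ℝ × ℝ} (h : FBAchievable W Rp)
    (hconst : ∀ a a' b, margY W a b = margY W a' b) : Rp.1 = 0 := by
  obtain ⟨hR1, hR2, hach⟩ := h
  by_contra hne
  have hpos : 0 < Rp.1 := lt_of_le_of_ne hR1 (Ne.symm hne)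
  have hVY := isChannel_margY hW
  obtain ⟨n₀, hn₀⟩ := hach (1 / 4) (1 / 4) (1 / 4) (1 / 4) (by norm_num) (by norm_num)
    (by norm_num) (by norm_num)
  set n := max n₀ 1 with hn
  have hn0 : 0 < n := by omega
  obtain ⟨kY, kZ, Q, DY, DZ, ⟨hQ, hY1, hY2, -, -⟩, hrY, hrZ⟩ := hn₀ n (by omega)
  simp only [sum_fbLaw_Y hW hind] at hY1 hY2
  have hkZ' : (0 : ℝ) < kZ := by exact_mod_cast pos_of_rate hn0 hR2 hrZ
  have hkY : 1 < kY := by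
    have h1 := exp_exp_le_of_le_log_log hn0 hpos (hrY.1 hpos)
    have h2 : (1 : ℝ) < Real.exp (Real.exp (n * Rp.1)) :=
      Real.one_lt_exp_iff.2 (Real.exp_pos _)
    exact_mod_cast h2.trans_le h1
  set x₀ : Fin n → X := fun _ => Classical.arbitrary X with hx₀
  have hpath : ∀ my mz (E : Finset (Fin n → Y)), ∑ x, ∑ y ∈ E, pathW n (Q my mz) (margY W) x y
      = ∑ y ∈ E, Wn (margY W) n x₀ y := by
    intro my mz E
    rw [Finset.sum_comm]
    refine Finset.sum_congr rfl fun y _ => ?_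
    have hWn : ∀ x, Wn (margY W) n x y = Wn (margY W) n x₀ y := fun x =>
      Finset.prod_congr rfl fun i _ => hconst _ _ _
    simp only [pathW, hWn, ← Finset.sum_mul, sum_encW (hQ my mz), one_mul]
  simp only [hpath, Finset.sum_const, Finset.card_univ, Fintype.card_fin, nsmul_eq_mul,
    inv_mul_cancel_left₀ hkZ'.ne'] at hY1 hY2
  have h1 := hY1 ⟨0, by omega⟩
  have h2 := hY2 ⟨1, hkY⟩ ⟨0, by omega⟩ (by simp)
  have h3 := Finset.sum_add_sum_compl (DY ⟨0, by omega⟩) (Wn (margY W) n x₀)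
  rw [(isPMF_Wn hVY x₀).2] at h3
  linarith

variable [Nonempty Y] [Nonempty Z]

/-- Every achievable pair is approximated by the bounds evaluated at some type. -/
theorem FBAchievable.exists_isPMF (hW : IsBC W)
    (hind : ∀ x y z, W x y z = margY W x y * margZ W x z) {Rp : ℝ × ℝ} (h : FBAchievable W Rp)
    {δ : ℝ} (hδ : 0 < δ) :
    ∃ P, IsPMF P ∧ Rp.1 ≤ entH (outDist P (margY W)) + δ ∧ Rp.2 ≤ mutInf P (margZ W) + δ := by
  obtain ⟨hR1, hR2, hach⟩ := h
  have hVY := isChannel_margY hW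
  have hVZ := isChannel_margZ hW
  obtain ⟨n₀, hn₀⟩ := hach (1 / 32) (1 / 32) (1 / 32) (1 / 32) (by norm_num) (by norm_num)
    (by norm_num) (by norm_num)
  have hY : ∃ n₁ : ℕ, ∀ n ≥ n₁, 0 < Rp.1 → ∀ (k l : ℕ)
      (Q : Fin k → Fin l → (i : ℕ) → (Fin i → X) → (Fin i → Y) → X → ℝ)
      (D : Fin k → Finset (Fin n → Y)), 0 < l → (∀ m j, IsFBEncoder n (Q m j)) →
      (∀ m, (l : ℝ)⁻¹ * ∑ j, ∑ x, ∑ y ∈ (D m)ᶜ, pathW n (Q m j) (margY W) x y ≤ 1 / 32) →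
      (∀ m m', m ≠ m' →
        (l : ℝ)⁻¹ * ∑ j, ∑ x, ∑ y ∈ D m', pathW n (Q m j) (margY W) x y ≤ 1 / 32) →
      Rp.1 ≤ (1 / n) * Real.log (Real.log k) →
      (k : ℝ)⁻¹ * ∑ m, (l : ℝ)⁻¹ * ∑ j, ∑ x, ∑ y, pathW n (Q m j) (margY W) x y *
        (if entH (outDist (typeOf x) (margY W)) < Rp.1 - δ then 1 else 0) ≤ 1 / 4 := by
    by_cases hpos : 0 < Rp.1
    · obtain ⟨n₁, hn₁⟩ := converse_with_feedback hVY hpos hδ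
      exact ⟨n₁, fun n hn _ => hn₁ n hn⟩
    · exact ⟨0, fun n _ h0 => absurd h0 hpos⟩
  have hZ : ∃ n₂ : ℕ, ∀ n ≥ n₂, 0 < Rp.2 → ∀ (k : ℕ) (q : Fin k → (Fin n → X) → ℝ)
      (D : Fin k → Finset (Fin n → Z)), (∀ m, IsPMF (q m)) →
      (∀ m, ∑ x, q m x * ∑ y ∈ (D m)ᶜ, Wn (margZ W) n x y ≤ 1 / 32) →
      (∀ m m', m ≠ m' → ∑ x, q m x * ∑ y ∈ D m', Wn (margZ W) n x y ≤ 1 / 32) →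
      Rp.2 ≤ (1 / n) * Real.log (Real.log k) →
      (k : ℝ)⁻¹ * ∑ m, ∑ x, q m x *
        (if mutInf (typeOf x) (margZ W) < Rp.2 - δ then 1 else 0) ≤ 3 / 8 := by
    by_cases hpos : 0 < Rp.2
    · obtain ⟨n₁, hn₁⟩ := converse_without_feedback hVZ hpos hδ
      exact ⟨n₁, fun n hn _ => hn₁ n hn⟩
    · exact ⟨0, fun n _ h0 => absurd h0 hpos⟩
  obtain ⟨n₁, hn₁⟩ := hY
  obtain ⟨n₂, hn₂⟩ := hZ
  set n := max (max n₀ (max n₁ n₂)) 1 with hn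
  have hn0 : 0 < n := by omega
  obtain ⟨kY, kZ, Q, DY, DZ, ⟨hQ, hY1, hY2, hZ1, hZ2⟩, hrY, hrZ⟩ := hn₀ n (by omega)
  simp only [sum_fbLaw_Y hW hind] at hY1 hY2
  simp only [sum_fbLaw_Z hind] at hZ1 hZ2
  have hkY := pos_of_rate hn0 hR1 hrY
  have hkZ := pos_of_rate hn0 hR2 hrZ
  have hkY' : (0 : ℝ) < kY := by exact_mod_cast hkY
  have hkZ' : (0 : ℝ) < kZ := by exact_mod_cast hkZ
  set a : (Fin n → X) → ℝ :=
    fun x => if entH (outDist (typeOf x) (margY W)) < Rp.1 - δ then 1 else 0 with ha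
  set b : (Fin n → X) → ℝ :=
    fun x => if mutInf (typeOf x) (margZ W) < Rp.2 - δ then 1 else 0 with hb
  set q : Fin kZ → (Fin n → X) → ℝ :=
    fun mz x => (kY : ℝ)⁻¹ * ∑ my, ∑ y, pathW n (Q my mz) (margY W) x y with hq
  have hqg : ∀ mz (g : (Fin n → X) → ℝ), ∑ x, q mz x * g x
      = (kY : ℝ)⁻¹ * ∑ my, ∑ x, (∑ y, pathW n (Q my mz) (margY W) x y) * g x := by
    intro mz g
    simp only [hq, mul_assoc, ← Finset.mul_sum, Finset.sum_mul]
    rw [Finset.sum_comm]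
  have hqP : ∀ mz, IsPMF (q mz) := fun mz => by
    refine ⟨fun x => mul_nonneg (inv_pos.2 hkY').le (Finset.sum_nonneg fun my _ =>
      Finset.sum_nonneg fun y _ => pathW_nonneg (hQ my mz) hVY x y), ?_⟩
    have h := hqg mz fun _ => 1
    simp only [mul_one] at h
    rw [h, Finset.sum_congr rfl fun my _ => sum_pathW (hQ my mz) hVY]
    simp [hkY'.ne']
  have hSY : (kY : ℝ)⁻¹ * ∑ my, (kZ : ℝ)⁻¹ * ∑ mz, ∑ x, ∑ y,
      pathW n (Q my mz) (margY W) x y * a x ≤ 1 / 4 := by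
    rcases hR1.eq_or_lt with h0 | h0
    · have ha0 : ∀ x, a x = 0 := fun x => if_neg (by
        have := entH_nonneg (isPMF_outDist (isPMF_typeOf hn0 x) hVY)
        linarith)
      simp [ha0]
    · exact hn₁ n (by omega) h0 kY kZ Q DY hkZ hQ hY1 hY2 (hrY.1 h0)
  have hSZ : (kZ : ℝ)⁻¹ * ∑ mz, ∑ x, q mz x * b x ≤ 3 / 8 := by
    rcases hR2.eq_or_lt with h0 | h0
    · have hb0 : ∀ x, b x = 0 := fun x => if_neg (by
        have := mutInf_nonneg (isPMF_typeOf hn0 x) hVZ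
        linarith)
      simp only [hb0, mul_zero, Finset.sum_const_zero]
      norm_num
    · exact hn₂ n (by omega) h0 kZ q DZ hqP
        (fun m => by rw [hqg]; exact hZ1 m)
        (fun m m' hne => by rw [hqg]; exact hZ2 m m' hne) (hrZ.1 h0)
  by_contra! hno
  have hab : ∀ x, 1 ≤ a x + b x := fun x => by
    have h1 := hno (typeOf x) (isPMF_typeOf hn0 x)
    by_cases hx : entH (outDist (typeOf x) (margY W)) < Rp.1 - δ
    · simp only [ha, hb, if_pos hx]
      split_ifs <;> norm_num
    · have h2 : mutInf (typeOf x) (margZ W) < Rp.2 - δ := by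
        have := h1 (by linarith)
        linarith
      simp only [ha, hb, if_pos h2]
      split_ifs; norm_num
  have hcomm : (kY : ℝ)⁻¹ * ∑ my, (kZ : ℝ)⁻¹ * ∑ mz, ∑ x, ∑ y,
      pathW n (Q my mz) (margY W) x y * a x = (kZ : ℝ)⁻¹ * ∑ mz, ∑ x, q mz x * a x := by
    rw [← Finset.mul_sum, Finset.sum_comm]
    simp only [hqg, ← Finset.mul_sum, Finset.sum_mul]
    ring
  rw [hcomm] at hSY
  have hone : (kZ : ℝ)⁻¹ * ∑ mz, ∑ x, q mz x * 1 ≤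
      (kZ : ℝ)⁻¹ * ∑ mz, ∑ x, q mz x * (a x + b x) :=
    mul_le_mul_of_nonneg_left (Finset.sum_le_sum fun mz _ => Finset.sum_le_sum fun x _ =>
      mul_le_mul_of_nonneg_left (hab x) ((hqP mz).1 x)) (inv_pos.2 hkZ').le
  simp only [mul_one, (hqP _).2, mul_add, Finset.sum_add_distrib, Finset.sum_const,
    Finset.card_univ, Fintype.card_fin, nsmul_eq_mul, inv_mul_cancel₀ hkZ'.ne'] at hone
  linarith

theorem closure_fbAchievable_subset (hW : IsBC W)
    (hind : ∀ x y z, W x y z = margY W x y * margZ W x z) :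
    closure {p : ℝ × ℝ | FBAchievable W p}
      ⊆ {p : ℝ × ℝ | 0 ≤ p.1 ∧ 0 ≤ p.2 ∧
          ∃ P : X → ℝ, IsPMF P ∧
            p.1 ≤ (if ∃ P' : X → ℝ, IsPMF P' ∧ 0 < mutInf P' (margY W) then
                      entH (outDist P (margY W)) else 0) ∧
            p.2 ≤ mutInf P (margZ W)} := by
  intro p hp
  have hcl : IsClosed {p : ℝ × ℝ | 0 ≤ p.1 ∧ 0 ≤ p.2} :=
    (isClosed_le continuous_const continuous_fst).inter
      (isClosed_le continuous_const continuous_snd)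
  have hnn : p ∈ {p : ℝ × ℝ | 0 ≤ p.1 ∧ 0 ≤ p.2} :=
    closure_minimal (by rintro q ⟨h1, h2, -⟩; exact ⟨h1, h2⟩) hcl hp
  have hVZ := isChannel_margZ hW
  have happrox : ∀ δ > 0, ∃ q, FBAchievable W q ∧ p.1 ≤ q.1 + δ ∧ p.2 ≤ q.2 + δ := by
    intro δ hδ
    obtain ⟨q, hq, hd⟩ := Metric.mem_closure_iff.1 hp δ hδ
    rw [Prod.dist_eq, max_lt_iff, Real.dist_eq, Real.dist_eq] at hd
    exact ⟨q, hq, by linarith [le_abs_self (p.1 - q.1)], by linarith [le_abs_self (p.2 - q.2)]⟩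
  refine ⟨hnn.1, hnn.2, ?_⟩
  split_ifs with hnt
  · refine exists_isPMF_of_approx (f := fun P => entH (outDist P (margY W)))
      (continuous_entH.comp (continuous_outDist _)).continuousOn (continuousOn_mutInf hVZ)
      fun δ hδ => ?_
    obtain ⟨q, hq, h1, h2⟩ := happrox (δ / 2) (half_pos hδ)
    obtain ⟨P, hP, h3, h4⟩ := hq.exists_isPMF hW hind (half_pos hδ)
    exact ⟨P, hP, by linarith, by linarith⟩
  · refine exists_isPMF_of_approx (f := fun _ => 0) continuousOn_const
      (continuousOn_mutInf hVZ) fun δ hδ => ?_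
    obtain ⟨q, hq, h1, h2⟩ := happrox (δ / 2) (half_pos hδ)
    obtain ⟨P, hP, -, h4⟩ := hq.exists_isPMF hW hind (half_pos hδ)
    have hconst : ∀ a a' b, margY W a b = margY W a' b := by
      rw [exists_mutInf_pos_iff (isChannel_margY hW)] at hnt
      push Not at hnt
      exact hnt
    have h0 := hq.fst_eq_zero hW hind hconst
    exact ⟨P, hP, by linarith, by linarith⟩

end Outer

section RandomCoding

/-- The union bound, as an existence statement. -/
theorem IsPMF.exists_forall_not {A ι : Type*} [Fintype A] [Fintype ι] {w : A → ℝ} (hw : IsPMF w)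
    (E : ι → A → Prop) {b : ι → ℝ} (hE : ∀ i, ∑ a, w a * (if E i a then 1 else 0) ≤ b i)
    (hb : ∑ i, b i < 1) : ∃ a, ∀ i, ¬E i a := by
  obtain ⟨a, ha⟩ := hw.exists_le (g := fun a => ∑ i, if E i a then 1 else 0) (c := ∑ i, b i) (by
    simp only [Finset.mul_sum]
    rw [Finset.sum_comm]
    exact Finset.sum_le_sum fun i _ => hE i)
  refine ⟨a, fun i hi => ?_⟩
  have h := Finset.single_le_sum (f := fun i => if E i a then (1 : ℝ) else 0)
    (fun i _ => by split_ifs <;> norm_num) (Finset.mem_univ i)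
  simp only [if_pos hi] at h
  linarith

variable {A S T : Type*} [Fintype A] [Fintype S] [Fintype T]

/-- Random functions into a small set have few collisions under a law that is nearly flat. -/
theorem exists_hash {p : S → ℝ} (hp : IsPMF p) {B : S → Prop} {K lam : ℝ} (hK : 0 < K)
    (hB : ∀ y, B y → p y ≤ K⁻¹) {k L : ℕ} (hL : 0 < L) (hlam : 4 ≤ lam * L)
    (hk : (k : ℝ) ^ 2 * Real.exp (-(K * lam / 2)) < 1) :
    ∃ F : Fin k → S → Fin L, ∀ m m', m ≠ m' →
      ∑ y, p y * (if B y ∧ F m y = F m' y then 1 else 0) ≤ lam := by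
  have hL' : (0 : ℝ) < L := by exact_mod_cast hL
  have hu : IsPMF fun _ : Fin L => (L : ℝ)⁻¹ :=
    ⟨fun _ => (inv_pos.2 hL').le, by simp [hL'.ne']⟩
  have hw : IsPMF (piW fun _ : S => fun _ : Fin L => (L : ℝ)⁻¹) := isPMF_piW fun _ => hu
  obtain ⟨F, hF⟩ := (isPMF_piW (ι := Fin k) fun _ => hw).exists_forall_not
    (ι := Fin k × Fin k)
    (fun i F => i.1 ≠ i.2 ∧
      lam < ∑ y, p y * (if B y ∧ F i.1 y = F i.2 y then 1 else 0))
    (b := fun _ => Real.exp (-(K * lam / 2))) (fun ⟨m, m'⟩ => by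
      by_cases hne : m = m'
      · simp [hne, Real.exp_nonneg]
      simp only [hne, ne_eq, not_false_eq_true, true_and]
      rw [sum_piW_mul_pair (fun _ => hw) hne fun a b =>
        if lam < ∑ y, p y * (if B y ∧ a y = b y then 1 else 0) then 1 else 0]
      have hin : ∀ a : S → Fin L, ∑ b, piW (fun _ : S => fun _ : Fin L => (L : ℝ)⁻¹) b *
          (if lam < ∑ y, p y * (if B y ∧ a y = b y then 1 else 0) then 1 else 0)
          ≤ Real.exp (-(K * lam / 2)) := fun a => by
        have hch := piW_chernoff (ι := S) (fun _ => hu)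
          (fun y b => K * p y * (if B y ∧ a y = b then 1 else 0))
          (fun y b => mul_nonneg (mul_nonneg hK.le (hp.1 y)) (by split_ifs <;> norm_num))
          (fun y b => by
            split_ifs with h
            · rw [mul_one]
              have := mul_le_mul_of_nonneg_left (hB y h.1) hK.le
              rwa [mul_inv_cancel₀ hK.ne'] at this
            · simp)
          (μ := K * lam / 4) (t := K * lam) (by
            calc _ ≤ ∑ y, (L : ℝ)⁻¹ * (K * p y) := by
                  refine Finset.sum_le_sum fun y _ => ?_
                  rw [← Finset.mul_sum, ← Finset.mul_sum]
                  refine mul_le_mul_of_nonneg_left ?_ (inv_pos.2 hL').le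
                  refine mul_le_of_le_one_right (mul_nonneg hK.le (hp.1 y)) ?_
                  by_cases hy : B y <;> simp [hy]
              _ = (L : ℝ)⁻¹ * K := by rw [← Finset.mul_sum, ← Finset.mul_sum, hp.2, mul_one]
              _ ≤ K * lam / 4 := by
                  rw [inv_mul_le_iff₀ hL']
                  nlinarith)
        rw [show 2 * (K * lam / 4) - K * lam = -(K * lam / 2) by ring] at hch
        simp only [mul_assoc, ← Finset.mul_sum, mul_lt_mul_iff_right₀ hK] at hch
        exact hch
      calc _ ≤ ∑ a, piW (fun _ : S => fun _ : Fin L => (L : ℝ)⁻¹) a *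
            Real.exp (-(K * lam / 2)) := Finset.sum_le_sum fun a _ =>
            mul_le_mul_of_nonneg_left (hin a) (hw.1 a)
        _ = Real.exp (-(K * lam / 2)) := by rw [← Finset.sum_mul, hw.2, one_mul])
    (by
      simp only [Finset.sum_const, Finset.card_univ, Fintype.card_prod, Fintype.card_fin,
        nsmul_eq_mul]
      push_cast
      rwa [← sq])
  refine ⟨F, fun m m' hne => ?_⟩
  have h := hF (m, m')
  simp only [ne_eq, hne, not_false_eq_true, true_and, not_lt] at h
  exact h

/-- Random ID codebooks: each message is a uniform mixture of `N` random codewords, and the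
average over the messages of their laws through a second channel stays nearly flat. -/
theorem exists_codebook {P : A → ℝ} (hP : IsPMF P) {V : A → S → ℝ} (hV : IsChannel V)
    {U : A → T → ℝ} (hU : IsChannel U) (good : A → S → Prop) (B : T → Prop)
    {lam ν θ K : ℝ} {k N : ℕ} (hk : 0 < k) (hN : 0 < N)
    (h1 : ∑ x, P x * ∑ z, V x z * (if good x z then 0 else 1) ≤ lam / 4)
    (h2 : ∀ x, ∑ z, outDist P V z * (if good x z then 1 else 0) ≤ θ) (hθ : N * θ ≤ lam / 4)
    (hB : ∀ y, B y → outDist P U y ≤ K⁻¹ / 4)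
    (hBc : ∑ y, outDist P U y * (if B y then 0 else 1) ≤ ν / 4)
    (hbound : 2 * (k : ℝ) ^ 2 * Real.exp (-(N * lam / 2))
      + Fintype.card T * Real.exp (-(k * K⁻¹ / 2)) + Real.exp (-(k * ν / 2)) < 1) :
    ∃ F : Fin k → Fin N → A,
      (∀ m, (N : ℝ)⁻¹ * ∑ j, ∑ z, V (F m j) z * (if ∃ i, good (F m i) z then 0 else 1) ≤ lam) ∧
      (∀ m m', m ≠ m' →
        (N : ℝ)⁻¹ * ∑ j, ∑ z, V (F m j) z * (if ∃ i, good (F m' i) z then 1 else 0) ≤ lam) ∧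
      (∀ y, B y → (k : ℝ)⁻¹ * ∑ m, (N : ℝ)⁻¹ * ∑ j, U (F m j) y ≤ K⁻¹) ∧
      (k : ℝ)⁻¹ * ∑ m, (N : ℝ)⁻¹ * ∑ j, ∑ y, U (F m j) y * (if B y then 0 else 1) ≤ ν := by
  have hk' : (0 : ℝ) < k := by exact_mod_cast hk
  have hN' : (0 : ℝ) < N := by exact_mod_cast hN
  set w : (Fin N → A) → ℝ := piW fun _ => P with hwdef
  have hw : IsPMF w := isPMF_piW fun _ => hP
  set D : (Fin N → A) → S → Prop := fun c z => ∃ l, good (c l) z with hD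
  have hV01 : ∀ x (g : S → Prop), 0 ≤ ∑ z, V x z * (if g z then (1 : ℝ) else 0) ∧
      ∑ z, V x z * (if g z then (1 : ℝ) else 0) ≤ 1 := fun x g => by
    refine ⟨Finset.sum_nonneg fun z _ => mul_nonneg (hV.1 x z) (by split_ifs <;> norm_num),
      le_trans (Finset.sum_le_sum fun z _ => mul_le_of_le_one_right (hV.1 x z) ?_) (hV.2 x).le⟩
    split_ifs <;> norm_num
  have hnot : ∀ p : Prop, (if p then (0 : ℝ) else 1) = if ¬p then 1 else 0 := fun p => by
    by_cases hp : p <;> simp [hp]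
  have hUy : ∀ x y, 0 ≤ U x y ∧ U x y ≤ 1 := fun x y =>
    ⟨hU.1 x y, IsPMF.le_one ⟨hU.1 x, hU.2 x⟩ y⟩
  have hUB : ∀ x, 0 ≤ ∑ y, U x y * (if B y then (0 : ℝ) else 1) ∧
      ∑ y, U x y * (if B y then (0 : ℝ) else 1) ≤ 1 := fun x => by
    refine ⟨Finset.sum_nonneg fun z _ => mul_nonneg (hU.1 x z) (by split_ifs <;> norm_num),
      le_trans (Finset.sum_le_sum fun z _ => mul_le_of_le_one_right (hU.1 x z) ?_) (hU.2 x).le⟩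
    split_ifs <;> norm_num
  -- tail bound for the average of a bounded function over one codebook
  have hin : ∀ (u : A → ℝ), (∀ a, 0 ≤ u a ∧ u a ≤ 1) → ∑ a, P a * u a ≤ lam / 4 →
      ∑ c, w c * (if lam < (N : ℝ)⁻¹ * ∑ j, u (c j) then 1 else 0)
        ≤ Real.exp (-(N * lam / 2)) := by
    intro u hu hmean
    have h := piW_chernoff (ι := Fin N) (fun _ => hP) (fun _ => u) (fun _ a => (hu a).1)
      (fun _ a => (hu a).2) (μ := N * (lam / 4)) (t := N * lam) (by
        rw [Finset.sum_const, Finset.card_univ, Fintype.card_fin, nsmul_eq_mul]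
        exact mul_le_mul_of_nonneg_left hmean hN'.le)
    rw [show 2 * (N * (lam / 4)) - N * lam = -(N * lam / 2) by ring] at h
    simp only [lt_inv_mul_iff₀ hN']
    exact h
  -- tail bound for the average over all codebooks
  have hout : ∀ (u : A → ℝ) (b : ℝ), (∀ a, 0 ≤ u a ∧ u a ≤ 1) → ∑ a, P a * u a ≤ b / 4 →
      ∑ F, piW (fun _ : Fin k => w) F *
        (if b < (k : ℝ)⁻¹ * ∑ m, (N : ℝ)⁻¹ * ∑ j, u (F m j) then 1 else 0)
        ≤ Real.exp (-(k * b / 2)) := by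
    intro u b hu hmean
    have hmean' : ∑ c, w c * ((N : ℝ)⁻¹ * ∑ j, u (c j)) = ∑ a, P a * u a := by
      have : ∀ c, w c * ((N : ℝ)⁻¹ * ∑ j, u (c j)) = (N : ℝ)⁻¹ * ∑ j, w c * u (c j) := by
        intro c
        rw [Finset.mul_sum, Finset.mul_sum, Finset.mul_sum]
        exact Finset.sum_congr rfl fun j _ => by ring
      simp only [this]
      rw [← Finset.mul_sum, Finset.sum_comm]
      simp only [hwdef, sum_piW_mul_single (fun _ : Fin N => hP)]
      simp [hN'.ne']
    have h := piW_chernoff (ι := Fin k) (fun _ => hw) (fun _ c => (N : ℝ)⁻¹ * ∑ j, u (c j))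
      (fun _ c => mul_nonneg (inv_pos.2 hN').le (Finset.sum_nonneg fun j _ => (hu _).1))
      (fun _ c => by
        rw [inv_mul_le_iff₀ hN']
        calc ∑ j, u (c j) ≤ ∑ _j : Fin N, (1 : ℝ) := Finset.sum_le_sum fun j _ => (hu _).2
          _ = N * 1 := by simp)
      (μ := k * (b / 4)) (t := k * b) (by
        simp only [hmean']
        rw [Finset.sum_const, Finset.card_univ, Fintype.card_fin, nsmul_eq_mul]
        exact mul_le_mul_of_nonneg_left hmean hk'.le)
    rw [show 2 * (k * (b / 4)) - k * b = -(k * b / 2) by ring] at h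
    simp only [lt_inv_mul_iff₀ hk']
    exact h
  have hmiss : ∀ m, ∑ F, piW (fun _ : Fin k => w) F * (if lam < (N : ℝ)⁻¹ *
      ∑ j, ∑ z, V (F m j) z * (if good (F m j) z then 0 else 1) then 1 else 0)
      ≤ Real.exp (-(N * lam / 2)) := fun m => by
    rw [sum_piW_mul_single (fun _ : Fin k => hw) m fun c => if lam < (N : ℝ)⁻¹ *
      ∑ j, ∑ z, V (c j) z * (if good (c j) z then 0 else 1) then 1 else 0]
    refine hin (fun x => ∑ z, V x z * (if good x z then 0 else 1)) (fun x => ?_) h1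
    simp only [hnot]
    convert hV01 x fun z => ¬good x z
  have hfalse : ∀ i : Fin k × Fin k, ∑ F, piW (fun _ : Fin k => w) F *
      (if i.1 ≠ i.2 ∧ lam < (N : ℝ)⁻¹ * ∑ j, ∑ z, V (F i.1 j) z * (if D (F i.2) z then 1 else 0)
        then 1 else 0) ≤ Real.exp (-(N * lam / 2)) := fun ⟨m, m'⟩ => by
    by_cases hne : m = m'
    · simp [hne, Real.exp_nonneg]
    simp only [hne, ne_eq, not_false_eq_true, true_and]
    rw [sum_piW_mul_pair (fun _ : Fin k => hw) (Ne.symm hne) fun b a => if lam < (N : ℝ)⁻¹ *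
      ∑ j, ∑ z, V (a j) z * (if D b z then 1 else 0) then 1 else 0]
    calc _ ≤ ∑ b, w b * Real.exp (-(N * lam / 2)) := by
          refine Finset.sum_le_sum fun b _ => mul_le_mul_of_nonneg_left ?_ (hw.1 b)
          refine hin (fun x => ∑ z, V x z * (if D b z then 1 else 0))
            (fun x => by convert hV01 x fun z => D b z) ?_
          calc _ = ∑ z, outDist P V z * (if D b z then 1 else 0) := by
                rw [← sum_mul_sum_mul_eq_outDist]
                simp only [Finset.mul_sum, mul_assoc]
            _ ≤ ∑ z, outDist P V z * ∑ l, (if good (b l) z then 1 else 0) := by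
                refine Finset.sum_le_sum fun z _ => mul_le_mul_of_nonneg_left ?_
                  ((isPMF_outDist hP hV).1 z)
                have h0 : ∀ l ∈ Finset.univ, (0 : ℝ) ≤ if good (b l) z then 1 else 0 :=
                  fun l _ => by split_ifs <;> norm_num
                split_ifs with hex
                · obtain ⟨l, hl⟩ := hex
                  have := Finset.single_le_sum h0 (Finset.mem_univ l)
                  rwa [if_pos hl] at this
                · exact Finset.sum_nonneg h0
            _ = ∑ l, ∑ z, outDist P V z * (if good (b l) z then 1 else 0) := by
                simp only [Finset.mul_sum]
                rw [Finset.sum_comm]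
            _ ≤ ∑ _l : Fin N, θ := Finset.sum_le_sum fun l _ => h2 (b l)
            _ = N * θ := by simp
            _ ≤ lam / 4 := hθ
      _ = _ := by rw [← Finset.sum_mul, hw.2, one_mul]
  have hflat : ∀ y, ∑ F, piW (fun _ : Fin k => w) F * (if B y ∧ K⁻¹ <
      (k : ℝ)⁻¹ * ∑ m, (N : ℝ)⁻¹ * ∑ j, U (F m j) y then 1 else 0)
      ≤ Real.exp (-(k * K⁻¹ / 2)) := fun y => by
    by_cases hy : B y
    · simp only [hy, true_and]
      exact hout (fun x => U x y) _ (fun x => hUy x y) (hB y hy)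
    · simp [hy, Real.exp_nonneg]
  have hmass : ∑ F, piW (fun _ : Fin k => w) F * (if ν < (k : ℝ)⁻¹ * ∑ m, (N : ℝ)⁻¹ *
      ∑ j, ∑ y, U (F m j) y * (if B y then 0 else 1) then 1 else 0)
      ≤ Real.exp (-(k * ν / 2)) := by
    refine hout (fun x => ∑ y, U x y * (if B y then 0 else 1)) _ hUB ?_
    rw [← sum_mul_sum_mul_eq_outDist] at hBc
    simpa only [Finset.mul_sum, mul_assoc] using hBc
  obtain ⟨F, hF⟩ := (isPMF_piW (ι := Fin k) fun _ => hw).exists_forall_not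
    (ι := (Fin k ⊕ Fin k × Fin k) ⊕ (T ⊕ Unit))
    (Sum.elim
      (Sum.elim
        (fun m F => lam < (N : ℝ)⁻¹ * ∑ j, ∑ z, V (F m j) z * (if good (F m j) z then 0 else 1))
        (fun i F => i.1 ≠ i.2 ∧ lam <
          (N : ℝ)⁻¹ * ∑ j, ∑ z, V (F i.1 j) z * (if D (F i.2) z then 1 else 0)))
      (Sum.elim
        (fun y F => B y ∧ K⁻¹ < (k : ℝ)⁻¹ * ∑ m, (N : ℝ)⁻¹ * ∑ j, U (F m j) y)
        (fun _ F => ν < (k : ℝ)⁻¹ * ∑ m, (N : ℝ)⁻¹ * ∑ j, ∑ y, U (F m j) y *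
          (if B y then 0 else 1))))
    (b := Sum.elim (Sum.elim (fun _ => Real.exp (-(N * lam / 2)))
        (fun _ => Real.exp (-(N * lam / 2))))
      (Sum.elim (fun _ => Real.exp (-(k * K⁻¹ / 2))) (fun _ => Real.exp (-(k * ν / 2)))))
    (by
      have hif : ∀ (E : (Fin k → Fin N → A) → Prop) (d d' : DecidablePred E) (r : ℝ),
          ∑ f, piW (fun _ : Fin k => w) f * @ite _ (E f) (d f) 1 0 ≤ r →
          ∑ f, piW (fun _ : Fin k => w) f * @ite _ (E f) (d' f) 1 0 ≤ r := fun E d d' r h => by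
        rwa [Subsingleton.elim d' d]
      rintro ((m | i) | (y | _))
      · exact hif _ _ _ _ (hmiss m)
      · exact hif _ _ _ _ (hfalse i)
      · exact hif _ _ _ _ (hflat y)
      · exact hif _ _ _ _ hmass)
    (by
      refine lt_of_le_of_lt ?_ hbound
      simp only [Fintype.sum_sum_type, Sum.elim_inl, Sum.elim_inr, Finset.sum_const,
        Finset.card_univ, Fintype.card_prod, Fintype.card_fin, Fintype.card_unit, nsmul_eq_mul]
      push_cast
      have hk1 : (1 : ℝ) ≤ k := by exact_mod_cast hk
      nlinarith [Real.exp_pos (-(N * lam / 2)), mul_pos hk' (Real.exp_pos (-(N * lam / 2)))])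
  refine ⟨F, fun m => ?_, fun m m' hne => ?_, fun y hy => ?_, ?_⟩
  · have h := hF (Sum.inl (Sum.inl m))
    simp only [Sum.elim_inl, not_lt] at h
    refine le_trans (mul_le_mul_of_nonneg_left (Finset.sum_le_sum fun j _ =>
      Finset.sum_le_sum fun z _ => mul_le_mul_of_nonneg_left ?_ (hV.1 _ z))
      (inv_pos.2 hN').le) h
    by_cases hg : good (F m j) z
    · rw [if_pos hg, if_pos ⟨j, hg⟩]
    · rw [if_neg hg]
      split_ifs <;> norm_num
  · have h := hF (Sum.inl (Sum.inr (m, m')))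
    simpa [hne] using h
  · have h := hF (Sum.inr (Sum.inl y))
    simpa [hy] using h
  · have h := hF (Sum.inr (Sum.inr ()))
    simpa using h

end RandomCoding

section Typical

theorem outDist_piW {X Z : Type*} [Fintype X] (P : X → ℝ) (V : X → Z → ℝ) (n : ℕ) :
    outDist (piW fun _ : Fin n => P) (Wn V n) = piW fun _ => outDist P V := by
  funext z
  simp only [outDist, Wn]
  rw [sum_piW_mul_prod (fun _ : Fin n => P) fun i x => V x (z i)]
  rfl

variable {X Y Z : Type*} [Fintype X] [Fintype Y] [Fintype Z]

theorem log_piW {ι A : Type*} [Fintype ι] {w : A → ℝ} {s : ι → A} (hs : piW (fun _ => w) s ≠ 0) :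
    Real.log (piW (fun _ => w) s) = ∑ i, Real.log (w (s i)) :=
  Real.log_prod fun i hi => Finset.prod_ne_zero_iff.1 hs i hi

/-- Sequences whose probability exceeds `exp (-n h)`, with `h` below the entropy, are rare. -/
theorem exists_sum_piW_le_of_lt_entH {p : Y → ℝ} (hp : IsPMF p) {h : ℝ} (hh : h < entH p)
    {ν : ℝ} (hν : 0 < ν) : ∃ n₀ : ℕ, ∀ n ≥ n₀, ∑ y : Fin n → Y, piW (fun _ => p) y *
      (if piW (fun _ => p) y ≤ Real.exp (-(n * h)) then 0 else 1) ≤ ν := by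
  obtain ⟨n₀, hn₀⟩ := weak_law hp (fun y => -Real.log (p y)) (sub_pos.2 hh) hν
  refine ⟨n₀, fun n hn => le_trans (Finset.sum_le_sum fun y _ => ?_) (hn₀ n hn)⟩
  have hy0 := (isPMF_piW (ι := Fin n) fun _ => hp).1 y
  by_cases hy : piW (fun _ => p) y = 0
  · simp [hy]
  refine mul_le_mul_of_nonneg_left ?_ hy0
  split_ifs with h1 h2 h2
  · norm_num
  · exact le_rfl
  · exact le_rfl
  · refine absurd ?_ h2
    have hmean : ∑ a, p a * -Real.log (p a) = entH p := by
      rw [entH_eq_sum_negMulLog]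
      exact Finset.sum_congr rfl fun a _ => by rw [Real.negMulLog]; ring
    rw [hmean, Finset.sum_neg_distrib, ← log_piW hy]
    have hlog := (Real.lt_log_iff_exp_lt (lt_of_le_of_ne hy0 (Ne.symm hy))).2 (not_le.1 h1)
    refine le_trans ?_ (neg_le_abs _)
    linarith

/-- Below the mutual information, the information density exceeds the rate with probability
close to one. -/
theorem exists_sum_density_le {P : X → ℝ} (hP : IsPMF P) {V : X → Z → ℝ} (hV : IsChannel V)
    {r : ℝ} (hr : r < mutInf P V) {ν : ℝ} (hν : 0 < ν) :
    ∃ n₀ : ℕ, ∀ n ≥ n₀, ∑ x : Fin n → X, piW (fun _ => P) x * ∑ z : Fin n → Z, Wn V n x z *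
      (if Real.exp (n * r) * piW (fun _ => outDist P V) z < Wn V n x z then 0 else 1) ≤ ν := by
  have hw : IsPMF fun a : X × Z => P a.1 * V a.1 a.2 :=
    ⟨fun a => mul_nonneg (hP.1 _) (hV.1 _ _), by
      rw [Fintype.sum_prod_type]
      simp only [← Finset.mul_sum, hV.2, mul_one, hP.2]⟩
  have hout := isPMF_outDist hP hV
  obtain ⟨n₀, hn₀⟩ := weak_law hw (fun a => Real.log (V a.1 a.2) - Real.log (outDist P V a.2))
    (sub_pos.2 hr) hν
  refine ⟨n₀, fun n hn => le_trans ?_ (hn₀ n hn)⟩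
  rw [← (Equiv.arrowProdEquivProdArrow (Fin n) (fun _ => X) fun _ => Z).symm.sum_comp,
    Fintype.sum_prod_type]
  refine Finset.sum_le_sum fun x _ => ?_
  rw [Finset.mul_sum]
  refine Finset.sum_le_sum fun z _ => ?_
  have hs : piW (fun _ : Fin n => fun a : X × Z => P a.1 * V a.1 a.2)
      ((Equiv.arrowProdEquivProdArrow (Fin n) (fun _ => X) fun _ => Z).symm (x, z))
      = piW (fun _ => P) x * Wn V n x z := Finset.prod_mul_distrib
  rw [hs, ← mul_assoc]
  have hPx := (isPMF_piW (ι := Fin n) fun _ => hP).1 x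
  have hVz := (isPMF_Wn (n := n) hV x).1 z
  by_cases hy : piW (fun _ => P) x * Wn V n x z = 0
  · simp [hy]
  refine mul_le_mul_of_nonneg_left ?_ (mul_nonneg hPx hVz)
  split_ifs with h1 h2 h2
  · norm_num
  · exact le_rfl
  · exact le_rfl
  · refine absurd ?_ h2
    have hVne := right_ne_zero_of_mul hy
    have hone : piW (fun _ => outDist P V) z ≠ 0 := by
      refine Finset.prod_ne_zero_iff.2 fun i _ h0 => hy ?_
      rw [← hs]
      exact Finset.prod_eq_zero (Finset.mem_univ i) (outDist_eq_zero hP hV h0 (x i))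
    have hopos := lt_of_le_of_ne ((isPMF_piW (ι := Fin n) fun _ => hout).1 z) (Ne.symm hone)
    have hmean : ∑ a : X × Z, P a.1 * V a.1 a.2 *
        (Real.log (V a.1 a.2) - Real.log (outDist P V a.2)) = mutInf P V := by
      rw [mutInf_eq_sum_log_sub hP hV, Fintype.sum_prod_type]
    have hsum : ∑ i, (Real.log (V (x i) (z i)) - Real.log (outDist P V (z i)))
        = Real.log (Wn V n x z) - Real.log (piW (fun _ => outDist P V) z) := by
      rw [Finset.sum_sub_distrib, log_piW hone, Wn,
        Real.log_prod fun i hi => Finset.prod_ne_zero_iff.1 hVne i hi]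
    have hlog := Real.log_le_log (lt_of_le_of_ne hVz (Ne.symm hVne)) (not_lt.1 h1)
    rw [Real.log_mul (Real.exp_ne_zero _) hone, Real.log_exp] at hlog
    rw [hmean]
    refine le_trans ?_ (neg_le_abs _)
    change _ ≤ -(∑ i, (Real.log (V (x i) (z i)) - Real.log (outDist P V (z i))) - _)
    rw [hsum]
    linarith

end Typical

section FlatCodes

theorem sum_compl_filter_univ {S : Type*} [Fintype S] [DecidableEq S] (p : S → Prop)
    [DecidablePred p] (f : S → ℝ) :
    ∑ z ∈ (univ.filter p)ᶜ, f z = ∑ z, f z * (if p z then 0 else 1) := by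
  rw [Finset.compl_filter, Finset.sum_filter]
  exact Finset.sum_congr rfl fun z _ => by by_cases h : p z <;> simp [h]

/-- The numbers of messages and codewords used in the random coding argument. -/
theorem exists_codebook_size {r₁ r₂ r lam ν : ℝ} (hr₁ : 0 < r₁) (h₁₂ : r₁ < r₂) (h₂ : r₂ < r)
    (hlam : 0 < lam) (hν : 0 < ν) (h c : ℝ) : ∃ n₀ : ℕ, ∀ n ≥ n₀, ∀ k N : ℕ,
      k = ⌈Real.exp (Real.exp (n * r₁))⌉₊ → N = ⌈Real.exp (n * r₂)⌉₊ →
      N * Real.exp (-(n * r)) ≤ lam / 4 ∧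
      2 * (k : ℝ) ^ 2 * Real.exp (-(N * lam / 2))
        + Real.exp (n * c) * Real.exp (-(k * (Real.exp (n * h))⁻¹ / 2))
        + Real.exp (-(k * ν / 2)) < 1 := by
  obtain ⟨n₁, hn₁⟩ := exists_linear_mul_exp_le 0 0 (8 / lam) (sub_pos.2 h₂) one_pos
  obtain ⟨n₂, hn₂⟩ := exists_linear_mul_exp_le (4 / lam) 0 (2 * Real.log 32 / lam)
    (hr₁.trans h₁₂) (sub_pos.2 h₁₂)
  obtain ⟨n₃, hn₃⟩ := exists_linear_mul_exp_le 0 (h + 2 * c) (2 * Real.log 8) hr₁ one_pos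
  obtain ⟨n₄, hn₄⟩ := exists_linear_mul_exp_le 0 0 (2 * Real.log 8 / ν) hr₁ one_pos
  refine ⟨max (max n₁ n₂) (max (max n₃ n₄) 1), fun n hn k N hk hN => ?_⟩
  simp only [ge_iff_le, max_le_iff] at hn
  have hn0 : (1 : ℝ) ≤ n := by exact_mod_cast hn.2.2
  have e₁ := hn₁ n hn.1.1
  have e₂ := hn₂ n hn.1.2
  have e₃ := hn₃ n hn.2.1.1
  have e₄ := hn₄ n hn.2.1.2
  have hklo : Real.exp (Real.exp (n * r₁)) ≤ k := hk ▸ Nat.le_ceil _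
  have hNlo : Real.exp (n * r₂) ≤ N := hN ▸ Nat.le_ceil _
  have hr₂ : 0 < r₂ := hr₁.trans h₁₂
  have hkhi : (k : ℝ) ≤ 2 * Real.exp (Real.exp (n * r₁)) := by
    have := Nat.ceil_lt_add_one (Real.exp_pos (Real.exp (n * r₁))).le
    rw [← hk] at this
    linarith [Real.one_le_exp (Real.exp_pos (n * r₁)).le]
  have hNhi : (N : ℝ) ≤ 2 * Real.exp (n * r₂) := by
    have := Nat.ceil_lt_add_one (Real.exp_pos (n * r₂)).le
    rw [← hN] at this
    have h0 : 0 ≤ n * r₂ := by positivity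
    linarith [Real.one_le_exp h0]
  have hlog : ∀ {C t : ℝ}, 0 < C → Real.log C ≤ t → Real.exp (-t) ≤ C⁻¹ := fun hC ht => by
    rw [Real.exp_neg]
    exact inv_anti₀ hC ((Real.log_le_iff_le_exp hC).1 ht)
  constructor
  · have hexp : Real.exp (n * r) = Real.exp (n * r₂) * Real.exp (n * (r - r₂)) := by
      rw [← Real.exp_add]; ring_nf
    have h8 : 8 / lam ≤ Real.exp (n * (r - r₂)) := by linarith
    rw [Real.exp_neg, ← div_eq_mul_inv, div_le_iff₀ (Real.exp_pos _), hexp]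
    rw [div_le_iff₀ hlam] at h8
    nlinarith [Real.exp_pos (n * r₂)]
  have t₁ : 2 * (k : ℝ) ^ 2 * Real.exp (-(N * lam / 2)) ≤ 1 / 4 := by
    have hb : Real.log 32 ≤ N * lam / 2 - 2 * Real.exp (n * r₁) := by
      have e : (4 / lam) * Real.exp (n * r₁) + 2 * Real.log 32 / lam ≤ N := by
        refine le_trans ?_ (e₂.trans hNlo)
        rw [show r₂ - (r₂ - r₁) = r₁ by ring, zero_mul, add_zero]
        have : 0 ≤ 4 / lam * Real.exp (n * r₁) := by positivity
        nlinarith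
      have := mul_le_mul_of_nonneg_right e hlam.le
      field_simp at this
      linarith
    have hb' := hlog (by norm_num) hb
    calc 2 * (k : ℝ) ^ 2 * Real.exp (-(N * lam / 2))
        ≤ 2 * (2 * Real.exp (Real.exp (n * r₁))) ^ 2 * Real.exp (-(N * lam / 2)) := by gcongr
      _ = 8 * Real.exp (-(N * lam / 2 - 2 * Real.exp (n * r₁))) := by
          rw [neg_sub, sub_eq_add_neg, Real.exp_add, mul_comm (2 : ℝ) (Real.exp (n * r₁)),
            mul_two, Real.exp_add]
          ring
      _ ≤ 1 / 4 := by linarith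
  have t₂ : Real.exp (n * c) * Real.exp (-(k * (Real.exp (n * h))⁻¹ / 2)) ≤ 1 / 8 := by
    rw [← Real.exp_add]
    have hb : Real.log 8 ≤ k * (Real.exp (n * h))⁻¹ / 2 - n * c := by
      have h1 : Real.exp (Real.exp (n * r₁) - n * h) ≤ k * (Real.exp (n * h))⁻¹ := by
        rw [Real.exp_sub, div_eq_mul_inv]
        exact mul_le_mul_of_nonneg_right hklo (inv_pos.2 (Real.exp_pos _)).le
      have h2 := Real.add_one_le_exp (Real.exp (n * r₁) - n * h)
      linarith
    have := hlog (by norm_num) hb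
    rw [neg_sub, sub_eq_add_neg] at this
    linarith
  have t₃ : Real.exp (-(k * ν / 2)) ≤ 1 / 8 := by
    have hb : Real.log 8 ≤ k * ν / 2 := by
      have : 2 * Real.log 8 / ν ≤ k := by
        linarith [Real.add_one_le_exp (Real.exp (n * r₁))]
      rw [div_le_iff₀ hν] at this
      linarith
    have := hlog (by norm_num) hb
    linarith
  linarith

variable {X Y Z : Type*} [Fintype X] [Fintype Y] [Fintype Z]

/-- An ID code with `k` messages for `V` whose codewords, averaged over the messages, induce on
the outputs of `U` a law that is at most `K⁻¹` outside of an event of probability `ν`. -/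
def HasFlatIDCode (n : ℕ) (U : X → Y → ℝ) (V : X → Z → ℝ) (k : ℕ) (K lam ν : ℝ) : Prop :=
  ∃ (q : Fin k → (Fin n → X) → ℝ) (D : Fin k → Finset (Fin n → Z)) (B : (Fin n → Y) → Prop),
    IsIDCode n V q D lam lam ∧
    (∀ y, B y → (k : ℝ)⁻¹ * ∑ m, outDist (q m) (Wn U n) y ≤ K⁻¹) ∧
    (k : ℝ)⁻¹ * ∑ m, ∑ y, outDist (q m) (Wn U n) y * (if B y then 0 else 1) ≤ ν

theorem exists_hasFlatIDCode_one {P : X → ℝ} (hP : IsPMF P) {U : X → Y → ℝ} (hU : IsChannel U)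
    (V : X → Z → ℝ) {h lam ν : ℝ} (hh : h < entH (outDist P U)) (hlam : 0 < lam) (hν : 0 < ν) :
    ∃ n₀ : ℕ, ∀ n ≥ n₀, HasFlatIDCode n U V 1 (Real.exp (n * h)) lam ν := by
  obtain ⟨n₀, hn₀⟩ := exists_sum_piW_le_of_lt_entH (isPMF_outDist hP hU) hh hν
  refine ⟨n₀, fun n hn => ⟨fun _ => piW fun _ => P, fun _ => univ,
    fun y => piW (fun _ => outDist P U) y ≤ Real.exp (-(n * h)),
    ⟨fun _ => isPMF_piW fun _ => hP, fun _ => ?_, fun m m' hne => ?_⟩, fun y hy => ?_, ?_⟩⟩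
  · simpa using hlam.le
  · exact absurd (Subsingleton.elim m m') hne
  · simpa [outDist_piW, ← Real.exp_neg] using hy
  · simpa [outDist_piW] using hn₀ n hn

theorem exists_hasFlatIDCode {P : X → ℝ} (hP : IsPMF P) {U : X → Y → ℝ} (hU : IsChannel U)
    {V : X → Z → ℝ} (hV : IsChannel V) {h r₁ lam ν : ℝ} (hh : h < entH (outDist P U))
    (hr₁ : 0 < r₁) (hr : r₁ < mutInf P V) (hlam : 0 < lam) (hν : 0 < ν) :
    ∃ n₀ : ℕ, ∀ n ≥ n₀, HasFlatIDCode n U V ⌈Real.exp (Real.exp (n * r₁))⌉₊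
      (Real.exp (n * h)) lam ν := by
  obtain ⟨r₂, h₁₂, hr₂⟩ := exists_between hr
  obtain ⟨r, h₂, hrI⟩ := exists_between hr₂
  obtain ⟨h', hh', hH⟩ := exists_between hh
  have hlam4 : 0 < lam / 4 := by positivity
  have hν4 : 0 < ν / 4 := by positivity
  obtain ⟨n₁, hn₁⟩ := exists_codebook_size hr₁ h₁₂ h₂ hlam hν h (Real.log (Fintype.card Y))
  obtain ⟨n₂, hn₂⟩ := exists_sum_piW_le_of_lt_entH (isPMF_outDist hP hU) hH hν4
  obtain ⟨n₃, hn₃⟩ := exists_sum_density_le hP hV hrI hlam4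
  obtain ⟨n₄, hn₄⟩ := exists_linear_mul_exp_le 0 0 4 (sub_pos.2 hh') one_pos
  refine ⟨max (max n₁ n₂) (max n₃ n₄), fun n hn => ?_⟩
  simp only [ge_iff_le, max_le_iff] at hn
  set k := ⌈Real.exp (Real.exp (n * r₁))⌉₊ with hk
  set N := ⌈Real.exp (n * r₂)⌉₊ with hN
  have hNpos : 0 < N := Nat.ceil_pos.2 (Real.exp_pos _)
  have hNR : (0 : ℝ) < N := by exact_mod_cast hNpos
  obtain ⟨hθ, hbound⟩ := hn₁ n hn.1.1 k N hk hN
  have hWU : IsChannel (Wn U n) := ⟨fun x => (isPMF_Wn hU x).1, fun x => (isPMF_Wn hU x).2⟩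
  have hWV : IsChannel (Wn V n) := ⟨fun x => (isPMF_Wn hV x).1, fun x => (isPMF_Wn hV x).2⟩
  have hY : Nonempty Y := by
    by_contra hne
    rw [not_nonempty_iff] at hne
    have := (isPMF_outDist hP hU).2
    simp at this
  have hcard : (Fintype.card (Fin n → Y) : ℝ) = Real.exp (n * Real.log (Fintype.card Y)) := by
    have : (0 : ℝ) < Fintype.card Y := by exact_mod_cast Fintype.card_pos
    rw [Fintype.card_fun, Fintype.card_fin, Nat.cast_pow, mul_comm, Real.exp_mul,
      Real.exp_log this, Real.rpow_natCast]
  obtain ⟨F, hF₁, hF₂, hF₃, hF₄⟩ := exists_codebook (P := piW fun _ : Fin n => P)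
    (isPMF_piW fun _ => hP) hWV hWU
    (fun x z => Real.exp (n * r) * piW (fun _ => outDist P V) z < Wn V n x z)
    (fun y => piW (fun _ => outDist P U) y ≤ Real.exp (-(n * h')))
    (lam := lam) (ν := ν) (θ := Real.exp (-(n * r))) (K := Real.exp (n * h)) (k := k)
    (Nat.ceil_pos.2 (Real.exp_pos _)) hNpos (hn₃ n hn.2.1)
    (fun x => by
      rw [outDist_piW]
      conv_rhs => rw [← mul_one (Real.exp (-(n * r))), ← hWV.2 x, Finset.mul_sum]
      refine Finset.sum_le_sum fun z _ => ?_
      split_ifs with hz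
      · rw [mul_one, Real.exp_neg, ← div_eq_inv_mul, le_div_iff₀ (Real.exp_pos _), mul_comm]
        exact hz.le
      · rw [mul_zero]
        exact mul_nonneg (Real.exp_pos _).le (hWV.1 x z)) hθ
    (fun y hy => by
      rw [outDist_piW]
      refine hy.trans ?_
      have h4 := hn₄ n hn.2.2
      have : Real.exp (n * h') = Real.exp (n * h) * Real.exp (n * (h' - h)) := by
        rw [← Real.exp_add]; ring_nf
      rw [Real.exp_neg, this, mul_inv, div_eq_mul_inv]
      refine mul_le_mul_of_nonneg_left (inv_anti₀ (by norm_num) ?_) (inv_pos.2 (Real.exp_pos _)).le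
      linarith)
    (by rw [outDist_piW]; exact hn₂ n hn.1.2)
    (by rwa [hcard])
  have hq : ∀ m (g : (Fin n → X) → ℝ), ∑ x, ((N : ℝ)⁻¹ * ∑ j, if F m j = x then 1 else 0) * g x
      = (N : ℝ)⁻¹ * ∑ j, g (F m j) := fun m g => by
    simp only [mul_assoc, ← Finset.mul_sum, Finset.sum_mul]
    rw [Finset.sum_comm]
    simp
  refine ⟨fun m x => (N : ℝ)⁻¹ * ∑ j, if F m j = x then 1 else 0,
    fun m => univ.filter fun z => ∃ j,
      Real.exp (n * r) * piW (fun _ => outDist P V) z < Wn V n (F m j) z,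
    fun y => piW (fun _ => outDist P U) y ≤ Real.exp (-(n * h')),
    ⟨fun m => ⟨fun x => ?_, ?_⟩, fun m => ?_, fun m m' hne => ?_⟩, fun y hy => ?_, ?_⟩
  · exact mul_nonneg (inv_pos.2 hNR).le (Finset.sum_nonneg fun j _ => by split_ifs <;> norm_num)
  · have := hq m fun _ => 1
    simpa [hNR.ne'] using this
  · rw [hq]
    refine le_trans (le_of_eq ?_) (hF₁ m)
    simp only [sum_compl_filter_univ]
  · rw [hq]
    refine le_trans (le_of_eq ?_) (hF₂ m m' hne)
    simp only [Finset.sum_filter, mul_ite, mul_one, mul_zero]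
  · simp only [outDist, hq]
    exact hF₃ y hy
  · refine le_trans (le_of_eq ?_) hF₄
    congr 1
    refine Finset.sum_congr rfl fun m _ => ?_
    rw [← sum_mul_sum_mul_eq_outDist]
    refine Eq.trans (Finset.sum_congr rfl fun x _ => ?_) (hq m fun x => ∑ y, Wn U n x y *
      (if piW (fun _ => outDist P U) y ≤ Real.exp (-(n * h')) then 0 else 1))
    simp only [mul_assoc, ← Finset.mul_sum]

end FlatCodes

section Encoders

variable {X Y Z : Type*}

theorem encW_congr {n : ℕ} {Q Q' : (i : ℕ) → (Fin i → X) → (Fin i → Y) → X → ℝ}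
    (h : ∀ i < n, Q i = Q' i) (x : Fin n → X) (y : Fin n → Y) : encW n Q x y = encW n Q' x y :=
  Finset.prod_congr rfl fun i _ => by rw [h i.1 i.isLt]

/-- Every law on input sequences is generated by an encoder that ignores the feedback. -/
theorem exists_encW_eq [Fintype X] [Nonempty X] (Y : Type*) {n : ℕ} {q : (Fin n → X) → ℝ}
    (hq : IsPMF q) : ∃ Q : (i : ℕ) → (Fin i → X) → (Fin i → Y) → X → ℝ,
      IsFBEncoder n Q ∧ ∀ x y, encW n Q x y = q x := by
  induction n with
  | zero =>
    refine ⟨fun _ _ _ _ => 0, fun i hi => absurd hi (Nat.not_lt_zero i), fun x y => ?_⟩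
    have := hq.2
    rw [Fintype.sum_unique] at this
    rw [Subsingleton.elim x default, this]
    simp [encW]
  | succ n ih =>
    set q' : (Fin n → X) → ℝ := fun x => ∑ a, q (Fin.snoc (α := fun _ => X) x a) with hq'
    have hq'0 : ∀ x, 0 ≤ q' x := fun x => Finset.sum_nonneg fun a _ => hq.1 _
    obtain ⟨Q', hQ', henc⟩ := ih (q := q') ⟨hq'0, by rw [← hq.2, sum_fin_succ_snoc]⟩
    obtain ⟨x₀⟩ := ‹Nonempty X›
    set step : (Fin n → X) → X → ℝ := fun x a =>
      if q' x = 0 then (if a = x₀ then 1 else 0)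
      else q (Fin.snoc (α := fun _ => X) x a) / q' x with hstep
    have hstepP : ∀ x, IsPMF (step x) := fun x => by
      by_cases h0 : q' x = 0
      · simp only [hstep, if_pos h0]
        exact ⟨fun a => by dsimp only; split_ifs <;> norm_num, by simp⟩
      · simp only [hstep, if_neg h0]
        exact ⟨fun a => div_nonneg (hq.1 _) (hq'0 x), by
          rw [← Finset.sum_div]; exact div_self h0⟩
    set Q : (i : ℕ) → (Fin i → X) → (Fin i → Y) → X → ℝ := fun i xs ys =>
      if h : i = n then step fun j => xs (Fin.cast h.symm j) else Q' i xs ys with hQ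
    have hlast : ∀ xs ys, Q n xs ys = step xs := fun xs ys => by simp [hQ]
    have hpre : ∀ i < n, Q i = Q' i := fun i hi => by
      funext xs ys
      simp [hQ, hi.ne]
    refine ⟨Q, fun i hi xs ys => ?_, fun x y => ?_⟩
    · rcases Nat.lt_succ_iff_lt_or_eq.1 hi with h | rfl
      · rw [hpre i h]
        exact hQ' i h xs ys
      · rw [hlast]
        exact hstepP xs
    · rw [← Fin.snoc_init_self x, ← Fin.snoc_init_self y, encW_snoc, hlast, encW_congr hpre, henc]
      set x' := Fin.init (α := fun _ => X) x
      by_cases h0 : q' x' = 0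
      · rw [h0, zero_mul]
        exact ((Finset.sum_eq_zero_iff_of_nonneg fun a _ => hq.1 _).1 h0 _ (Finset.mem_univ _)).symm
      · simp only [hstep, if_neg h0]
        exact mul_div_cancel₀ _ h0

/-- An encoder for blocklength `n` can be followed by `t` symbols that are determined by the
feedback of the first `n` outputs. -/
theorem exists_encW_append [Fintype X] {n t : ℕ}
    {Q : (i : ℕ) → (Fin i → X) → (Fin i → Y) → X → ℝ} (hQ : IsFBEncoder n Q)
    (c : (Fin n → Y) → Fin t → X) : ∃ Q' : (i : ℕ) → (Fin i → X) → (Fin i → Y) → X → ℝ,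
      IsFBEncoder (n + t) Q' ∧ ∀ x₁ x₂ y₁ y₂, encW (n + t) Q' (Fin.append x₁ x₂) (Fin.append y₁ y₂)
        = encW n Q x₁ y₁ * if x₂ = c y₁ then 1 else 0 := by
  set Q' : (i : ℕ) → (Fin i → X) → (Fin i → Y) → X → ℝ := fun i xs ys a =>
    if i < n then Q i xs ys a
    else if h : n ≤ i ∧ i - n < t then
      (if a = c (fun j => ys (Fin.castLE h.1 j)) ⟨i - n, h.2⟩ then 1 else 0)
    else 0 with hQ'
  refine ⟨Q', fun i hi xs ys => ?_, fun x₁ x₂ y₁ y₂ => ?_⟩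
  · by_cases h : i < n
    · simp only [hQ', if_pos h]
      exact hQ i h xs ys
    · have h' : n ≤ i ∧ i - n < t := by omega
      simp only [hQ', if_neg h, dif_pos h']
      exact ⟨fun a => by dsimp only; split_ifs <;> norm_num, by simp⟩
  · rw [encW, Fin.prod_univ_add]
    congr 1
    · refine Finset.prod_congr rfl fun i _ => ?_
      have hx : (fun j : Fin i.1 => Fin.append x₁ x₂ ⟨j.1, j.isLt.trans (i.castAdd t).isLt⟩)
          = fun j : Fin i.1 => x₁ ⟨j.1, j.isLt.trans i.isLt⟩ := by
        funext j
        exact Fin.append_left x₁ x₂ ⟨j.1, j.isLt.trans i.isLt⟩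
      have hy : (fun j : Fin i.1 => Fin.append y₁ y₂ ⟨j.1, j.isLt.trans (i.castAdd t).isLt⟩)
          = fun j : Fin i.1 => y₁ ⟨j.1, j.isLt.trans i.isLt⟩ := by
        funext j
        exact Fin.append_left y₁ y₂ ⟨j.1, j.isLt.trans i.isLt⟩
      change Q' i.1 _ _ _ = _
      rw [← hx, ← hy, Fin.append_left]
      simp only [hQ', if_pos i.isLt]
      rfl
    · have hi : ∀ i : Fin t, Q' (Fin.natAdd n i).1
          (fun j => Fin.append x₁ x₂ ⟨j.1, j.isLt.trans (Fin.natAdd n i).isLt⟩)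
          (fun j => Fin.append y₁ y₂ ⟨j.1, j.isLt.trans (Fin.natAdd n i).isLt⟩)
          (Fin.append x₁ x₂ (Fin.natAdd n i)) = if x₂ i = c y₁ i then 1 else 0 := fun i => by
        have h : ¬(Fin.natAdd n i).1 < n := by simp
        have h' : n ≤ (Fin.natAdd n i).1 ∧ (Fin.natAdd n i).1 - n < t := by simp
        simp only [hQ', if_neg h, dif_pos h', Fin.append_right]
        have hy : (fun j : Fin n => Fin.append y₁ y₂
            ⟨(Fin.castLE h'.1 j).1, (Fin.castLE h'.1 j).isLt.trans (Fin.natAdd n i).isLt⟩) = y₁ := by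
          funext j
          exact Fin.append_left y₁ y₂ j
        have hii : (⟨(Fin.natAdd n i).1 - n, h'.2⟩ : Fin t) = i := Fin.ext (by simp)
        rw [hy, hii]
      rw [Finset.prod_congr rfl fun i _ => hi i]
      by_cases heq : x₂ = c y₁
      · simp [heq]
      · rw [if_neg heq]
        obtain ⟨i, hne⟩ := Function.ne_iff.1 heq
        exact Finset.prod_eq_zero (Finset.mem_univ i) (if_neg hne)

theorem Wn_append {n t : ℕ} (V : X → Y → ℝ) (x₁ : Fin n → X) (x₂ : Fin t → X) (y₁ : Fin n → Y)
    (y₂ : Fin t → Y) : Wn V (n + t) (Fin.append x₁ x₂) (Fin.append y₁ y₂)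
      = Wn V n x₁ y₁ * Wn V t x₂ y₂ := by
  simp [Wn, Fin.prod_univ_add]

theorem sum_fin_add_append [Fintype X] (n t : ℕ) (f : (Fin (n + t) → X) → ℝ) :
    ∑ x, f x = ∑ x₁ : Fin n → X, ∑ x₂ : Fin t → X, f (Fin.append x₁ x₂) := by
  rw [← (Fin.appendEquiv n t).sum_comp, Fintype.sum_prod_type]
  rfl

/-- An input law, followed by `t` symbols determined by the feedback. -/
theorem exists_fbEncoder [Fintype X] [Nonempty X] [Fintype Y] {n t : ℕ} {q : (Fin n → X) → ℝ}
    (hq : IsPMF q) (c : (Fin n → Y) → Fin t → X) (V : X → Y → ℝ) :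
    ∃ Q : (i : ℕ) → (Fin i → X) → (Fin i → Y) → X → ℝ, IsFBEncoder (n + t) Q ∧
      ∀ g : (Fin (n + t) → X) → (Fin (n + t) → Y) → ℝ,
        ∑ x, ∑ y, pathW (n + t) Q V x y * g x y = ∑ x₁, ∑ y₁, q x₁ * Wn V n x₁ y₁ *
          ∑ y₂, Wn V t (c y₁) y₂ * g (Fin.append x₁ (c y₁)) (Fin.append y₁ y₂) := by
  obtain ⟨Q₀, hQ₀, henc⟩ := exists_encW_eq Y hq
  obtain ⟨Q, hQ, happ⟩ := exists_encW_append hQ₀ c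
  refine ⟨Q, hQ, fun g => ?_⟩
  rw [sum_fin_add_append]
  refine Finset.sum_congr rfl fun x₁ _ => ?_
  rw [Finset.sum_congr rfl fun x₂ _ => sum_fin_add_append n t _, Finset.sum_comm]
  refine Finset.sum_congr rfl fun y₁ _ => ?_
  rw [Finset.sum_eq_single (c y₁)]
  · rw [Finset.mul_sum]
    refine Finset.sum_congr rfl fun y₂ _ => ?_
    rw [pathW, happ, Wn_append, henc, if_pos rfl]
    ring
  · intro x₂ _ hne
    refine Finset.sum_eq_zero fun y₂ _ => ?_
    rw [pathW, happ, if_neg hne]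
    ring
  · exact fun h => absurd (Finset.mem_univ _) h

end Encoders

section TailCode

variable {X Y : Type*} [Fintype Y]

/-- The number of occurrences of `y₀` in the `l`-th of `L` blocks of length `r`. -/
def blockCount {L r : ℕ} (l : Fin L) (y₀ : Y) (y : Fin (L * r) → Y) : ℝ :=
  ∑ i, if i.divNat = l ∧ y i = y₀ then 1 else 0

theorem sum_divNat_ite {L r : ℕ} (l : Fin L) (a : ℝ) :
    ∑ i : Fin (L * r), (if i.divNat = l then a else 0) = r * a := by
  change ∑ i, (if (finProdFinEquiv.symm i).1 = l then a else 0) = _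
  rw [finProdFinEquiv.symm.sum_comp (fun p : Fin L × Fin r => if p.1 = l then a else 0),
    Fintype.sum_prod_type, Finset.sum_comm]
  simp

/-- The block count concentrates when the input is constant on the block. -/
theorem sum_Wn_blockCount_le {V : X → Y → ℝ} (hV : IsChannel V) {L r : ℕ} {l : Fin L} {a : X}
    (y₀ : Y) {x : Fin (L * r) → X} (hx : ∀ i, i.divNat = l → x i = a) {c : ℝ}
    (hc : 0 < c) : ∑ y, Wn V (L * r) x y *
      (if c ≤ |blockCount l y₀ y - r * V a y₀| then 1 else 0) ≤ r / c ^ 2 := by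
  set h : Fin (L * r) → Y → ℝ := fun i b =>
    if i.divNat = l then (if b = y₀ then 1 else 0) - V a y₀ else 0 with hh
  have hw : ∀ i, IsPMF (V (x i)) := fun i => ⟨hV.1 _, hV.2 _⟩
  have h0 : ∀ i, ∑ b, V (x i) b * h i b = 0 := fun i => by
    by_cases hi : i.divNat = l
    · simp only [hh, if_pos hi, mul_sub, mul_ite, mul_one, mul_zero, Finset.sum_sub_distrib,
        ← Finset.sum_mul, hV.2, one_mul, hx i hi]
      simp
    · simp [hh, hi]
  have hV01 := IsPMF.le_one ⟨hV.1 a, hV.2 a⟩ y₀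
  have hvar : ∑ i, ∑ b, V (x i) b * h i b ^ 2 ≤ r := by
    calc ∑ i, ∑ b, V (x i) b * h i b ^ 2
        ≤ ∑ i : Fin (L * r), (if i.divNat = l then 1 else 0) := by
          refine Finset.sum_le_sum fun i _ => ?_
          by_cases hi : i.divNat = l
          · rw [if_pos hi, ← hV.2 (x i)]
            refine Finset.sum_le_sum fun b _ => mul_le_of_le_one_right (hV.1 _ _) ?_
            simp only [hh, if_pos hi]
            have := hV.1 a y₀
            split_ifs <;> nlinarith
          · simp [hh, hi]
      _ = r := by rw [sum_divNat_ite, mul_one]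
  have hsum : ∀ y : Fin (L * r) → Y, ∑ i, h i (y i) = blockCount l y₀ y - r * V a y₀ := fun y => by
    rw [← sum_divNat_ite l, blockCount, ← Finset.sum_sub_distrib]
    refine Finset.sum_congr rfl fun i _ => ?_
    by_cases hi : i.divNat = l <;> simp [hh, hi]
  refine chebyshev_weights (fun y => (isPMF_Wn hV x).1 y) _ hc ?_
  simp only [← hsum]
  rw [Wn_eq_piW, sum_piW_mul_sq hw h h0]
  exact hvar

/-- Finitely many messages can be told apart over a channel whose rows are not all equal. -/
theorem exists_tail_code {V : X → Y → ℝ} (hV : IsChannel V) {x₀ x₁ : X} {y₀ : Y}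
    (hne : V x₀ y₀ ≠ V x₁ y₀) (L : ℕ) {lam : ℝ} (hlam : 0 < lam) :
    ∃ (t : ℕ) (c : Fin L → Fin t → X) (E : Fin L → (Fin t → Y) → Prop),
      (∀ l, ∑ y, Wn V t (c l) y * (if E l y then 0 else 1) ≤ lam) ∧
      ∀ l l', l ≠ l' → ∑ y, Wn V t (c l) y * (if E l' y then 1 else 0) ≤ lam := by
  set δ := |V x₁ y₀ - V x₀ y₀| with hδ
  have hδ0 : 0 < δ := abs_pos.2 (sub_ne_zero.2 hne.symm)
  obtain ⟨r, hr⟩ := exists_nat_gt (4 / (δ ^ 2 * lam))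
  have hr0 : (0 : ℝ) < r := lt_of_le_of_lt (by positivity) hr
  have hc : 0 < r * δ / 2 := by positivity
  have hle : r / (r * δ / 2) ^ 2 ≤ lam := by
    rw [div_lt_iff₀ (by positivity)] at hr
    rw [div_le_iff₀ (by positivity)]
    nlinarith
  refine ⟨L * r, fun l i => if i.divNat = l then x₁ else x₀,
    fun l y => |blockCount l y₀ y - r * V x₁ y₀| < r * δ / 2, fun l => ?_, fun l l' hll => ?_⟩
  · refine le_trans (le_of_eq (Finset.sum_congr rfl fun y _ => ?_))
      ((sum_Wn_blockCount_le hV (l := l) (a := x₁) y₀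
        (x := fun i => if i.divNat = l then x₁ else x₀) (fun i hi => if_pos hi) hc).trans hle)
    by_cases h : r * δ / 2 ≤ |blockCount l y₀ y - r * V x₁ y₀|
    · rw [if_pos h, if_neg (not_lt.2 h)]
    · rw [if_neg h, if_pos (not_le.1 h)]
  · refine le_trans (Finset.sum_le_sum fun y _ => ?_)
      ((sum_Wn_blockCount_le hV (l := l') (a := x₀) y₀
        (x := fun i => if i.divNat = l then x₁ else x₀)
        (fun i hi => if_neg fun h => hll (h.symm.trans hi)) hc).trans hle)
    refine mul_le_mul_of_nonneg_left ?_ ((isPMF_Wn hV _).1 y)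
    split_ifs with h1 h2
    · exact le_rfl
    · refine absurd ?_ h2
      have h3 := abs_sub_le (r * V x₁ y₀) (blockCount l' y₀ y) (r * V x₀ y₀)
      rw [← mul_sub, abs_mul, abs_of_pos hr0, ← hδ, abs_sub_comm (r * V x₁ y₀)] at h3
      linarith
    · norm_num
    · exact le_rfl

end TailCode

section Assembly

variable {X Y Z : Type*} [Fintype X] [Fintype Y] [Fintype Z]

/-- Combining an ID code for Terminal `Z` with a common-randomness ID code for Terminal `Y`: the
fed-back outputs are hashed by the message of Terminal `Y`, and the hash is sent at the end. -/
theorem exists_isFBIDCode [Nonempty X] {W : X → Y → Z → ℝ} (hW : IsBC W)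
    (hind : ∀ x y z, W x y z = margY W x y * margZ W x z) {n t kY kZ L : ℕ} (hkY : 0 < kY)
    (hkZ : 0 < kZ) {K lam lam' ν : ℝ} (hlam : 0 ≤ lam)
    (hZ : HasFlatIDCode n (margY W) (margZ W) kZ K lam ν)
    {c : Fin L → Fin t → X} {E : Fin L → (Fin t → Y) → Prop}
    (hE₁ : ∀ l, ∑ y, Wn (margY W) t (c l) y * (if E l y then 0 else 1) ≤ lam)
    (hE₂ : ∀ l l', l ≠ l' → ∑ y, Wn (margY W) t (c l) y * (if E l' y then 1 else 0) ≤ lam)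
    (hF : ∀ (p : (Fin n → Y) → ℝ) (B : (Fin n → Y) → Prop), IsPMF p → (∀ y, B y → p y ≤ K⁻¹) →
      ∃ F : Fin kY → (Fin n → Y) → Fin L, ∀ m m', m ≠ m' →
        ∑ y, p y * (if B y ∧ F m y = F m' y then 1 else 0) ≤ lam') :
    ∃ Q DY DZ, IsFBIDCode (n + t) kY kZ W Q DY DZ lam (lam + lam' + ν) lam lam := by
  have hU := isChannel_margY hW
  have hV := isChannel_margZ hW
  have hkY' : (0 : ℝ) < kY := by exact_mod_cast hkY
  have hkZ' : (0 : ℝ) < kZ := by exact_mod_cast hkZ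
  have hWU : IsChannel (Wn (margY W) n) :=
    ⟨fun x => (isPMF_Wn hU x).1, fun x => (isPMF_Wn hU x).2⟩
  obtain ⟨q, D, B, ⟨hq, hD₁, hD₂⟩, hB, hBc⟩ := hZ
  set p : (Fin n → Y) → ℝ := fun y => (kZ : ℝ)⁻¹ * ∑ m, outDist (q m) (Wn (margY W) n) y with hp
  have havg : ∀ g : (Fin n → Y) → ℝ, (kZ : ℝ)⁻¹ * ∑ m, ∑ y, outDist (q m) (Wn (margY W) n) y * g y
      = ∑ y, p y * g y := fun g => by
    rw [Finset.sum_comm]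
    simp only [hp, Finset.mul_sum, Finset.sum_mul, mul_assoc]
  have hpP : IsPMF p := by
    refine ⟨fun y => mul_nonneg (inv_pos.2 hkZ').le
      (Finset.sum_nonneg fun m _ => (isPMF_outDist (hq m) hWU).1 y), ?_⟩
    have := havg fun _ => 1
    simp only [mul_one, (isPMF_outDist (hq _) hWU).2] at this
    rw [← this]
    simp [hkZ'.ne']
  obtain ⟨F, hF⟩ := hF p B hpP hB
  choose Q hQ hQg using fun my mz =>
    exists_fbEncoder (t := t) (hq mz) (fun y => c (F my y)) (margY W)
  have hsumY : ∀ (my : Fin kY) (g : (Fin (n + t) → Y) → ℝ),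
      (kZ : ℝ)⁻¹ * ∑ mz, ∑ x, ∑ y, pathW (n + t) (Q my mz) (margY W) x y * g y
      = ∑ y₁, p y₁ * ∑ y₂, Wn (margY W) t (c (F my y₁)) y₂ * g (Fin.append y₁ y₂) := fun my g => by
    rw [← havg]
    congr 1
    refine Finset.sum_congr rfl fun mz _ => ?_
    rw [hQg my mz fun _ y => g y, sum_mul_sum_mul_eq_outDist]
  have hsumZ : ∀ (my : Fin kY) (mz : Fin kZ) (g : (Fin n → Z) → ℝ),
      ∑ x, (∑ y, pathW (n + t) (Q my mz) (margY W) x y) *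
        ∑ z, Wn (margZ W) (n + t) x z * g (fun i => z (Fin.castAdd t i))
      = ∑ x, q mz x * ∑ z, Wn (margZ W) n x z * g z := fun my mz g => by
    have hz : ∀ (x₁ : Fin n → X) (x₂ : Fin t → X), ∑ z, Wn (margZ W) (n + t) (Fin.append x₁ x₂) z *
        g (fun i => z (Fin.castAdd t i)) = ∑ z, Wn (margZ W) n x₁ z * g z := fun x₁ x₂ => by
      rw [sum_fin_add_append]
      refine Finset.sum_congr rfl fun z₁ _ => ?_
      simp only [Wn_append, Fin.append_left]
      rw [← Finset.sum_mul, ← Finset.mul_sum, (isPMF_Wn hV x₂).2, mul_one]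
    simp only [Finset.sum_mul]
    rw [hQg my mz fun x _ => ∑ z, Wn (margZ W) (n + t) x z * g (fun i => z (Fin.castAdd t i))]
    refine Finset.sum_congr rfl fun x₁ _ => ?_
    simp only [hz, ← Finset.sum_mul, (isPMF_Wn hU _).2, one_mul]
    rw [← Finset.mul_sum, (isPMF_Wn hU _).2, mul_one]
  refine ⟨Q, fun my => univ.filter fun y =>
      E (F my fun i => y (Fin.castAdd t i)) fun i => y (Fin.natAdd n i),
    fun mz => univ.filter fun z => (fun i => z (Fin.castAdd t i)) ∈ D mz,
    hQ, fun my => ?_, fun my my' hne => ?_, fun mz => ?_, fun mz mz' hne => ?_⟩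
  · simp only [sum_fbLaw_Y hW hind]
    simp only [sum_compl_filter_univ]
    rw [hsumY my fun y =>
      if E (F my fun i => y (Fin.castAdd t i)) fun i => y (Fin.natAdd n i) then 0 else 1]
    simp only [Fin.append_left, Fin.append_right]
    calc _ ≤ ∑ y, p y * lam :=
          Finset.sum_le_sum fun y _ => mul_le_mul_of_nonneg_left (hE₁ _) (hpP.1 y)
      _ = lam := by rw [← Finset.sum_mul, hpP.2, one_mul]
  · simp only [sum_fbLaw_Y hW hind]
    simp only [Finset.sum_filter]
    have hs := hsumY my fun y =>
      if E (F my' fun i => y (Fin.castAdd t i)) fun i => y (Fin.natAdd n i) then 1 else 0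
    simp only [mul_ite, mul_one, mul_zero] at hs
    rw [hs]
    simp only [Fin.append_left, Fin.append_right]
    rw [havg] at hBc
    calc _ ≤ ∑ y, (p y * lam + p y * (if B y ∧ F my y = F my' y then 1 else 0)
          + p y * (if B y then 0 else 1)) := by
          refine Finset.sum_le_sum fun y _ => ?_
          rw [← mul_add, ← mul_add]
          refine mul_le_mul_of_nonneg_left ?_ (hpP.1 y)
          have hone : ∑ y₂, (if E (F my' y) y₂ then Wn (margY W) t (c (F my y)) y₂ else 0) ≤ 1 := by
            rw [← (isPMF_Wn hU (c (F my y))).2]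
            refine Finset.sum_le_sum fun y₂ _ => ?_
            have := (isPMF_Wn hU (c (F my y))).1 y₂
            split_ifs <;> linarith
          by_cases heq : F my y = F my' y
          · by_cases hy : B y <;> simp only [heq, hy, and_true, if_true, if_false] <;>
              rw [heq] at hone <;> linarith
          · have := hE₂ _ _ heq
            simp only [mul_ite, mul_one, mul_zero] at this
            simp only [heq, and_false, if_false]
            have h0 : (0 : ℝ) ≤ if B y then 0 else 1 := by split_ifs <;> norm_num
            linarith
      _ = ∑ y, p y * lam + ∑ y, p y * (if B y ∧ F my y = F my' y then 1 else 0)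
          + ∑ y, p y * (if B y then 0 else 1) := by
          rw [Finset.sum_add_distrib, Finset.sum_add_distrib]
      _ ≤ lam + lam' + ν := by
          rw [← Finset.sum_mul, hpP.2, one_mul]
          exact add_le_add (add_le_add le_rfl (hF my my' hne)) hBc
  · simp only [sum_fbLaw_Z hind]
    simp only [sum_compl_filter_univ]
    rw [Finset.sum_congr rfl fun my _ => hsumZ my mz fun z => if z ∈ D mz then 0 else 1]
    rw [Finset.sum_const, Finset.card_univ, Fintype.card_fin, nsmul_eq_mul,
      inv_mul_cancel_left₀ hkY'.ne']
    refine le_trans (le_of_eq (Finset.sum_congr rfl fun x _ => ?_)) (hD₁ mz)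
    rw [← sum_compl_filter_univ, Finset.filter_univ_mem]
  · simp only [sum_fbLaw_Z hind]
    simp only [Finset.sum_filter]
    have hs := fun my => hsumZ my mz fun z => if z ∈ D mz' then 1 else 0
    simp only [mul_ite, mul_one, mul_zero] at hs
    rw [Finset.sum_congr rfl fun my _ => hs my]
    rw [Finset.sum_const, Finset.card_univ, Fintype.card_fin, nsmul_eq_mul,
      inv_mul_cancel_left₀ hkY'.ne']
    refine le_trans (le_of_eq (Finset.sum_congr rfl fun x _ => ?_)) (hD₂ mz mz' hne)
    rw [← Finset.sum_filter, Finset.filter_univ_mem]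

end Assembly

section Direct

variable {X Y Z : Type*} [Fintype Y] [Fintype Z]

theorem exists_le_loglog_ceil {R r : ℝ} (hr : R < r) (t : ℕ) :
    ∃ n₀ : ℕ, ∀ n ≥ n₀,
      R ≤ 1 / ((n + t : ℕ) : ℝ) * Real.log (Real.log ⌈Real.exp (Real.exp (n * r))⌉₊) := by
  have hd : 0 < r - R := sub_pos.2 hr
  obtain ⟨n₀, hn₀⟩ := exists_nat_ge (t * R / (r - R))
  refine ⟨n₀ + 1, fun n hn => ?_⟩
  have hn1 : (n₀ : ℝ) + 1 ≤ n := by exact_mod_cast hn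
  have hn' : t * R / (r - R) ≤ n := by linarith
  rw [div_le_iff₀ hd] at hn'
  have hpos : (0 : ℝ) < ((n + t : ℕ) : ℝ) := by exact_mod_cast (by omega : 0 < n + t)
  have hlog : n * r ≤ Real.log (Real.log ⌈Real.exp (Real.exp (n * r))⌉₊) := by
    rw [Real.le_log_iff_exp_le, Real.le_log_iff_exp_le]
    · exact Nat.le_ceil _
    · exact lt_of_lt_of_le (Real.exp_pos _) (Nat.le_ceil _)
    · exact lt_of_lt_of_le (by simpa using Real.exp_pos (n * r))
        (Real.log_le_log (Real.exp_pos _) (Nat.le_ceil _))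
  rw [one_div, inv_mul_eq_div, le_div_iff₀ hpos]
  push_cast
  nlinarith

theorem exists_hash_size {h₁ h lam : ℝ} (hh₁ : 0 < h₁) (hh : h₁ < h) (hlam : 0 < lam) :
    ∃ n₀ : ℕ, ∀ n : ℕ, n ≥ n₀ → (⌈Real.exp (Real.exp (n * h₁))⌉₊ : ℝ) ^ 2 *
      Real.exp (-(Real.exp (n * h) * lam / 2)) < 1 := by
  obtain ⟨n₀, hn₀⟩ := exists_linear_mul_exp_le (4 / lam) 0 (8 / lam) (hh₁.trans hh) (sub_pos.2 hh)
  refine ⟨n₀ + 1, fun n hn => ?_⟩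
  have hn1 : (1 : ℝ) ≤ n := by exact_mod_cast (by omega : 1 ≤ n)
  have h0 := hn₀ n (by omega)
  rw [sub_sub_cancel] at h0
  set a := Real.exp (n * h₁) with ha
  have ha0 : 0 < a := Real.exp_pos _
  have hexp : 2 * a + 4 ≤ Real.exp (n * h) * lam / 2 := by
    have h1 : 4 / lam * a ≤ 4 / lam * n * a :=
      mul_le_mul_of_nonneg_right (le_mul_of_one_le_right (by positivity) hn1) ha0.le
    have h2 : 4 / lam * a + 8 / lam ≤ Real.exp (n * h) := by linarith
    have h3 : (4 / lam * a + 8 / lam) * lam = 4 * a + 8 := by field_simp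
    have h4 := mul_le_mul_of_nonneg_right h2 hlam.le
    linarith
  have hk : (⌈Real.exp a⌉₊ : ℝ) ≤ Real.exp (a + 1) := by
    have h1 := (Nat.ceil_lt_add_one (Real.exp_pos a).le).le
    have h2 : 1 ≤ Real.exp a := Real.one_le_exp ha0.le
    have h3 : 2 ≤ Real.exp 1 := by linarith [Real.add_one_le_exp 1]
    rw [Real.exp_add]
    nlinarith
  calc _ ≤ Real.exp (a + 1) ^ 2 * Real.exp (-(Real.exp (n * h) * lam / 2)) := by gcongr
    _ = Real.exp (2 * a + 2 - Real.exp (n * h) * lam / 2) := by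
        rw [← Real.exp_nat_mul, ← Real.exp_add]
        congr 1
        push_cast
        ring
    _ < 1 := by
        rw [Real.exp_lt_one_iff]
        linarith

/-- A common-randomness ID code: hash functions for sources of min-entropy `n * h`, and a tail code
of constant length `t` conveying the hash over the channel `U`. -/
theorem exists_commonRandomness_code {U : X → Y → ℝ} (hU : IsChannel U) [Nonempty X] {R H lam : ℝ}
    (hR0 : 0 ≤ R) (hR : R = 0 ∨ (∃ x₀ x₁ y, U x₀ y ≠ U x₁ y) ∧ R < H) (hlam : 0 < lam) :
    ∃ (h : ℝ) (t L : ℕ) (c : Fin L → Fin t → X) (E : Fin L → (Fin t → Y) → Prop), h < H ∧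
      (∀ l, ∑ y, Wn U t (c l) y * (if E l y then 0 else 1) ≤ lam) ∧
      (∀ l l', l ≠ l' → ∑ y, Wn U t (c l) y * (if E l' y then 1 else 0) ≤ lam) ∧
      ∃ n₀ : ℕ, ∀ n : ℕ, n ≥ n₀ → ∃ k : ℕ, 0 < k ∧
        (∀ (p : (Fin n → Y) → ℝ) (B : (Fin n → Y) → Prop), IsPMF p →
          (∀ y, B y → p y ≤ (Real.exp (n * h))⁻¹) →
          ∃ F : Fin k → (Fin n → Y) → Fin L, ∀ m m', m ≠ m' →
            ∑ y, p y * (if B y ∧ F m y = F m' y then 1 else 0) ≤ lam) ∧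
        (0 < R → R ≤ 1 / ((n + t : ℕ) : ℝ) * Real.log (Real.log k)) ∧ (R = 0 → k = 1) := by
  rcases hR0.eq_or_lt with rfl | hRpos
  · refine ⟨H - 1, 0, 1, fun _ => Fin.elim0, fun _ _ => True, by linarith, fun _ => ?_,
      fun l l' hne => absurd (Subsingleton.elim l l') hne, 0, fun n _ => ⟨1, one_pos,
      fun _ _ _ _ => ⟨fun _ _ => 0, fun m m' hne => absurd (Subsingleton.elim m m') hne⟩,
      fun h => absurd h (lt_irrefl _), fun _ => rfl⟩⟩
    simpa using hlam.le
  · obtain ⟨⟨x₀, x₁, y₀, hne⟩, hRH⟩ := hR.resolve_left hRpos.ne'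
    obtain ⟨h₁, hRh₁, hh₁⟩ := exists_between hRH
    obtain ⟨h, hh, hhH⟩ := exists_between hh₁
    obtain ⟨L, hL⟩ := exists_nat_ge (4 / lam)
    have hL0 : 0 < L := by
      have : (0 : ℝ) < L := lt_of_lt_of_le (by positivity) hL
      exact_mod_cast this
    rw [div_le_iff₀' hlam] at hL
    obtain ⟨t, c, E, hE₁, hE₂⟩ := exists_tail_code hU hne L hlam
    obtain ⟨n₁, hn₁⟩ := exists_le_loglog_ceil hRh₁ t
    obtain ⟨n₂, hn₂⟩ := exists_hash_size (hRpos.trans hRh₁) hh hlam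
    refine ⟨h, t, L, c, E, hhH, hE₁, hE₂, max n₁ n₂, fun n hn => ?_⟩
    rw [ge_iff_le, max_le_iff] at hn
    exact ⟨_, Nat.ceil_pos.2 (Real.exp_pos _), fun p B hp hB =>
      exists_hash hp (Real.exp_pos _) hB hL0 hL (hn₂ n hn.2), fun _ => hn₁ n hn.1,
      fun h0 => absurd h0 hRpos.ne'⟩

variable [Fintype X]

theorem exists_hasFlatIDCode_rate {P : X → ℝ} (hP : IsPMF P) {U : X → Y → ℝ} (hU : IsChannel U)
    {V : X → Z → ℝ} (hV : IsChannel V) {h R lam ν : ℝ} (hh : h < entH (outDist P U))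
    (hR0 : 0 ≤ R) (hR : R = 0 ∨ R < mutInf P V) (hlam : 0 < lam) (hν : 0 < ν) (t : ℕ) :
    ∃ n₀ : ℕ, ∀ n : ℕ, n ≥ n₀ → ∃ k : ℕ, 0 < k ∧ HasFlatIDCode n U V k (Real.exp (n * h)) lam ν ∧
      (0 < R → R ≤ 1 / ((n + t : ℕ) : ℝ) * Real.log (Real.log k)) ∧ (R = 0 → k = 1) := by
  rcases hR0.eq_or_lt with rfl | hRpos
  · obtain ⟨n₀, hn₀⟩ := exists_hasFlatIDCode_one hP hU V hh hlam hν
    exact ⟨n₀, fun n hn => ⟨1, one_pos, hn₀ n hn, fun h => absurd h (lt_irrefl _), fun _ => rfl⟩⟩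
  · obtain ⟨r, hRr, hr⟩ := exists_between (hR.resolve_left hRpos.ne')
    obtain ⟨n₁, hn₁⟩ := exists_le_loglog_ceil hRr t
    obtain ⟨n₂, hn₂⟩ := exists_hasFlatIDCode hP hU hV hh (hRpos.trans hRr) hr hlam hν
    refine ⟨max n₁ n₂, fun n hn => ?_⟩
    rw [ge_iff_le, max_le_iff] at hn
    exact ⟨_, Nat.ceil_pos.2 (Real.exp_pos _), hn₂ n hn.2, fun _ => hn₁ n hn.1,
      fun h0 => absurd h0 hRpos.ne'⟩

theorem IsFBIDCode.mono {n kY kZ : ℕ} {W : X → Y → Z → ℝ}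
    {Q : Fin kY → Fin kZ → (i : ℕ) → (Fin i → X) → (Fin i → Y) → X → ℝ}
    {DY : Fin kY → Finset (Fin n → Y)} {DZ : Fin kZ → Finset (Fin n → Z)}
    {a₁ a₂ a₃ a₄ b₁ b₂ b₃ b₄ : ℝ} (h : IsFBIDCode n kY kZ W Q DY DZ a₁ a₂ a₃ a₄)
    (h₁ : a₁ ≤ b₁) (h₂ : a₂ ≤ b₂) (h₃ : a₃ ≤ b₃) (h₄ : a₄ ≤ b₄) :
    IsFBIDCode n kY kZ W Q DY DZ b₁ b₂ b₃ b₄ :=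
  ⟨h.1, fun m => (h.2.1 m).trans h₁, fun m m' hne => (h.2.2.1 m m' hne).trans h₂,
    fun m => (h.2.2.2.1 m).trans h₃, fun m m' hne => (h.2.2.2.2 m m' hne).trans h₄⟩

theorem fbAchievable_of_lt [Nonempty X] {W : X → Y → Z → ℝ} (hW : IsBC W)
    (hind : ∀ x y z, W x y z = margY W x y * margZ W x z) {P : X → ℝ} (hP : IsPMF P) {p : ℝ × ℝ}
    (h₁ : 0 ≤ p.1) (h₂ : 0 ≤ p.2)
    (hY : p.1 = 0 ∨ (∃ x₀ x₁ y, margY W x₀ y ≠ margY W x₁ y) ∧ p.1 < entH (outDist P (margY W)))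
    (hZ : p.2 = 0 ∨ p.2 < mutInf P (margZ W)) : FBAchievable W p := by
  refine ⟨h₁, h₂, fun l1Y l2Y l1Z l2Z h1Y h2Y h1Z h2Z => ?_⟩
  obtain ⟨lam, hlam, h1, h2, h3, h4⟩ : ∃ lam : ℝ, 0 < lam ∧ lam ≤ l1Y ∧ lam + lam + lam ≤ l2Y ∧
      lam ≤ l1Z ∧ lam ≤ l2Z := by
    refine ⟨min (min l1Y (l2Y / 3)) (min l1Z l2Z), by positivity, ?_, ?_, ?_, ?_⟩
    · exact (min_le_left _ _).trans (min_le_left _ _)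
    · linarith [(min_le_left (min l1Y (l2Y / 3)) (min l1Z l2Z)).trans (min_le_right _ _)]
    · exact (min_le_right _ _).trans (min_le_left _ _)
    · exact (min_le_right _ _).trans (min_le_right _ _)
  have hU := isChannel_margY hW
  obtain ⟨h, t, L, c, E, hh, hE₁, hE₂, n₁, hn₁⟩ := exists_commonRandomness_code hU h₁ hY hlam
  obtain ⟨n₂, hn₂⟩ :=
    exists_hasFlatIDCode_rate hP hU (isChannel_margZ hW) hh h₂ hZ hlam hlam t
  refine ⟨max n₁ n₂ + t, fun n hn => ?_⟩
  obtain ⟨n', rfl⟩ : ∃ n', n = n' + t := ⟨n - t, by omega⟩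
  have hn' : max n₁ n₂ ≤ n' := by omega
  rw [max_le_iff] at hn'
  obtain ⟨kY, hkY, hF, hrY⟩ := hn₁ n' hn'.1
  obtain ⟨kZ, hkZ, hflat, hrZ⟩ := hn₂ n' hn'.2
  obtain ⟨Q, DY, DZ, hcode⟩ := exists_isFBIDCode hW hind hkY hkZ hlam.le hflat hE₁ hE₂ hF
  exact ⟨kY, kZ, Q, DY, DZ, hcode.mono h1 h2 h3 h4, hrY, hrZ⟩

theorem subset_closure_fbAchievable [Nonempty X] {W : X → Y → Z → ℝ} (hW : IsBC W)
    (hind : ∀ x y z, W x y z = margY W x y * margZ W x z) :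
    {p : ℝ × ℝ | 0 ≤ p.1 ∧ 0 ≤ p.2 ∧
          ∃ P : X → ℝ, IsPMF P ∧
            p.1 ≤ (if ∃ P' : X → ℝ, IsPMF P' ∧ 0 < mutInf P' (margY W) then
                      entH (outDist P (margY W)) else 0) ∧
            p.2 ≤ mutInf P (margZ W)} ⊆ closure {p : ℝ × ℝ | FBAchievable W p} := by
  rintro ⟨a, b⟩ ⟨ha, hb, P, hP, h₁, h₂⟩
  dsimp only at ha hb h₁ h₂
  have hlim : Filter.Tendsto (fun ε : ℝ => (max 0 (a - ε), max 0 (b - ε)))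
      (nhdsWithin 0 (Set.Ioi 0)) (nhds (a, b)) := by
    have hc : Continuous fun ε : ℝ => (max 0 (a - ε), max 0 (b - ε)) := by fun_prop
    have := hc.tendsto 0
    simp only [sub_zero, max_eq_right ha, max_eq_right hb] at this
    exact this.mono_left nhdsWithin_le_nhds
  refine mem_closure_of_tendsto hlim (Filter.eventually_of_mem self_mem_nhdsWithin fun ε hε => ?_)
  have hε : 0 < ε := hε
  refine fbAchievable_of_lt hW hind hP (le_max_left _ _) (le_max_left _ _) ?_ ?_
  · dsimp only
    rcases le_total (a - ε) 0 with h | h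
    · exact Or.inl (max_eq_left h)
    · rw [max_eq_right h]
      split_ifs at h₁ with hpos
      · exact Or.inr ⟨(exists_mutInf_pos_iff (isChannel_margY hW)).1 hpos, by linarith⟩
      · linarith
  · dsimp only
    rcases le_total (b - ε) 0 with h | h
    · exact Or.inl (max_eq_left h)
    · exact Or.inr (by rw [max_eq_right h]; linarith)

end Direct

/-- **Corollary 2.** If the BC's outputs are conditionally
independent given the input, the ID capacity region with one-sided feedback
from Terminal Y is the set of rate pairs `(R_Y, R_Z)` satisfying, for some
input PMF `P`, `R_Y ≤ H(PW_Y)·𝟙{max_{P'} I(P',W_Y) > 0}` and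
`R_Z ≤ I(P, W_Z)`. -/
theorem bc_fb_id_capacity_cond_indep
    {X Y Z : Type} [Fintype X] [Fintype Y] [Fintype Z]
    [Nonempty X] [Nonempty Y] [Nonempty Z]
    (W : X → Y → Z → ℝ) (hW : IsBC W)
    (hind : ∀ x y z, W x y z = margY W x y * margZ W x z) :
    closure {p : ℝ × ℝ | FBAchievable W p}
      = {p : ℝ × ℝ | 0 ≤ p.1 ∧ 0 ≤ p.2 ∧
          ∃ P : X → ℝ, IsPMF P ∧
            p.1 ≤ (if ∃ P' : X → ℝ, IsPMF P' ∧ 0 < mutInf P' (margY W) then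
                      entH (outDist P (margY W)) else 0) ∧
            p.2 ≤ mutInf P (margZ W)} := by
  exact (closure_fbAchievable_subset hW hind).antisymm (subset_closure_fbAchievable hW hind)
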